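/- arXiv:2407.05095 — 3 statements merged into one kernel-verified Lean document; each statement's English description precedes it below -/
import Mathlib

section
/- Let K be a C-pseudo-cone in ℝⁿ. Then there is a constant c > 0, depending only on C, the fixed unit vector 𝔳 and K, such that for every nonempty compact set ω ⊂ Ω_{C°} the cone-volume measure satisfies V_K(ω) ≤ c / Δ(ω)^{n−1}. -/
open MeasureTheory Set Filter
open scoped RealInnerProductSpace ENNReal Topology Pointwise NNReal

noncomputable section

abbrev En (n : ℕ) := EuclideanSpace ℝ (Fin n)

/-- `C` is a pointed closed convex cone with nonempty interior. -/
def IsGoodCone (n : ℕ) (C : Set (En n)) : Prop :=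
  IsClosed C ∧ Convex ℝ C ∧ (∀ x ∈ C, ∀ r : ℝ, 0 ≤ r → r • x ∈ C) ∧
    C ∩ (-C) = {0} ∧ (interior C).Nonempty

/-- The dual cone `C° = {x : ⟨x,y⟩ ≤ 0 ∀ y ∈ C}`. -/
def dualCone (n : ℕ) (C : Set (En n)) : Set (En n) := {x | ∀ y ∈ C, ⟪x, y⟫ ≤ 0}

/-- `Ω_C = S^{n-1} ∩ int C`. -/
def omegaC (n : ℕ) (C : Set (En n)) : Set (En n) := Metric.sphere 0 1 ∩ interior C

/-- `Ω_{C°} = S^{n-1} ∩ int C°`. -/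
def omegaDual (n : ℕ) (C : Set (En n)) : Set (En n) :=
  Metric.sphere 0 1 ∩ interior (dualCone n C)

/-- A pseudo-cone: nonempty closed convex set not containing `0` with `λK ⊆ K` for `λ ≥ 1`. -/
def IsPseudoCone (n : ℕ) (K : Set (En n)) : Prop :=
  K.Nonempty ∧ IsClosed K ∧ Convex ℝ K ∧ (0 : En n) ∉ K ∧ ∀ l : ℝ, 1 ≤ l → l • K ⊆ K

/-- The recession cone of `K`. -/
def recCone (n : ℕ) (K : Set (En n)) : Set (En n) :=
  {z | ∀ x ∈ K, ∀ t : ℝ, 0 ≤ t → x + t • z ∈ K}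

/-- A `C`-pseudo-cone: a pseudo-cone with recession cone `C`. -/
def IsCPseudoCone (n : ℕ) (C K : Set (En n)) : Prop := IsPseudoCone n K ∧ recCone n K = C

/-- The set of outer unit normal vectors of `K` at `x`. -/
def normalsAt (n : ℕ) (K : Set (En n)) (x : En n) : Set (En n) :=
  {u | ‖u‖ = 1 ∧ ∀ y ∈ K, ⟪y, u⟫ ≤ ⟪x, u⟫}

/-- `ν_K^{-1}(ω)`: the boundary points of `K` whose outer unit normal is unique and lies in `ω`. -/
def nuInv (n : ℕ) (K ω : Set (En n)) : Set (En n) :=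
  {x | x ∈ frontier K ∧ ∃ u ∈ ω, normalsAt n K x = {u}}

open Classical in
/-- The outer unit normal map `ν_K` (junk value `0` where the normal is not unique). -/
def nuMap (n : ℕ) (K : Set (En n)) (x : En n) : En n :=
  if h : ∃ u, normalsAt n K x = {u} then h.choose else 0

/-- `Δ(ω)`: the spherical (angular) distance of `ω` from the boundary of `Ω_{C°}`
(the relative boundary of `Ω_{C°}` in the unit sphere is `closure Ω_{C°} \ Ω_{C°}`,
since `Ω_{C°}` is relatively open in the sphere). -/
def sphereAngleDist (n : ℕ) (C ω : Set (En n)) : ℝ :=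
  sInf {d | ∃ u ∈ ω, ∃ v ∈ closure (omegaDual n C) \ omegaDual n C,
    d = InnerProductGeometry.angle u v}

/-- `b(K)`: the distance of `K` from the origin. -/
def distOrigin (n : ℕ) (K : Set (En n)) : ℝ := Metric.infDist 0 K

/-- `C^-(t) = C ∩ H^-(𝔳, t)`. -/
def Cminus (n : ℕ) (C : Set (En n)) (v : En n) (t : ℝ) : Set (En n) :=
  C ∩ {x | ⟪x, v⟫ ≤ t}

/-- The support function `h_K(u) = sup{⟨y,u⟩ : y ∈ K}`. -/
def suppFn (n : ℕ) (K : Set (En n)) (u : En n) : ℝ := sSup ((fun y => ⟪y, u⟫) '' K)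

/-- `Θ : C∖{0} → (0,∞)` continuous and homogeneous of degree `-q`. -/
def IsThetaWeight (n : ℕ) (C : Set (En n)) (q : ℝ) (Θ : En n → ℝ) : Prop :=
  ContinuousOn Θ (C \ {0}) ∧ (∀ y ∈ C \ {0}, 0 < Θ y) ∧
    ∀ y ∈ C \ {0}, ∀ r : ℝ, 0 < r → Θ (r • y) = r ^ (-q) * Θ y

/-- The `Θ`-weighted `n`-dimensional Hausdorff (Lebesgue) measure `H_Θ^n`. -/
def HTheta (n : ℕ) (Θ : En n → ℝ) : Measure (En n) :=
  volume.withDensity fun y => ENNReal.ofReal (Θ y)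

/-- The `Θ`-weighted cone-volume measure `V_K^Θ(ω) = H_Θ^n(⋃_{x ∈ ν_K^{-1}(ω)} [0,x])`. -/
def coneVol (n : ℕ) (Θ : En n → ℝ) (K ω : Set (En n)) : ℝ≥0∞ :=
  HTheta n Θ (⋃ x ∈ nuInv n K ω, segment ℝ (0 : En n) x)

/-- The (unweighted) cone-volume measure `V_K(ω) = H^n(⋃_{x ∈ ν_K^{-1}(ω)} [0,x])`. -/
def coneVolU (n : ℕ) (K ω : Set (En n)) : ℝ≥0∞ :=
  volume (⋃ x ∈ nuInv n K ω, segment ℝ (0 : En n) x)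

/-- The `Θ`-weighted surface area measure `S_{n-1}^Θ(K,ω) = ∫_{ν_K^{-1}(ω)} Θ dH^{n-1}`. -/
def surfTheta (n : ℕ) (Θ : En n → ℝ) (K ω : Set (En n)) : ℝ≥0∞ :=
  ∫⁻ x in nuInv n K ω, ENNReal.ofReal (Θ x) ∂(μH[(n : ℝ) - 1])

/-- `K ∈ K(C,ϖ)`: `K` is a `C`-pseudo-cone that is `C`-determined by `ϖ`. -/
def CDetermined (n : ℕ) (C ϖ K : Set (En n)) : Prop :=
  IsCPseudoCone n C K ∧ K = C ∩ ⋂ u ∈ ϖ, {x | ⟪x, u⟫ ≤ suppFn n K u}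

/-- The Wulff shape `[g] = C ∩ ⋂_{u ∈ ϖ} {y : ⟨y,u⟩ ≤ -g(u)}`. -/
def wulff (n : ℕ) (C ϖ : Set (En n)) (g : En n → ℝ) : Set (En n) :=
  C ∩ ⋂ u ∈ ϖ, {y | ⟪y, u⟫ ≤ -g u}

/-- The `Θ`-weighted covolume `V_Θ(K) = ∫_{C∖K} Θ dH^n`. -/
def covol (n : ℕ) (Θ : En n → ℝ) (C K : Set (En n)) : ℝ≥0∞ := HTheta n Θ (C \ K)

/-- The radial function `ρ_K(v) = min{λ : λv ∈ K}`. -/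
def rho (n : ℕ) (K : Set (En n)) (v : En n) : ℝ := sInf {t : ℝ | t • v ∈ K}

/-- The radial map `r_K(v) = ρ_K(v) v`. -/
def radMap (n : ℕ) (K : Set (En n)) (v : En n) : En n := rho n K v • v

/-- `α_K^{-1}(ω)`: directions `v ∈ Ω_C` with `r_K(v) ∈ ∂'K` (boundary point in `int C` with
unique outer normal) whose unique outer normal lies in `ω`. -/
def alphaInv (n : ℕ) (C K ω : Set (En n)) : Set (En n) :=
  {v ∈ omegaC n C | radMap n K v ∈ frontier K ∧ radMap n K v ∈ interior C ∧
    ∃ u ∈ ω, normalsAt n K (radMap n K v) = {u}}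

/-- `μ` is the Borel measure on `Ω_{C°}` representing the `Θ`-weighted cone-volume
measure of `K` (extended by `0` outside `Ω_{C°}`). -/
def RepsConeVol (n : ℕ) (C : Set (En n)) (Θ : En n → ℝ) (K : Set (En n))
    (μ : Measure (En n)) : Prop :=
  μ (omegaDual n C)ᶜ = 0 ∧
    ∀ ω, MeasurableSet ω → ω ⊆ omegaDual n C → μ ω = coneVol n Θ K ω

/-- `μ` is the Borel measure on `Ω_{C°}` representing the `Θ`-weighted surface area
measure of `K` (extended by `0` outside `Ω_{C°}`). -/
def RepsSurf (n : ℕ) (C : Set (En n)) (Θ : En n → ℝ) (K : Set (En n))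
    (μ : Measure (En n)) : Prop :=
  μ (omegaDual n C)ᶜ = 0 ∧
    ∀ ω, MeasurableSet ω → ω ⊆ omegaDual n C → μ ω = surfTheta n Θ K ω

theorem inter_frontier_ne {n : ℕ} {S D : Set (En n)} (hS : IsPreconnected S)
    (h1 : (S ∩ D).Nonempty) (h2 : (S ∩ Dᶜ).Nonempty) : (S ∩ frontier D).Nonempty := by
  by_contra hne
  have hno : ∀ x ∈ S, x ∉ frontier D := fun x hx hf => hne ⟨x, hx, hf⟩
  have hin : ∀ x ∈ S, x ∈ closure D → x ∈ interior D := fun x hx hc => by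
    by_contra h; exact hno x hx ⟨hc, h⟩
  obtain ⟨a, haS, haD⟩ := h1
  obtain ⟨b, hbS, hbD⟩ := h2
  obtain ⟨x, _, hx1, hx2⟩ := hS (interior D) (closure D)ᶜ isOpen_interior
    isClosed_closure.isOpen_compl
    (fun x hx => by
      by_cases h : x ∈ closure D
      · exact Or.inl (hin x hx h)
      · exact Or.inr h)
    ⟨a, haS, hin a haS (subset_closure haD)⟩
    ⟨b, hbS, fun h => hbD (interior_subset (hin b hbS h))⟩
  exact hx2 (subset_closure (interior_subset hx1))

theorem dualCone_closed' (n : ℕ) (C : Set (En n)) : IsClosed (dualCone n C) := by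
  have : dualCone n C = ⋂ y ∈ C, {x : En n | ⟪x, y⟫ ≤ 0} := by
    ext x; simp [dualCone]
  rw [this]
  exact isClosed_biInter fun y _ => isClosed_le (by fun_prop) continuous_const

theorem dualCone_convex' (n : ℕ) (C : Set (En n)) : Convex ℝ (dualCone n C) := by
  intro x hx y hy a b ha hb _ z hz
  have h1 := hx z hz
  have h2 := hy z hz
  rw [inner_add_left, real_inner_smul_left, real_inner_smul_left]
  nlinarith [mul_nonneg ha (neg_nonneg.2 h1), mul_nonneg hb (neg_nonneg.2 h2)]

theorem dualCone_smul' (n : ℕ) (C : Set (En n)) {r : ℝ} (hr : 0 < r) :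
    r • dualCone n C = dualCone n C := by
  ext x
  rw [Set.mem_smul_set_iff_inv_smul_mem₀ hr.ne']
  have hi : 0 < r⁻¹ := inv_pos.2 hr
  simp only [dualCone, Set.mem_ofPred_eq, real_inner_smul_left]
  refine forall₂_congr fun y _ => ?_
  constructor
  · intro h
    by_contra h2
    push Not at h2
    exact absurd h (not_le.2 (mul_pos hi h2))
  · intro h
    exact mul_nonpos_of_nonneg_of_nonpos hi.le h

theorem frontier_mem' (n : ℕ) (C : Set (En n)) (hne : (interior (dualCone n C)).Nonempty)
    {z : En n} (hz : z ∈ frontier (dualCone n C)) (hz1 : ‖z‖ = 1) :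
    z ∈ closure (omegaDual n C) \ omegaDual n C := by
  have hz0 : z ≠ 0 := by
    intro h; rw [h, norm_zero] at hz1; exact zero_ne_one hz1
  refine ⟨?_, fun h => hz.2 h.2⟩
  have h1 : z ∈ closure (interior (dualCone n C)) := by
    rw [(dualCone_convex' n C).closure_interior_eq_closure_of_nonempty_interior hne]
    exact hz.1
  have h2 : z ∈ closure ({0}ᶜ ∩ interior (dualCone n C)) :=
    (isOpen_compl_singleton).inter_closure ⟨hz0, h1⟩
  have hf : ContinuousAt (fun x : En n => ‖x‖⁻¹ • x) z :=
    (continuous_norm.continuousAt.inv₀ (norm_ne_zero_iff.2 hz0)).smul continuousAt_id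
  have h3 := hf.continuousWithinAt.mem_closure h2 (t := omegaDual n C) (by
    rintro x ⟨hx0, hx⟩
    have hx0 : x ≠ 0 := hx0
    have hp : 0 < ‖x‖⁻¹ := inv_pos.2 (norm_pos_iff.2 hx0)
    refine ⟨?_, ?_⟩
    · simp [norm_smul, hx0]
    · rw [← dualCone_smul' n C hp, interior_smul₀ hp.ne']
      exact Set.smul_mem_smul_set hx)
  simpa [hz1] using h3

theorem angle_le' {n : ℕ} {u z : En n} (hu : ‖u‖ = 1) (hz : ‖z‖ = 1) {t : ℝ} (ht : 0 ≤ t)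
    (h : ‖u - z‖ ≤ 2 * t) : InnerProductGeometry.angle u z ≤ Real.pi * t := by
  set θ := InnerProductGeometry.angle u z with hθ
  have h0 : 0 ≤ θ := InnerProductGeometry.angle_nonneg u z
  have hpi : θ ≤ Real.pi := InnerProductGeometry.angle_le_pi u z
  have hc := Real.cos_le_one_sub_mul_cos_sq (x := θ) (by rwa [abs_of_nonneg h0])
  have hin : ⟪u, z⟫ = Real.cos θ := by
    rw [hθ, InnerProductGeometry.cos_angle, hu, hz]; simp
  have hns := norm_sub_sq_real u z
  rw [hu, hz, hin] at hns
  have hpp := Real.pi_pos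
  have h5 : ‖u - z‖ ^ 2 ≤ (2 * t) ^ 2 := pow_le_pow_left₀ (norm_nonneg _) h 2
  have h6 : 2 / Real.pi ^ 2 * θ ^ 2 ≤ 2 * t ^ 2 := by nlinarith
  refine abs_le_of_sq_le_sq' ?_ (by positivity) |>.2
  rw [div_mul_eq_mul_div, div_le_iff₀ (by positivity)] at h6
  nlinarith

theorem exists_bdry' (n : ℕ) (C : Set (En n)) {u w : En n}
    (hu : u ∈ omegaDual n C) (hw : w ∈ C) (hw1 : ‖w‖ = 1) {t : ℝ} (ht : -⟪u, w⟫ < t)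
    (ht1 : t < 1) :
    ∃ z ∈ closure (omegaDual n C) \ omegaDual n C, InnerProductGeometry.angle u z ≤ Real.pi * t := by
  have hu1 : ‖u‖ = 1 := by simpa using hu.1
  have hs : ⟪u, w⟫ ≤ 0 := interior_subset hu.2 w hw
  have ht0 : 0 < t := by linarith
  have hconn : IsPreconnected (segment ℝ u (u + t • w)) := (convex_segment _ _).isPreconnected
  obtain ⟨a, ha, haf⟩ := inter_frontier_ne hconn (D := dualCone n C)
    ⟨u, left_mem_segment _ _ _, interior_subset hu.2⟩
    ⟨u + t • w, right_mem_segment _ _ _, fun h => by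
      have := h w hw
      rw [inner_add_left, real_inner_smul_left, real_inner_self_eq_norm_sq, hw1] at this
      linarith⟩
  rw [segment_eq_image'] at ha
  obtain ⟨r, ⟨hr0, hr1⟩, rfl⟩ := ha
  set a := u + r • (u + t • w - u) with hadef
  have hau : ‖a - u‖ ≤ t := by
    have : a - u = (r * t) • w := by rw [hadef]; module
    rw [this, norm_smul, hw1, mul_one, Real.norm_of_nonneg (by positivity)]
    nlinarith
  have habs : |‖a‖ - 1| ≤ t := by
    rw [← hu1]; exact (abs_norm_sub_norm_le a u).trans hau
  have hap : 0 < ‖a‖ := by have := (abs_le.1 habs).1; linarith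
  have hz1 : ‖‖a‖⁻¹ • a‖ = 1 := by
    rw [norm_smul, norm_inv, norm_norm, inv_mul_cancel₀ hap.ne']
  refine ⟨‖a‖⁻¹ • a, frontier_mem' n C ⟨u, hu.2⟩ ?_ hz1, angle_le' hu1 hz1 ht0.le ?_⟩
  · have hp : 0 < ‖a‖⁻¹ := inv_pos.2 hap
    refine ⟨?_, fun h => haf.2 ?_⟩
    · have h1 := Set.smul_mem_smul_set (a := ‖a‖⁻¹) haf.1
      rwa [← closure_smul₀, dualCone_smul' n C hp] at h1
    · rwa [← dualCone_smul' n C hp, interior_smul₀ hp.ne',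
        Set.smul_mem_smul_set_iff₀ hp.ne'] at h
  · have e : ‖a - ‖a‖⁻¹ • a‖ = |‖a‖ - 1| := by
      have : a - ‖a‖⁻¹ • a = (1 - ‖a‖⁻¹) • a := by module
      rw [this, norm_smul, Real.norm_eq_abs]
      nth_rewrite 2 [← abs_of_pos hap]
      rw [← abs_mul]
      congr 1
      field_simp
    calc ‖u - ‖a‖⁻¹ • a‖ = ‖(u - a) + (a - ‖a‖⁻¹ • a)‖ := by congr 1; abel
      _ ≤ ‖u - a‖ + ‖a - ‖a‖⁻¹ • a‖ := norm_add_le _ _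
      _ ≤ 2 * t := by rw [e, norm_sub_rev]; linarith

theorem bdry_nonempty' (n : ℕ) (hn : 2 ≤ n) (C : Set (En n))
    (v : En n) (hv1 : ‖v‖ = 1) (hv2 : v ∈ interior C) (hv3 : -v ∈ interior (dualCone n C)) :
    (closure (omegaDual n C) \ omegaDual n C).Nonempty := by
  have hr : 1 < Module.rank ℝ (En n) := by
    rw [← Module.finrank_eq_rank, finrank_euclideanSpace_fin]
    exact_mod_cast hn
  obtain ⟨z, hz, hzf⟩ := inter_frontier_ne (isPreconnected_sphere hr (0 : En n) 1)
    (D := dualCone n C) ⟨-v, by simp [hv1], interior_subset hv3⟩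
    ⟨v, by simp [hv1], fun h => by
      have := h v (interior_subset hv2)
      rw [real_inner_self_eq_norm_sq, hv1] at this
      norm_num at this⟩
  exact ⟨z, frontier_mem' n C ⟨_, hv3⟩ hzf (by simpa using hz)⟩

theorem delta_mem' (n : ℕ) (C ω : Set (En n)) (hω : ω.Nonempty) (hc : IsCompact ω)
    (hsub : ω ⊆ omegaDual n C) (hb : (closure (omegaDual n C) \ omegaDual n C).Nonempty) :
    0 < sphereAngleDist n C ω := by
  have hcl : closure (omegaDual n C) ⊆ Metric.sphere 0 1 :=
    closure_minimal inter_subset_left Metric.isClosed_sphere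
  have hB : closure (omegaDual n C) \ omegaDual n C
      = closure (omegaDual n C) ∩ (interior (dualCone n C))ᶜ := by
    ext x
    constructor
    · rintro ⟨h1, h2⟩; exact ⟨h1, fun h => h2 ⟨hcl h1, h⟩⟩
    · rintro ⟨h1, h2⟩; exact ⟨h1, fun h => h2 h.2⟩
  have hBc : IsCompact (closure (omegaDual n C) \ omegaDual n C) := by
    rw [hB]
    exact ((isCompact_sphere (0 : En n) 1).of_isClosed_subset isClosed_closure hcl).inter_right
      isOpen_interior.isClosed_compl
  have hn0 : ∀ x ∈ Metric.sphere (0 : En n) 1, x ≠ 0 := by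
    rintro x hx rfl; simp at hx
  have hset : {d | ∃ u ∈ ω, ∃ v ∈ closure (omegaDual n C) \ omegaDual n C,
      d = InnerProductGeometry.angle u v} =
      (fun p : En n × En n => InnerProductGeometry.angle p.1 p.2) ''
        (ω ×ˢ (closure (omegaDual n C) \ omegaDual n C)) := by
    ext d
    constructor
    · rintro ⟨u, hu, z, hz, rfl⟩; exact ⟨(u, z), ⟨hu, hz⟩, rfl⟩
    · rintro ⟨⟨u, z⟩, ⟨hu, hz⟩, rfl⟩; exact ⟨u, hu, z, hz, rfl⟩
  have hcomp := (hc.prod hBc).image_of_continuousOn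
    (f := fun p : En n × En n => InnerProductGeometry.angle p.1 p.2) (by
      rintro ⟨u, z⟩ ⟨hu, hz⟩
      exact (InnerProductGeometry.continuousAt_angle (hn0 u (hsub hu).1)
        (hn0 z (hcl hz.1))).continuousWithinAt)
  have hmem := hcomp.sInf_mem ((hω.prod hb).image _)
  unfold sphereAngleDist
  rw [← hset] at hmem
  obtain ⟨u, hu, z, hz, hd⟩ := hmem
  rw [hd]
  refine lt_of_le_of_ne (InnerProductGeometry.angle_nonneg u z) fun h => ?_
  obtain ⟨_, r, hr, rfl⟩ := InnerProductGeometry.angle_eq_zero_iff.1 h.symm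
  have hu1 : ‖u‖ = 1 := by simpa using (hsub hu).1
  have hz1 : ‖r • u‖ = 1 := by simpa using hcl hz.1
  rw [norm_smul, hu1, mul_one, Real.norm_of_nonneg hr.le] at hz1
  rw [hz1, one_smul] at hz
  exact hz.2 (hsub hu)

theorem delta_le' (n : ℕ) (C ω : Set (En n)) {u z : En n} (hu : u ∈ ω)
    (hz : z ∈ closure (omegaDual n C) \ omegaDual n C) :
    sphereAngleDist n C ω ≤ InnerProductGeometry.angle u z :=
  csInf_le ⟨0, by rintro _ ⟨u, _, z, _, rfl⟩; exact InnerProductGeometry.angle_nonneg u z⟩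
    ⟨u, hu, z, hz, rfl⟩

theorem norm_bound' (n : ℕ) (C ω : Set (En n)) (hC : ∀ x ∈ C, ∀ r : ℝ, 0 ≤ r → r • x ∈ C)
    (hsub : ω ⊆ omegaDual n C) (hb : (closure (omegaDual n C) \ omegaDual n C).Nonempty)
    {u x : En n} (hu : u ∈ ω) (hx : x ∈ C) (hx0 : x ≠ 0) :
    sphereAngleDist n C ω * ‖x‖ ≤ Real.pi * (-⟪x, u⟫) := by
  have hxp : 0 < ‖x‖ := norm_pos_iff.2 hx0
  set w := ‖x‖⁻¹ • x with hw
  have hw1 : ‖w‖ = 1 := by rw [hw, norm_smul, norm_inv, norm_norm, inv_mul_cancel₀ hxp.ne']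
  have hwC : w ∈ C := hC x hx _ (by positivity)
  have key : sphereAngleDist n C ω ≤ Real.pi * (-⟪u, w⟫) := by
    rcases lt_or_ge (-⟪u, w⟫) 1 with h | h
    · refine le_of_forall_gt_imp_ge_of_dense fun e he => ?_
      have he' : -⟪u, w⟫ < e / Real.pi := by
        rw [lt_div_iff₀ Real.pi_pos]; linarith
      obtain ⟨t, ht1, ht2⟩ := exists_between (lt_min h he')
      obtain ⟨z, hz, hza⟩ := exists_bdry' n C (hsub hu) hwC hw1 ht1 (ht2.trans_le (min_le_left _ _))
      refine ((delta_le' n C ω hu hz).trans hza).trans ?_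
      have := ht2.le.trans (min_le_right _ _)
      rw [le_div_iff₀ Real.pi_pos] at this
      linarith
    · obtain ⟨z, hz⟩ := hb
      refine ((delta_le' n C ω hu hz).trans (InnerProductGeometry.angle_le_pi u z)).trans ?_
      nlinarith [Real.pi_pos]
  have e : ⟪x, u⟫ = ‖x‖ * ⟪u, w⟫ := by
    rw [hw, real_inner_smul_right, real_inner_comm]
    field_simp
  rw [e]
  nlinarith

theorem vol_bound' (n : ℕ) (hn : 2 ≤ n) (C : Set (En n)) (hC : IsGoodCone n C) (y : En n)
    (hy : y ∈ C) (R : ℝ) (hR0 : 0 < R) (hR : ‖y‖ ≤ R) :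
    volume ((C ∩ Metric.closedBall 0 R) \ (y +ᵥ C)) ≤
      ENNReal.ofReal ((volume (C ∩ Metric.closedBall (0 : En n) 1)).toReal *
        (n * ‖y‖ * R ^ (n - 1))) := by
  obtain ⟨hcl, hconv, hcone, -, -⟩ := hC
  have hadd : ∀ a ∈ C, ∀ b ∈ C, a + b ∈ C := by
    intro a ha b hb
    have h := hcone _ (hconv ha hb (a := 1/2) (b := 1/2) (by norm_num) (by norm_num)
      (by norm_num)) 2 (by norm_num)
    have e : (2 : ℝ) • ((1/2 : ℝ) • a + (1/2 : ℝ) • b) = a + b := by module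
    rwa [e] at h
  have hfin : ∀ r : ℝ, volume (C ∩ Metric.closedBall (0 : En n) r) ≠ ∞ := fun r =>
    (measure_lt_top_of_subset inter_subset_right (measure_closedBall_lt_top).ne).ne
  have hsc : ∀ r : ℝ, 0 ≤ r → volume (C ∩ Metric.closedBall (0 : En n) r) =
      ENNReal.ofReal (r ^ n * (volume (C ∩ Metric.closedBall (0 : En n) 1)).toReal) := by
    intro r hr
    rcases hr.eq_or_lt with rfl | hr
    · have : Nonempty (Fin n) := ⟨⟨0, by omega⟩⟩
      have h0 : volume (C ∩ Metric.closedBall (0 : En n) 0) = 0 :=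
        measure_mono_null (inter_subset_right.trans (by simp)) (measure_singleton (0 : En n))
      rw [h0, zero_pow (by omega)]
      simp
    · have e : C ∩ Metric.closedBall (0 : En n) r = r • (C ∩ Metric.closedBall (0 : En n) 1) := by
        ext x
        rw [Set.mem_smul_set_iff_inv_smul_mem₀ hr.ne']
        simp only [mem_inter_iff, mem_closedBall_zero_iff, norm_smul, norm_inv,
          Real.norm_of_nonneg hr.le]
        rw [inv_mul_le_iff₀ hr, mul_one]
        refine and_congr_left fun _ => ⟨fun h => hcone _ h _ (by positivity), fun h => ?_⟩
        have := hcone _ h r hr.le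
        rwa [smul_inv_smul₀ hr.ne'] at this
      rw [e, Measure.addHaar_smul, finrank_euclideanSpace_fin, abs_of_pos (by positivity),
        ENNReal.ofReal_mul (by positivity), ENNReal.ofReal_toReal (hfin 1)]
  have hmeas : ∀ r, MeasurableSet (C ∩ Metric.closedBall (0 : En n) r) := fun r =>
    (hcl.inter Metric.isClosed_closedBall).measurableSet
  set T := y +ᵥ (C ∩ Metric.closedBall (0 : En n) (R - ‖y‖)) with hT
  have hTs : T ⊆ C ∩ Metric.closedBall (0 : En n) R := by
    rintro _ ⟨z, ⟨hz1, hz2⟩, rfl⟩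
    refine ⟨hadd _ hy _ hz1, ?_⟩
    rw [mem_closedBall_zero_iff] at hz2 ⊢
    have := norm_add_le y z
    simp only [vadd_eq_add]
    linarith
  have hTv : volume T = volume (C ∩ Metric.closedBall (0 : En n) (R - ‖y‖)) :=
    measure_vadd _ _ _
  calc volume ((C ∩ Metric.closedBall 0 R) \ (y +ᵥ C))
      ≤ volume ((C ∩ Metric.closedBall 0 R) \ T) := by
        refine measure_mono (sdiff_subset_sdiff_right (Set.vadd_set_mono inter_subset_left))
    _ = volume (C ∩ Metric.closedBall 0 R) - volume T :=
        measure_sdiff hTs ((hmeas _).const_vadd y).nullMeasurableSet (by rw [hTv]; exact hfin _)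
    _ ≤ _ := by
      rw [hTv, hsc R hR0.le, hsc (R - ‖y‖) (by linarith), ← ENNReal.ofReal_sub _ (by
        have : 0 ≤ R - ‖y‖ := by linarith
        positivity)]
      refine ENNReal.ofReal_le_ofReal ?_
      rw [← sub_mul, mul_comm]
      refine mul_le_mul_of_nonneg_left ?_ ENNReal.toReal_nonneg
      have hB := one_add_mul_le_pow (a := -(‖y‖ / R)) (by
        have : ‖y‖ / R ≤ 1 := (div_le_one hR0).2 hR
        linarith) n
      have h2 := mul_le_mul_of_nonneg_left hB (pow_nonneg hR0.le n)
      rw [← mul_pow] at h2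
      have e1 : R * (1 + -(‖y‖ / R)) = R - ‖y‖ := by field_simp; ring
      have e2 : R ^ n * (1 + n * -(‖y‖ / R)) = R ^ n - n * ‖y‖ * R ^ (n - 1) := by
        obtain ⟨m, rfl⟩ : ∃ m, n = m + 1 := ⟨n - 1, by omega⟩
        simp only [Nat.add_sub_cancel, pow_succ]
        field_simp
        ring
      rw [e1, e2] at h2
      linarith

/-- For a `C`-pseudo-cone `K`, there is a constant `c > 0` (depending only
on `C`, `𝔳` and `K`) such that `V_K(ω) ≤ c / Δ(ω)^{n-1}` for every nonempty compact
`ω ⊆ Ω_{C°}`. -/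
theorem statement0 (n : ℕ) (hn : 2 ≤ n) (C : Set (En n)) (hC : IsGoodCone n C)
    (v : En n) (hv1 : ‖v‖ = 1) (hv2 : v ∈ interior C) (hv3 : -v ∈ interior (dualCone n C))
    (K : Set (En n)) (hK : IsCPseudoCone n C K) :
    ∃ c : ℝ, 0 < c ∧ ∀ ω : Set (En n), ω.Nonempty → IsCompact ω → ω ⊆ omegaDual n C →
      coneVolU n K ω ≤ ENNReal.ofReal (c / sphereAngleDist n C ω ^ (n - 1)) := by
  obtain ⟨⟨⟨y0, hy0⟩, hKcl, hKconv, h0K, hKs⟩, hrec⟩ := hK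
  have hC' := hC
  obtain ⟨hcl, hconv, hcone, -, -⟩ := hC'
  have hadd : ∀ a ∈ C, ∀ b ∈ C, a + b ∈ C := by
    intro a ha b hb
    have h := hcone _ (hconv ha hb (a := 1/2) (b := 1/2) (by norm_num) (by norm_num)
      (by norm_num)) 2 (by norm_num)
    have e : (2 : ℝ) • ((1/2 : ℝ) • a + (1/2 : ℝ) • b) = a + b := by module
    rwa [e] at h
  have hKadd : ∀ x ∈ K, ∀ z ∈ C, x + z ∈ K := by
    intro x hx z hz
    rw [← hrec] at hz
    simpa using hz x hx 1 zero_le_one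
  have hKC : K ⊆ C := by
    intro x hx
    rw [← hrec]
    intro y hy t ht
    rcases ht.eq_or_lt with rfl | ht
    · simpa using hy
    have hlim : Tendsto (fun e : ℝ => (1 - e) • y + t • x) (𝓝[>] 0) (𝓝 (y + t • x)) := by
      have : Continuous (fun e : ℝ => (1 - e) • y + t • x) := by fun_prop
      simpa using (this.tendsto 0).mono_left nhdsWithin_le_nhds
    refine hKcl.mem_of_tendsto hlim ?_
    have hm : Ioo (0 : ℝ) (min 1 t) ∈ 𝓝[>] (0 : ℝ) := Ioo_mem_nhdsGT (by positivity)
    filter_upwards [hm] with e he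
    have he1 : e < 1 := he.2.trans_le (min_le_left _ _)
    have het : e < t := he.2.trans_le (min_le_right _ _)
    have hx' : (t / e) • x ∈ K :=
      hKs (t / e) ((one_le_div he.1).2 het.le) (Set.smul_mem_smul_set hx)
    have h := hKconv hy hx' (a := 1 - e) (b := e) (by linarith) he.1.le (by ring)
    rwa [smul_smul, mul_div_cancel₀ _ he.1.ne'] at h
  set y := y0 + v with hy
  have hyK : y ∈ K := hKadd y0 hy0 v (interior_subset hv2)
  have hyint : y +ᵥ C ⊆ interior K := by
    rintro _ ⟨z, hz, rfl⟩
    have hop : IsOpen ((y0 + z) +ᵥ interior C) := isOpen_interior.vadd _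
    refine interior_maximal ?_ hop ⟨v, hv2, ?_⟩
    · rintro _ ⟨p, hp, rfl⟩
      simp only [vadd_eq_add]
      rw [add_assoc]
      exact hKadd _ hy0 _ (hadd _ hz _ (interior_subset hp))
    · simp only [vadd_eq_add, hy]; abel
  have hy0' : 0 < ‖y‖ := norm_pos_iff.2 fun h => h0K (h ▸ hyK)
  have hb := bdry_nonempty' n hn C v hv1 hv2 hv3
  set β := (volume (C ∩ Metric.closedBall (0 : En n) 1)).toReal with hβ
  refine ⟨β * (n * ‖y‖ * (Real.pi * ‖y‖) ^ (n - 1)) + 1, by positivity, ?_⟩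
  intro ω hωn hωc hω
  have hΔ := delta_mem' n C ω hωn hωc hω hb
  set Δ := sphereAngleDist n C ω with hΔd
  have hΔpi : Δ ≤ Real.pi := by
    obtain ⟨z, hz⟩ := hb
    obtain ⟨u, hu⟩ := hωn
    exact (delta_le' n C ω hu hz).trans (InnerProductGeometry.angle_le_pi u z)
  set R := Real.pi * ‖y‖ / Δ with hR
  have hR0 : 0 < R := by positivity
  have hyR : ‖y‖ ≤ R := by
    rw [hR, le_div_iff₀ hΔ]; nlinarith
  have hss : (⋃ x ∈ nuInv n K ω, segment ℝ (0 : En n) x) ⊆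
      (C ∩ Metric.closedBall 0 R) \ (y +ᵥ C) := by
    refine iUnion₂_subset fun x hx => ?_
    obtain ⟨hxf, u, hu, hnor⟩ := hx
    have hxK : x ∈ K := hKcl.closure_eq ▸ hxf.1
    have hun : u ∈ normalsAt n K x := by rw [hnor]; rfl
    have hx0 : x ≠ 0 := fun h => h0K (h ▸ hxK)
    have hxR : ‖x‖ ≤ R := by
      have h1 := norm_bound' n C ω hcone hω hb hu (hKC hxK) hx0
      have h2 := hun.2 y hyK
      have h3 := abs_real_inner_le_norm y u
      rw [hun.1, mul_one] at h3
      have h4 := (abs_le.1 h3).1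
      rw [hR, le_div_iff₀ hΔ]
      nlinarith [Real.pi_pos]
    rw [segment_eq_image']
    rintro _ ⟨t, ⟨ht0, ht1⟩, rfl⟩
    simp only [zero_add, sub_zero]
    refine ⟨⟨hcone _ (hKC hxK) _ ht0, ?_⟩, ?_⟩
    · rw [mem_closedBall_zero_iff, norm_smul, Real.norm_of_nonneg ht0]
      nlinarith [norm_nonneg x]
    · intro hmem
      have hi := hyint hmem
      rcases ht0.eq_or_lt with rfl | ht0
      · rw [zero_smul] at hi
        exact h0K (interior_subset hi)
      have hti : 1 ≤ t⁻¹ := (one_le_inv₀ ht0).2 ht1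
      have : x ∈ interior (t⁻¹ • K) := by
        rw [interior_smul₀ (inv_pos.2 ht0).ne', Set.mem_smul_set_iff_inv_smul_mem₀
          (inv_pos.2 ht0).ne', inv_inv]
        exact hi
      exact hxf.2 (interior_mono (hKs _ hti) this)
  refine (measure_mono hss).trans ((vol_bound' n hn C hC y (hKC hyK) R hR0 hyR).trans ?_)
  refine ENNReal.ofReal_le_ofReal ?_
  rw [le_div_iff₀ (by positivity), hR, div_pow]
  have hp : Δ ^ (n - 1) ≠ 0 := by positivity
  have e : β * (n * ‖y‖ * ((Real.pi * ‖y‖) ^ (n - 1) / Δ ^ (n - 1))) * Δ ^ (n - 1)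
      = β * (n * ‖y‖ * (Real.pi * ‖y‖) ^ (n - 1)) := by
    field_simp
  rw [e]
  linarith
end
end

section
/- Let Θ : C∖{o} → (0,∞) be continuous and homogeneous of degree −q with n−1 < q < n. A Borel measure φ on Ω_{C°} is the Θ-weighted cone-volume measure V_K^Θ of some C-pseudo-cone K if and only if φ is finite. -/
open MeasureTheory Set Filter
open scoped RealInnerProductSpace ENNReal Topology Pointwise NNReal

noncomputable section

/-- The compact set of unit vectors of the dual cone. -/
def Uset (n : ℕ) (C : Set (En n)) : Set (En n) := Metric.sphere 0 1 ∩ dualCone n C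

lemma isClosed_dualCone {n : ℕ} (C : Set (En n)) : IsClosed (dualCone n C) := by
  have : dualCone n C = ⋂ y ∈ C, {x | ⟪x, y⟫ ≤ 0} := by
    ext x; simp [dualCone]
  rw [this]
  refine isClosed_biInter fun y _ => ?_
  exact isClosed_le (by fun_prop) (by fun_prop)

lemma isCompact_Uset {n : ℕ} (C : Set (En n)) : IsCompact (Uset n C) :=
  (isCompact_sphere _ _).inter_right (isClosed_dualCone C)

lemma omegaDual_subset_Uset {n : ℕ} (C : Set (En n)) : omegaDual n C ⊆ Uset n C :=
  fun _ hx => ⟨hx.1, interior_subset hx.2⟩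

lemma inner_neg_of_interior {n : ℕ} {S : Set (En n)} {x u : En n} (hx : x ∈ interior S)
    (hu : u ≠ 0) (h : ∀ y ∈ S, ⟪y, u⟫ ≤ 0) : ⟪x, u⟫ < 0 := by
  have ht : Tendsto (fun e : ℝ => x + e • u) (𝓝 0) (𝓝 x) := by
    have : Continuous (fun e : ℝ => x + e • u) := by fun_prop
    simpa using this.tendsto 0
  have h1 := ht.eventually (isOpen_interior.mem_nhds hx)
  obtain ⟨e, he, hpos⟩ := ((h1.filter_mono nhdsWithin_le_nhds).and
    (self_mem_nhdsWithin (a := (0 : ℝ)) (s := Ioi 0))).exists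
  have h2 := h _ (interior_subset he)
  rw [inner_add_left, real_inner_smul_left, real_inner_self_eq_norm_sq] at h2
  have : 0 < ‖u‖ := norm_pos_iff.2 hu
  have h3 : 0 < e * ‖u‖ ^ 2 := mul_pos hpos (by positivity)
  linarith

lemma ne_zero_of_mem_Uset {n : ℕ} {C : Set (En n)} {u : En n} (hu : u ∈ Uset n C) : u ≠ 0 := by
  rintro rfl
  have := hu.1
  simp at this

lemma norm_of_mem_Uset {n : ℕ} {C : Set (En n)} {u : En n} (hu : u ∈ Uset n C) : ‖u‖ = 1 := by
  simpa using hu.1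

/-- `-⟪x,u⟫` is positive for `x` in the interior of `C` and `u` in `Uset`. -/
lemma negInner_pos {n : ℕ} {C : Set (En n)} {x u : En n} (hx : x ∈ interior C)
    (hu : u ∈ Uset n C) : 0 < -⟪x, u⟫ := by
  have := inner_neg_of_interior hx (ne_zero_of_mem_Uset hu)
    (fun y hy => by rw [real_inner_comm]; exact hu.2 y hy)
  linarith

lemma negInner_nonneg {n : ℕ} {C : Set (En n)} {x u : En n} (hx : x ∈ C)
    (hu : u ∈ Uset n C) : 0 ≤ -⟪x, u⟫ := by
  have := hu.2 x hx
  rw [real_inner_comm] at this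
  linarith

lemma negInner_lower {n : ℕ} {C : Set (En n)} {x : En n} (hx : x ∈ interior C) :
    ∃ δ > 0, ∀ u ∈ Uset n C, δ ≤ -⟪x, u⟫ := by
  rcases (Uset n C).eq_empty_or_nonempty with h | h
  · exact ⟨1, one_pos, by simp [h]⟩
  · obtain ⟨u, hu, hm⟩ := (isCompact_Uset C).exists_isMinOn h
      (f := fun u => -⟪x, u⟫) (by fun_prop)
    exact ⟨_, negInner_pos hx hu, fun v hv => hm hv⟩

lemma cone_add {n : ℕ} {C : Set (En n)} (hC : IsGoodCone n C) {x y : En n} (hx : x ∈ C)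
    (hy : y ∈ C) : x + y ∈ C := by
  have hcv := hC.2.1
  have := hcv hx hy (a := 1/2) (b := 1/2) (by norm_num) (by norm_num) (by norm_num)
  have h2 := hC.2.2.1 _ this 2 (by norm_num)
  have e : (2 : ℝ) • ((1/2 : ℝ) • x + (1/2 : ℝ) • y) = x + y := by
    rw [smul_add, smul_smul, smul_smul]; norm_num
  rwa [e] at h2

lemma cone_interior_smul {n : ℕ} {C : Set (En n)} (hC : IsGoodCone n C) {x : En n} {r : ℝ}
    (hr : 0 < r) (hx : x ∈ interior C) : r • x ∈ interior C := by
  have h1 : r • interior C = interior (r • C) := interior_smul₀ hr.ne' C |>.symm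
  have h2 : r • C ⊆ C := by
    rintro _ ⟨y, hy, rfl⟩
    exact hC.2.2.1 y hy r hr.le
  exact interior_mono h2 (h1 ▸ smul_mem_smul_set hx)

lemma cone_interior_smul_iff {n : ℕ} {C : Set (En n)} (hC : IsGoodCone n C) {x : En n} {r : ℝ}
    (hr : 0 < r) : r • x ∈ interior C ↔ x ∈ interior C := by
  refine ⟨fun h => ?_, cone_interior_smul hC hr⟩
  have := cone_interior_smul hC (inv_pos.2 hr) h
  rwa [smul_smul, inv_mul_cancel₀ hr.ne', one_smul] at this

lemma zero_notMem_interior {n : ℕ} (hn : 2 ≤ n) {C : Set (En n)} (hC : IsGoodCone n C) :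
    (0 : En n) ∉ interior C := by
  intro h0
  have : Nonempty (Fin n) := ⟨⟨0, by omega⟩⟩
  obtain ⟨x, hx⟩ := exists_ne (0 : En n)
  have key : ∀ y : En n, y ∈ C := by
    intro y
    have ht : Tendsto (fun e : ℝ => e • y) (𝓝 0) (𝓝 (0 : En n)) := by
      have : Continuous (fun e : ℝ => e • y) := by fun_prop
      simpa using this.tendsto 0
    obtain ⟨e, he, hpos⟩ := (((ht.eventually (isOpen_interior.mem_nhds h0)).filter_mono
      nhdsWithin_le_nhds).and (self_mem_nhdsWithin (a := (0 : ℝ)) (s := Ioi 0))).exists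
    have hpos' : 0 < e := hpos
    have := hC.2.2.1 _ (interior_subset he) e⁻¹ (inv_nonneg.2 hpos'.le)
    simpa [smul_smul, inv_mul_cancel₀ hpos'.ne'] using this
  have : x ∈ C ∩ (-C) := ⟨key x, by simpa using key (-x)⟩
  rw [hC.2.2.2.1] at this
  exact hx this

lemma cone_interior_add {n : ℕ} {C : Set (En n)} (hC : IsGoodCone n C) {x y : En n}
    (hx : x ∈ C) (hy : y ∈ interior C) : x + y ∈ interior C := by
  have h1 : x +ᵥ C ⊆ C := by
    rintro _ ⟨z, hz, rfl⟩
    exact cone_add hC hx hz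
  have h2 : interior (x +ᵥ C) = x +ᵥ interior C := interior_vadd x C
  refine interior_mono h1 ?_
  rw [h2]
  exact ⟨y, hy, rfl⟩

/-- The weighted measure, restricted to the interior of `C`. -/
def muT (n : ℕ) (C : Set (En n)) (Θ : En n → ℝ) : Measure (En n) :=
  (HTheta n Θ).restrict (interior C)

/-- Density of `muT`. -/
def dens (n : ℕ) (C : Set (En n)) (Θ : En n → ℝ) : En n → ℝ≥0∞ :=
  (interior C).indicator fun y => ENNReal.ofReal (Θ y)

lemma muT_eq {n : ℕ} (C : Set (En n)) (Θ : En n → ℝ) :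
    muT n C Θ = volume.withDensity (dens n C Θ) := by
  rw [muT, HTheta, restrict_withDensity isOpen_interior.measurableSet, dens,
    withDensity_indicator isOpen_interior.measurableSet]

lemma HTheta_eq_muT {n : ℕ} {C : Set (En n)} (hC : IsGoodCone n C) (Θ : En n → ℝ)
    {E : Set (En n)} (hE : E ⊆ C) : HTheta n Θ E = muT n C Θ E := by
  rw [muT, Measure.restrict_apply' isOpen_interior.measurableSet]
  have hnull : HTheta n Θ (frontier C) = 0 :=
    withDensity_absolutelyContinuous _ _ (hC.2.1.addHaar_frontier volume)
  apply le_antisymm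
  · have : E ⊆ (E ∩ interior C) ∪ frontier C := by
      intro x hx
      by_cases h : x ∈ interior C
      · exact Or.inl ⟨hx, h⟩
      · exact Or.inr ⟨subset_closure (hE hx), h⟩
    refine (measure_mono this).trans ((measure_union_le _ _).trans ?_)
    rw [hnull, add_zero]
  · exact measure_mono inter_subset_left

section
variable {n : ℕ} {C : Set (En n)} {q : ℝ} {Θ : En n → ℝ}

lemma mem_C0 (hn : 2 ≤ n) (hC : IsGoodCone n C) {x : En n} (hx : x ∈ interior C) :
    x ∈ C \ {0} := by
  refine ⟨interior_subset hx, ?_⟩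
  rintro rfl
  exact zero_notMem_interior hn hC hx

lemma measurable_dens (hn : 2 ≤ n) (hC : IsGoodCone n C) (hΘ : IsThetaWeight n C q Θ) :
    Measurable (dens n C Θ) := by
  classical
  have h1 : ContinuousOn (fun y => ENNReal.ofReal (Θ y)) (interior C) :=
    ENNReal.continuous_ofReal.comp_continuousOn (hΘ.1.mono fun x hx => mem_C0 hn hC hx)
  rw [dens, ← piecewise_eq_indicator]
  exact h1.measurable_piecewise continuousOn_const isOpen_interior.measurableSet

lemma dens_smul (hn : 2 ≤ n) (hC : IsGoodCone n C) (hΘ : IsThetaWeight n C q Θ) {s : ℝ}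
    (hs : 0 < s) (x : En n) : dens n C Θ (s • x) = ENNReal.ofReal (s ^ (-q)) * dens n C Θ x := by
  by_cases hx : x ∈ interior C
  · rw [dens, indicator_of_mem hx, indicator_of_mem (cone_interior_smul hC hs hx),
      hΘ.2.2 x (mem_C0 hn hC hx) s hs, ENNReal.ofReal_mul (by positivity)]
  · rw [dens, indicator_of_notMem hx, indicator_of_notMem, mul_zero]
    rwa [cone_interior_smul_iff hC hs]

lemma muT_smul (hn : 2 ≤ n) (hC : IsGoodCone n C) (hΘ : IsThetaWeight n C q Θ) {s : ℝ}
    (hs : 0 < s) {A : Set (En n)} (hA : MeasurableSet A) :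
    muT n C Θ (s • A) = ENNReal.ofReal (s ^ ((n : ℝ) - q)) * muT n C Θ A := by
  have hm := measurable_dens hn hC hΘ
  have hsA : MeasurableSet (s • A) := hA.const_smul₀ s
  rw [muT_eq, withDensity_apply _ hsA, withDensity_apply _ hA, ← lintegral_indicator hsA,
    ← lintegral_indicator hA]
  have h1 := Measure.map_addHaar_smul (volume : Measure (En n)) hs.ne'
  have h2 : ∫⁻ y, (s • A).indicator (dens n C Θ) y ∂(Measure.map (s • ·) volume)
      = ∫⁻ x, (s • A).indicator (dens n C Θ) (s • x) := by
    rw [lintegral_map (hm.indicator hsA) (measurable_const_smul s)]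
  have h3 : ∀ x, (s • A).indicator (dens n C Θ) (s • x)
      = ENNReal.ofReal (s ^ (-q)) * A.indicator (dens n C Θ) x := by
    intro x
    by_cases hx : x ∈ A
    · rw [indicator_of_mem hx, indicator_of_mem (smul_mem_smul_set hx), dens_smul hn hC hΘ hs]
    · rw [indicator_of_notMem hx, indicator_of_notMem, mul_zero]
      rwa [smul_mem_smul_set_iff₀ hs.ne']
  rw [h1, lintegral_smul_measure] at h2
  simp_rw [h3] at h2
  rw [lintegral_const_mul _ (hm.indicator hA)] at h2
  have h4 : ENNReal.ofReal |(s ^ Module.finrank ℝ (En n))⁻¹| = ENNReal.ofReal (s ^ (-(n : ℝ))) := by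
    rw [abs_of_pos (by positivity), Real.rpow_neg hs.le, finrank_euclideanSpace_fin,
      Real.rpow_natCast]
  rw [h4] at h2
  have h5 : ENNReal.ofReal (s ^ (n : ℝ)) * ENNReal.ofReal (s ^ (-(n : ℝ))) = 1 := by
    rw [← ENNReal.ofReal_mul (by positivity), ← Real.rpow_add hs]; simp
  calc _ = ENNReal.ofReal (s ^ (n : ℝ)) * (ENNReal.ofReal (s ^ (-(n : ℝ))) *
        ∫⁻ y, (s • A).indicator (dens n C Θ) y) := by rw [← mul_assoc, h5, one_mul]
    _ = ENNReal.ofReal (s ^ (n : ℝ)) * (ENNReal.ofReal (s ^ (-q)) *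
        ∫⁻ y, A.indicator (dens n C Θ) y) := by
          rw [← h2]; rfl
    _ = _ := by
      rw [← mul_assoc, ← ENNReal.ofReal_mul (by positivity), ← Real.rpow_add hs, sub_eq_add_neg]

lemma theta_bound (hC : IsGoodCone n C) (hΘ : IsThetaWeight n C q Θ) :
    ∃ M : ℝ, 0 < M ∧ ∀ y ∈ C \ {0}, Θ y ≤ M * ‖y‖ ^ (-q) := by
  have hcomp : IsCompact (Metric.sphere (0 : En n) 1 ∩ C) :=
    (isCompact_sphere _ _).inter_right hC.1
  have hsub : Metric.sphere (0 : En n) 1 ∩ C ⊆ C \ {0} := by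
    rintro x ⟨h1, h2⟩
    refine ⟨h2, ?_⟩
    rintro rfl
    simp at h1
  obtain ⟨M, hM⟩ := hcomp.bddAbove_image (hΘ.1.mono hsub)
  refine ⟨max M 1, by positivity, fun y hy => ?_⟩
  have hy0 : 0 < ‖y‖ := norm_pos_iff.2 hy.2
  have hv : ‖y‖⁻¹ • y ∈ Metric.sphere (0 : En n) 1 ∩ C := by
    refine ⟨?_, hC.2.2.1 y hy.1 _ (by positivity)⟩
    simp [norm_smul, hy0.ne']
  have h1 : Θ (‖y‖⁻¹ • y) ≤ max M 1 := (hM ⟨_, hv, rfl⟩).trans (le_max_left _ _)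
  have h2 := hΘ.2.2 _ (hsub hv) ‖y‖ hy0
  rw [smul_smul, mul_inv_cancel₀ hy0.ne', one_smul] at h2
  rw [h2, mul_comm]
  gcongr

lemma muT_zero (hn : 2 ≤ n) (hC : IsGoodCone n C) : muT n C Θ {0} = 0 := by
  rw [muT, Measure.restrict_apply' isOpen_interior.measurableSet]
  have : {(0 : En n)} ∩ interior C = ∅ := by
    ext x
    simp only [mem_inter_iff, mem_singleton_iff, mem_empty_iff_false, iff_false, not_and]
    rintro rfl
    exact zero_notMem_interior hn hC
  rw [this, measure_empty]

lemma muT_ball_lt_top (hn : 2 ≤ n) (hC : IsGoodCone n C) (hΘ : IsThetaWeight n C q Θ)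
    (hq : q < n) (hq0 : 0 < q) : muT n C Θ (Metric.ball 0 1) < ∞ := by
  obtain ⟨M, hM0, hM⟩ := theta_bound hC hΘ
  set Ann : Set (En n) := {x | 1 / 2 ≤ ‖x‖ ∧ ‖x‖ < 1} with hAnn
  have hAm : MeasurableSet Ann :=
    (measurableSet_le measurable_const measurable_norm).inter
      (measurableSet_lt measurable_norm measurable_const)
  have hfin : muT n C Θ Ann < ∞ := by
    rw [muT_eq, withDensity_apply _ hAm]
    have : ∀ x ∈ Ann, dens n C Θ x ≤ ENNReal.ofReal (M * (1 / 2) ^ (-q)) := by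
      intro x hx
      by_cases hxC : x ∈ interior C
      · rw [dens, indicator_of_mem hxC]
        apply ENNReal.ofReal_le_ofReal
        refine (hM x (mem_C0 hn hC hxC)).trans ?_
        have := Real.rpow_le_rpow_of_nonpos (by norm_num) hx.1 (by linarith : -q ≤ 0)
        gcongr
      · rw [dens, indicator_of_notMem hxC]; exact zero_le
    refine (setLIntegral_mono measurable_const this).trans_lt ?_
    rw [setLIntegral_const]
    refine ENNReal.mul_lt_top ENNReal.ofReal_lt_top ?_
    refine (measure_mono (t := Metric.ball 0 1) ?_).trans_lt measure_ball_lt_top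
    intro x hx
    simpa using hx.2
  have hcov : Metric.ball (0 : En n) 1 ⊆ {0} ∪ ⋃ k : ℕ, ((1 / 2 : ℝ) ^ k) • Ann := by
    intro x hx
    by_cases h0 : x = 0
    · exact Or.inl h0
    right
    have hx1 : ‖x‖ < 1 := by simpa using hx
    have hx0 : 0 < ‖x‖ := norm_pos_iff.2 h0
    obtain ⟨k, hk1, hk2⟩ := exists_nat_pow_near_of_lt_one hx0 hx1.le
      (by norm_num : (0 : ℝ) < 1 / 2) (by norm_num)
    rcases hk2.lt_or_eq with hk2 | hk2
    · refine mem_iUnion.2 ⟨k, ?_⟩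
      rw [mem_smul_set_iff_inv_smul_mem₀ (by positivity)]
      have e : ‖((1 / 2 : ℝ) ^ k)⁻¹ • x‖ = ((1 / 2 : ℝ) ^ k)⁻¹ * ‖x‖ := by
        rw [norm_smul, Real.norm_of_nonneg (by positivity)]
      constructor
      · rw [e, le_inv_mul_iff₀ (by positivity)]
        rw [pow_succ] at hk1; linarith
      · rw [e, inv_mul_lt_iff₀ (by positivity)]; linarith
    · cases k with
      | zero => simp at hk2; linarith
      | succ k =>
        refine mem_iUnion.2 ⟨k, ?_⟩
        rw [mem_smul_set_iff_inv_smul_mem₀ (by positivity)]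
        have e : ‖((1 / 2 : ℝ) ^ k)⁻¹ • x‖ = ((1 / 2 : ℝ) ^ k)⁻¹ * ‖x‖ := by
          rw [norm_smul, Real.norm_of_nonneg (by positivity)]
        have hp : (0:ℝ) < (1/2)^k := by positivity
        constructor
        · rw [e, le_inv_mul_iff₀ (by positivity)]
          rw [pow_succ] at hk2; linarith
        · rw [e, inv_mul_lt_iff₀ (by positivity)]
          rw [pow_succ] at hk2; linarith
  refine (measure_mono hcov).trans_lt ((measure_union_le _ _).trans_lt ?_)
  rw [muT_zero hn hC, zero_add]
  refine (measure_iUnion_le _).trans_lt ?_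
  have hterm : ∀ k : ℕ, muT n C Θ (((1 / 2 : ℝ) ^ k) • Ann)
      = (ENNReal.ofReal ((1 / 2 : ℝ) ^ ((n : ℝ) - q))) ^ k * muT n C Θ Ann := by
    intro k
    rw [muT_smul hn hC hΘ (by positivity) hAm, ← ENNReal.ofReal_pow (by positivity),
      ← Real.rpow_natCast, ← Real.rpow_natCast, ← Real.rpow_mul (by positivity),
      ← Real.rpow_mul (by positivity), mul_comm (k : ℝ)]
  simp_rw [hterm]
  rw [ENNReal.tsum_mul_right, ENNReal.tsum_geometric]
  refine ENNReal.mul_lt_top ?_ hfin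
  rw [ENNReal.inv_lt_top, tsub_pos_iff_lt]
  rw [ENNReal.ofReal_lt_one]
  exact Real.rpow_lt_one (by norm_num) (by norm_num) (by linarith)

lemma muT_pos_of_open (hn : 2 ≤ n) (hC : IsGoodCone n C) (hΘ : IsThetaWeight n C q Θ)
    {O : Set (En n)} (hO : IsOpen O) (hne : (O ∩ interior C).Nonempty) : 0 < muT n C Θ O := by
  rw [muT_eq, withDensity_apply _ hO.measurableSet,
    setLIntegral_pos_iff (measurable_dens hn hC hΘ)]
  have : (Function.support (dens n C Θ) ∩ O) = O ∩ interior C := by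
    ext x
    simp only [Function.mem_support, mem_inter_iff, dens]
    by_cases hx : x ∈ interior C
    · have := hΘ.2.1 x (mem_C0 hn hC hx)
      simp [hx, this]
    · simp [hx]
  rw [this]
  exact (hO.inter isOpen_interior).measure_pos _ hne

lemma muT_ball_pos (hn : 2 ≤ n) (hC : IsGoodCone n C) (hΘ : IsThetaWeight n C q Θ)
    {r : ℝ} (hr : 0 < r) : 0 < muT n C Θ (Metric.ball 0 r) := by
  apply muT_pos_of_open hn hC hΘ Metric.isOpen_ball
  obtain ⟨z, hz⟩ := hC.2.2.2.2
  have hz0 : 0 < ‖z‖ := norm_pos_iff.2 (mem_C0 hn hC hz).2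
  refine ⟨(r / 2 / ‖z‖) • z, ?_, cone_interior_smul hC (by positivity) hz⟩
  rw [mem_ball_zero_iff, norm_smul, Real.norm_of_nonneg (by positivity), div_mul_cancel₀ _ hz0.ne']
  linarith

end

section
variable {n : ℕ} {C : Set (En n)} {q : ℝ} {Θ : En n → ℝ}

lemma sum_lower {b q : ℝ} (hb : 0 < b) (hq : 0 < q) (x z : En n) (hz : ‖z‖ = b) :
    ENNReal.ofReal ((1 + ‖x‖) ^ (-q)) ≤ ENNReal.ofReal (b * 2 ^ (q + 1)) *
      ∑' j : ℕ, ENNReal.ofReal ((1 + ‖x + (j : ℝ) • z‖) ^ (-(q + 1))) := by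
  set a := 1 + ‖x‖ with ha
  have ha1 : 1 ≤ a := by rw [ha]; linarith [norm_nonneg x]
  set N := ⌈a / b⌉₊
  have hterm : ∀ j ∈ Finset.range N, ENNReal.ofReal ((2 * a) ^ (-(q + 1))) ≤
      ENNReal.ofReal ((1 + ‖x + (j : ℝ) • z‖) ^ (-(q + 1))) := by
    intro j hj
    have hj' : (j : ℝ) < a / b := Nat.lt_ceil.1 (Finset.mem_range.1 hj)
    have h1 : (j : ℝ) * b < a := by rwa [lt_div_iff₀ hb] at hj'
    have h2 : ‖x + (j : ℝ) • z‖ ≤ ‖x‖ + j * b := by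
      refine (norm_add_le _ _).trans ?_
      rw [norm_smul, hz]; simp
    apply ENNReal.ofReal_le_ofReal
    apply Real.rpow_le_rpow_of_nonpos (by positivity) _ (by linarith)
    rw [ha] at h1 ⊢; linarith
  have h3 : (N : ℝ≥0∞) * ENNReal.ofReal ((2 * a) ^ (-(q + 1))) ≤
      ∑' j : ℕ, ENNReal.ofReal ((1 + ‖x + (j : ℝ) • z‖) ^ (-(q + 1))) := by
    refine le_trans ?_ (ENNReal.sum_le_tsum (Finset.range N))
    refine le_trans ?_ (Finset.sum_le_sum hterm)
    simp
  refine le_trans ?_ (mul_le_mul_right h3 _)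
  rw [← ENNReal.ofReal_natCast, ← ENNReal.ofReal_mul (by positivity),
    ← ENNReal.ofReal_mul (by positivity)]
  apply ENNReal.ofReal_le_ofReal
  have hN : a / b ≤ N := Nat.le_ceil _
  calc a ^ (-q) = b * 2 ^ (q + 1) * (a / b * (2 * a) ^ (-(q + 1))) := by
        rw [Real.mul_rpow (by norm_num) (by linarith), Real.rpow_neg (by norm_num : (0:ℝ) ≤ 2)]
        have : a ^ (-q) = a * a ^ (-(q + 1)) := by
          rw [← Real.rpow_one_add' (by linarith) (by linarith)]; ring_nf
        rw [this]
        field_simp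
    _ ≤ _ := by gcongr

lemma muT_translate_lt_top (hn : 2 ≤ n) (hC : IsGoodCone n C) (hΘ : IsThetaWeight n C q Θ)
    (hq1 : (n : ℝ) - 1 < q) (hq : q < n) {z : En n} (hz : z ∈ interior C) :
    muT n C Θ {x | x - z ∉ C} < ∞ := by
  have hq0 : 0 < q := by
    have : (2 : ℝ) ≤ n := by exact_mod_cast hn
    linarith
  obtain ⟨M, hM0, hM⟩ := theta_bound hC hΘ
  have hz0 : 0 < ‖z‖ := norm_pos_iff.2 (mem_C0 hn hC hz).2
  set D : ℕ → Set (En n) := fun j => {x | x - (j : ℝ) • z ∈ C ∧ x - ((j : ℝ) + 1) • z ∉ C} with hD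
  have hDm : ∀ j, MeasurableSet (D j) := by
    intro j
    have h1 : Measurable fun x : En n => x - (j : ℝ) • z := by fun_prop
    have h2 : Measurable fun x : En n => x - ((j : ℝ) + 1) • z := by fun_prop
    exact (h1 hC.1.measurableSet).inter (h2 hC.1.measurableSet).compl
  have hDd : Pairwise (Function.onFun Disjoint D) := by
    have key : ∀ i j, i < j → ∀ x, x ∈ D i → x ∉ D j := by
      intro i j hij x hi hj
      apply hi.2
      have h1 : ((i : ℝ) + 1) ≤ j := by exact_mod_cast hij
      have := cone_add hC hj.1 (hC.2.2.1 z (interior_subset hz) (j - (i + 1)) (by linarith))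
      convert this using 1
      module
    intro i j hij
    rw [Function.onFun, disjoint_left]
    intro x hx hx'
    rcases lt_or_gt_of_ne hij with h | h
    · exact key i j h x hx hx'
    · exact key j i h x hx' hx
  set G : En n → ℝ≥0∞ := fun x => ENNReal.ofReal ((1 + ‖x‖) ^ (-(q + 1))) with hG
  have hGm : Measurable G := by rw [hG]; fun_prop
  have hGfin : ∫⁻ x, G x < ∞ := finite_integral_one_add_norm (by
    rw [finrank_euclideanSpace_fin]; linarith)
  have hshift : ∀ j : ℕ, ∫⁻ x in D 0, G (x + (j : ℝ) • z) = ∫⁻ x in D j, G x := by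
    intro j
    rw [← lintegral_indicator (hDm 0), ← lintegral_indicator (hDm j),
      ← lintegral_add_right_eq_self ((D j).indicator G) ((j : ℝ) • z)]
    refine lintegral_congr fun x => ?_
    have : x + (j : ℝ) • z ∈ D j ↔ x ∈ D 0 := by
      simp only [hD, mem_ofPred_eq, Nat.cast_zero, zero_smul, sub_zero, zero_add, one_smul]
      have e : x + (j : ℝ) • z - ((j : ℝ) + 1) • z = x - z := by module
      rw [add_sub_cancel_right, e]
    by_cases hx : x ∈ D 0
    · rw [indicator_of_mem hx, indicator_of_mem (this.2 hx)]
    · rw [indicator_of_notMem hx, indicator_of_notMem (fun h => hx (this.1 h))]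
  have hJ : ∫⁻ x in D 0, ENNReal.ofReal ((1 + ‖x‖) ^ (-q)) < ∞ := by
    refine (lintegral_mono (fun x => sum_lower hz0 hq0 x z rfl)).trans_lt ?_
    rw [lintegral_const_mul _ (by fun_prop), lintegral_tsum (fun j => by fun_prop)]
    refine ENNReal.mul_lt_top ENNReal.ofReal_lt_top ?_
    have : ∑' j : ℕ, ∫⁻ x in D 0, ENNReal.ofReal ((1 + ‖x + (j : ℝ) • z‖) ^ (-(q + 1)))
        = ∫⁻ x in ⋃ j, D j, G x := by
      rw [lintegral_iUnion hDm hDd]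
      exact tsum_congr hshift
    rw [this]
    exact (setLIntegral_le_lintegral _ _).trans_lt hGfin
  have hcov : {x | x - z ∉ C} ∩ interior C ⊆ Metric.ball 0 1 ∪ (D 0 ∩ {x | 1 ≤ ‖x‖}) := by
    rintro x ⟨hx1, hx2⟩
    by_cases h : ‖x‖ < 1
    · left; simpa using h
    · right
      refine ⟨⟨by simpa using interior_subset hx2, by simpa using hx1⟩, not_lt.1 h⟩
  have e : muT n C Θ {x | x - z ∉ C} = muT n C Θ ({x | x - z ∉ C} ∩ interior C) := by
    simp only [muT, Measure.restrict_apply' isOpen_interior.measurableSet, inter_assoc, inter_self]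
  rw [e]
  refine (measure_mono hcov).trans_lt ((measure_union_le _ _).trans_lt ?_)
  refine ENNReal.add_lt_top.2 ⟨muT_ball_lt_top hn hC hΘ hq hq0, ?_⟩
  have hm : MeasurableSet (D 0 ∩ {x | 1 ≤ ‖x‖}) :=
    (hDm 0).inter (measurableSet_le measurable_const measurable_norm)
  rw [muT_eq, withDensity_apply _ hm]
  have hb : ∀ x ∈ D 0 ∩ {x | 1 ≤ ‖x‖}, dens n C Θ x ≤
      ENNReal.ofReal (M * 2 ^ q) * ENNReal.ofReal ((1 + ‖x‖) ^ (-q)) := by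
    rintro x ⟨-, hx⟩
    have hx : 1 ≤ ‖x‖ := hx
    by_cases hxC : x ∈ interior C
    · rw [dens, indicator_of_mem hxC, ← ENNReal.ofReal_mul (by positivity)]
      apply ENNReal.ofReal_le_ofReal
      refine (hM x (mem_C0 hn hC hxC)).trans ?_
      have h1 : (2 * ‖x‖) ^ (-q) ≤ (1 + ‖x‖) ^ (-q) :=
        Real.rpow_le_rpow_of_nonpos (by positivity) (by linarith) (by linarith)
      rw [Real.mul_rpow (by norm_num) (by positivity)] at h1
      have h2 : (2 : ℝ) ^ q * 2 ^ (-q) = 1 := by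
        rw [← Real.rpow_add (by norm_num)]; simp
      calc M * ‖x‖ ^ (-q) = M * 2 ^ q * (2 ^ (-q) * ‖x‖ ^ (-q)) := by
            linear_combination (-M * ‖x‖ ^ (-q)) * h2
        _ ≤ _ := by gcongr
    · rw [dens, indicator_of_notMem hxC]; exact zero_le
  refine (setLIntegral_mono (by fun_prop) hb).trans_lt ?_
  refine (lintegral_mono_set inter_subset_left).trans_lt ?_
  rw [lintegral_const_mul _ (by fun_prop)]
  exact ENNReal.mul_lt_top ENNReal.ofReal_lt_top hJ

/-- "Polar coordinates" in disguise. -/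
lemma cone_formula (hn : 2 ≤ n) (hC : IsGoodCone n C) (hΘ : IsThetaWeight n C q Θ)
    (hq : q < n) {A : Set (En n)} (hA : MeasurableSet A)
    (hcon : ∀ r : ℝ, 0 < r → ∀ x ∈ A, r • x ∈ A) {τ : En n → ℝ} (hτm : Measurable τ)
    (hτ : ∀ x ∈ A, 0 < τ x) (hτh : ∀ r : ℝ, 0 < r → ∀ x ∈ A, τ (r • x) = τ x) :
    muT n C Θ {x | x ∈ A ∧ ‖x‖ < τ x} =
      ∫⁻ x in A ∩ Metric.ball 0 1, ENNReal.ofReal (τ x ^ ((n : ℝ) - q)) ∂(muT n C Θ) := by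
  set a : ℝ := (n : ℝ) - q with ha
  have ha0 : 0 < a := by rw [ha]; linarith
  set L := muT n C Θ {x | x ∈ A ∧ ‖x‖ < τ x} with hL
  set I := ∫⁻ x in A ∩ Metric.ball 0 1, ENNReal.ofReal (τ x ^ a) ∂(muT n C Θ) with hI
  have main : ∀ c : ℝ, 1 < c → L ≤ ENNReal.ofReal (c ^ a) * I ∧ I ≤ ENNReal.ofReal (c ^ a) * L := by
    intro c hc
    have hc0 : 0 < c := by linarith
    set Ak : ℤ → Set (En n) := fun k => {x | x ∈ A ∧ c ^ k ≤ τ x ∧ τ x < c ^ (k + 1)} with hAk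
    have hAkm : ∀ k, MeasurableSet (Ak k) := fun k =>
      hA.inter ((measurableSet_le measurable_const hτm).inter
        (measurableSet_lt hτm measurable_const))
    have hdis : Pairwise (Function.onFun Disjoint Ak) := by
      have key : ∀ i j : ℤ, i < j → ∀ x, x ∈ Ak i → x ∉ Ak j := by
        intro i j hij x hi hj
        have h1 : c ^ (i + 1) ≤ c ^ j := zpow_le_zpow_right₀ hc.le (by omega)
        linarith [hi.2.2, hj.2.1]
      intro i j hij
      rw [Function.onFun, disjoint_left]
      intro x hx hx'
      rcases lt_or_gt_of_ne hij with h | h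
      · exact key i j h x hx hx'
      · exact key j i h x hx' hx
    have hcover : ∀ x ∈ A, ∃ k, x ∈ Ak k := by
      intro x hx
      obtain ⟨k, hk1, hk2⟩ := exists_mem_Ico_zpow (hτ x hx) hc
      exact ⟨k, hx, hk1, hk2⟩
    set Bk : ℤ → Set (En n) := fun k => Ak k ∩ Metric.ball 0 1 with hBk
    set Sk : ℤ → Set (En n) := fun k => {x | x ∈ Ak k ∧ ‖x‖ < τ x} with hSk
    have hBkm : ∀ k, MeasurableSet (Bk k) := fun k => (hAkm k).inter measurableSet_ball
    have hSkm : ∀ k, MeasurableSet (Sk k) := fun k =>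
      (hAkm k).inter (measurableSet_lt measurable_norm hτm)
    have hLs : L = ∑' k, muT n C Θ (Sk k) := by
      rw [← measure_iUnion _ hSkm]
      · rw [hL]; congr 1
        ext x
        simp only [mem_ofPred_eq, mem_iUnion, hSk]
        constructor
        · rintro ⟨h1, h2⟩
          obtain ⟨k, hk⟩ := hcover x h1
          exact ⟨k, hk, h2⟩
        · rintro ⟨k, hk, h2⟩
          exact ⟨hk.1, h2⟩
      · intro i j hij
        exact (hdis hij).mono (fun x hx => hx.1) (fun x hx => hx.1)
    have hIs : I = ∑' k, ∫⁻ x in Bk k, ENNReal.ofReal (τ x ^ a) ∂(muT n C Θ) := by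
      rw [← lintegral_iUnion hBkm]
      · rw [hI]; congr 2
        ext x
        simp only [mem_inter_iff, mem_iUnion, hBk]
        constructor
        · rintro ⟨h1, h2⟩
          obtain ⟨k, hk⟩ := hcover x h1
          exact ⟨k, hk, h2⟩
        · rintro ⟨k, hk, h2⟩
          exact ⟨hk.1, h2⟩
      · intro i j hij
        exact (hdis hij).mono inter_subset_left inter_subset_left
    have hAkcon : ∀ k, ∀ r : ℝ, 0 < r → ∀ x ∈ Ak k, r • x ∈ Ak k := by
      intro k r hr x hx
      refine ⟨hcon r hr x hx.1, ?_⟩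
      rw [hτh r hr x hx.1]; exact hx.2
    have hzp : ∀ k : ℤ, 0 < c ^ k := fun k => zpow_pos hc0 k
    have low : ∀ k, ENNReal.ofReal ((c ^ k) ^ a) * muT n C Θ (Bk k) ≤ muT n C Θ (Sk k) := by
      intro k
      rw [← muT_smul hn hC hΘ (hzp k) (hBkm k)]
      apply measure_mono
      rintro _ ⟨x, hx, rfl⟩
      refine ⟨hAkcon k _ (hzp k) x hx.1, ?_⟩
      simp only
      rw [hτh _ (hzp k) x hx.1.1, norm_smul, Real.norm_of_nonneg (hzp k).le]
      have h1 : ‖x‖ < 1 := by simpa using hx.2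
      have := hx.1.2.1
      nlinarith [hzp k]
    have upp : ∀ k, muT n C Θ (Sk k) ≤ ENNReal.ofReal ((c ^ (k + 1)) ^ a) * muT n C Θ (Bk k) := by
      intro k
      rw [← muT_smul hn hC hΘ (hzp _) (hBkm k)]
      apply measure_mono
      intro x hx
      rw [mem_smul_set_iff_inv_smul_mem₀ (hzp _).ne']
      refine ⟨hAkcon k _ (inv_pos.2 (hzp _)) x hx.1, ?_⟩
      rw [mem_ball_zero_iff, norm_smul, Real.norm_of_nonneg (inv_pos.2 (hzp _)).le,
        inv_mul_lt_iff₀ (hzp _), mul_one]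
      exact hx.2.trans hx.1.2.2
    have low2 : ∀ k, ENNReal.ofReal ((c ^ k) ^ a) * muT n C Θ (Bk k) ≤
        ∫⁻ x in Bk k, ENNReal.ofReal (τ x ^ a) ∂(muT n C Θ) := by
      intro k
      rw [← setLIntegral_const]
      refine setLIntegral_mono' (hBkm k) fun x hx => ENNReal.ofReal_le_ofReal ?_
      exact Real.rpow_le_rpow (hzp k).le hx.1.2.1 ha0.le
    have upp2 : ∀ k, ∫⁻ x in Bk k, ENNReal.ofReal (τ x ^ a) ∂(muT n C Θ) ≤
        ENNReal.ofReal ((c ^ (k + 1)) ^ a) * muT n C Θ (Bk k) := by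
      intro k
      rw [← setLIntegral_const]
      refine setLIntegral_mono' (hBkm k) fun x hx => ENNReal.ofReal_le_ofReal ?_
      exact Real.rpow_le_rpow (hτ x hx.1.1).le hx.1.2.2.le ha0.le
    have hmul : ∀ k : ℤ, ENNReal.ofReal ((c ^ (k + 1)) ^ a) =
        ENNReal.ofReal (c ^ a) * ENNReal.ofReal ((c ^ k) ^ a) := by
      intro k
      rw [← ENNReal.ofReal_mul (by positivity), ← Real.mul_rpow hc0.le (hzp k).le,
        zpow_add_one₀ hc0.ne', mul_comm]
    constructor
    · rw [hLs, hIs, ← ENNReal.tsum_mul_left]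
      refine ENNReal.tsum_le_tsum fun k => (upp k).trans ?_
      rw [hmul, mul_assoc]
      exact mul_le_mul_right (low2 k) _
    · rw [hLs, hIs, ← ENNReal.tsum_mul_left]
      refine ENNReal.tsum_le_tsum fun k => (upp2 k).trans ?_
      rw [hmul, mul_assoc]
      exact mul_le_mul_right (low k) _
  have hlim : ∀ X : ℝ≥0∞, Tendsto (fun c : ℝ => ENNReal.ofReal (c ^ a) * X) (𝓝[>] 1) (𝓝 X) := by
    intro X
    have h1 : Tendsto (fun c : ℝ => ENNReal.ofReal (c ^ a)) (𝓝[>] 1) (𝓝 1) := by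
      have : ContinuousAt (fun c : ℝ => ENNReal.ofReal (c ^ a)) 1 :=
        ENNReal.continuous_ofReal.continuousAt.comp
          (Real.continuousAt_rpow_const _ _ (Or.inl one_ne_zero))
      have h2 := this.tendsto
      simp only [Real.one_rpow, ENNReal.ofReal_one] at h2
      exact h2.mono_left nhdsWithin_le_nhds
    have := ENNReal.Tendsto.mul_const (b := X) h1 (Or.inl one_ne_zero)
    rwa [one_mul] at this
  apply le_antisymm
  · exact ge_of_tendsto (hlim I) (eventually_nhdsWithin_of_forall fun c hc => (main c hc).1)
  · exact ge_of_tendsto (hlim L) (eventually_nhdsWithin_of_forall fun c hc => (main c hc).2)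

end

/-- Absolute support function of a subset of `C`. -/
def hK {n : ℕ} (K : Set (En n)) (u : En n) : ℝ := ⨅ y : K, max 0 (-⟪(y : En n), u⟫)

/-- Wulff shape. -/
def WH (n : ℕ) (C : Set (En n)) (H : En n → ℝ) : Set (En n) :=
  {x | x ∈ C ∧ ∀ u ∈ Uset n C, H u ≤ -⟪x, u⟫}

open Classical in
/-- Radial function of the Wulff shape. -/
def rhoH (n : ℕ) (C : Set (En n)) (H : En n → ℝ) (x : En n) : ℝ :=
  if x ∈ interior C then ⨆ u : Uset n C, H u / (-⟪x, (u : En n)⟫) else 0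

/-- Admissible functions. -/
def GoodH (n : ℕ) (C : Set (En n)) (H : En n → ℝ) : Prop :=
  (∀ u ∈ Uset n C, 0 ≤ H u) ∧ (∃ R, ∀ u ∈ Uset n C, H u ≤ R) ∧ ∃ u ∈ Uset n C, 0 < H u

lemma hK_bdd {n : ℕ} (K : Set (En n)) (u : En n) :
    BddBelow (range fun y : K => max 0 (-⟪(y : En n), u⟫)) :=
  ⟨0, by rintro _ ⟨y, rfl⟩; exact le_max_left _ _⟩

lemma hK_nonneg {n : ℕ} (K : Set (En n)) (u : En n) : 0 ≤ hK K u :=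
  Real.iInf_nonneg fun _ => le_max_left _ _

lemma hK_le {n : ℕ} {K : Set (En n)} {y : En n} (hy : y ∈ K) (u : En n) :
    hK K u ≤ max 0 (-⟪y, u⟫) := ciInf_le (hK_bdd K u) (⟨y, hy⟩ : K)

lemma le_hK {n : ℕ} {K : Set (En n)} (hne : K.Nonempty) {u : En n} {c : ℝ}
    (h : ∀ y ∈ K, c ≤ max 0 (-⟪y, u⟫)) : c ≤ hK K u :=
  haveI : Nonempty K := hne.to_subtype
  le_ciInf fun y => h y y.2

lemma hK_usc {n : ℕ} (K : Set (En n)) : UpperSemicontinuous (hK K) := by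
  refine upperSemicontinuous_ciInf (hK_bdd K) fun y => Continuous.upperSemicontinuous ?_
  fun_prop

section
variable {n : ℕ} {C : Set (En n)} {q : ℝ} {Θ : En n → ℝ} {H : En n → ℝ}

lemma hK_le_of_mem {K : Set (En n)} (hK' : K ⊆ C) {y u : En n} (hy : y ∈ K)
    (hu : u ∈ Uset n C) : hK K u ≤ -⟪y, u⟫ := by
  have := hK_le hy u
  rwa [max_eq_right (negInner_nonneg (hK' hy) hu)] at this

lemma subset_WH {K : Set (En n)} (hK' : K ⊆ C) : K ⊆ WH n C (hK K) :=
  fun y hy => ⟨hK' hy, fun _ hu => hK_le_of_mem hK' hy hu⟩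

lemma isClosed_WH (hC : IsGoodCone n C) : IsClosed (WH n C H) := by
  have : WH n C H = C ∩ ⋂ u ∈ Uset n C, {x | H u ≤ -⟪x, u⟫} := by
    ext x; simp [WH]
  rw [this]
  refine hC.1.inter (isClosed_biInter fun u _ => ?_)
  exact isClosed_le (by fun_prop) (by fun_prop)

lemma rho_bdd (hH : GoodH n C H) {x : En n} (hx : x ∈ interior C) :
    BddAbove (range fun u : Uset n C => H u / (-⟪x, (u : En n)⟫)) := by
  obtain ⟨R, hR⟩ := hH.2.1
  obtain ⟨δ, hδ, h⟩ := negInner_lower hx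
  refine ⟨|R| / δ, ?_⟩
  rintro _ ⟨u, rfl⟩
  have h1 := h u u.2
  have h2 := hR u u.2
  exact div_le_div₀ (abs_nonneg _) (h2.trans (le_abs_self _)) hδ h1

lemma le_rho (hH : GoodH n C H) {x u : En n} (hx : x ∈ interior C) (hu : u ∈ Uset n C) :
    H u ≤ rhoH n C H x * (-⟪x, u⟫) := by
  have := le_ciSup (rho_bdd hH hx) (⟨u, hu⟩ : Uset n C)
  rw [rhoH, if_pos hx]
  rwa [div_le_iff₀ (negInner_pos hx hu)] at this

lemma rho_le (hH : GoodH n C H) {x : En n} (hx : x ∈ interior C) {c : ℝ}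
    (h : ∀ u ∈ Uset n C, H u ≤ c * (-⟪x, u⟫)) : rhoH n C H x ≤ c := by
  obtain ⟨u0, hu0, -⟩ := hH.2.2
  haveI : Nonempty (Uset n C) := ⟨⟨u0, hu0⟩⟩
  rw [rhoH, if_pos hx]
  refine ciSup_le fun u => ?_
  rw [div_le_iff₀ (negInner_pos hx u.2)]
  exact h u u.2

lemma rho_pos (hH : GoodH n C H) {x : En n} (hx : x ∈ interior C) : 0 < rhoH n C H x := by
  obtain ⟨u, hu, hpos⟩ := hH.2.2
  have h1 := le_rho hH hx hu
  exact pos_of_mul_pos_left (hpos.trans_le h1) (negInner_pos hx hu).le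

lemma rho_of_notMem {x : En n} (hx : x ∉ interior C) : rhoH n C H x = 0 := by
  rw [rhoH, if_neg hx]

lemma rho_nonneg (hH : GoodH n C H) (x : En n) : 0 ≤ rhoH n C H x := by
  by_cases hx : x ∈ interior C
  · exact (rho_pos hH hx).le
  · rw [rho_of_notMem hx]

lemma rho_smul (hC : IsGoodCone n C) (hH : GoodH n C H) {r : ℝ} (hr : 0 < r) (x : En n) :
    rhoH n C H (r • x) = r⁻¹ * rhoH n C H x := by
  by_cases hx : x ∈ interior C
  · have key : ∀ {s : ℝ} {y : En n}, 0 < s → y ∈ interior C →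
        rhoH n C H (s • y) ≤ s⁻¹ * rhoH n C H y := by
      intro s y hs hy
      refine rho_le hH (cone_interior_smul hC hs hy) fun u hu => ?_
      refine (le_rho hH hy hu).trans_eq ?_
      rw [real_inner_smul_left]
      field_simp
    refine le_antisymm (key hr hx) ?_
    have := key (inv_pos.2 hr) (cone_interior_smul hC hr hx)
    rw [smul_smul, inv_mul_cancel₀ hr.ne', one_smul, inv_inv] at this
    rw [inv_mul_le_iff₀ hr]
    exact this
  · rw [rho_of_notMem hx, rho_of_notMem, mul_zero]
    rwa [cone_interior_smul_iff hC hr]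

lemma mem_WH_iff (hH : GoodH n C H) {x : En n} (hx : x ∈ interior C) :
    x ∈ WH n C H ↔ rhoH n C H x ≤ 1 := by
  constructor
  · intro h
    exact rho_le hH hx fun u hu => by rw [one_mul]; exact h.2 u hu
  · intro h
    refine ⟨interior_subset hx, fun u hu => (le_rho hH hx hu).trans ?_⟩
    have := negInner_pos hx hu
    nlinarith

lemma measurable_rho (hH : GoodH n C H) : Measurable (rhoH n C H) := by
  refine measurable_of_Iic fun c => ?_
  rcases lt_or_ge c 0 with hc | hc
  · have : rhoH n C H ⁻¹' Iic c = ∅ := by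
      ext x
      simp only [mem_preimage, mem_Iic, mem_empty_iff_false, iff_false, not_le]
      exact hc.trans_le (rho_nonneg hH x)
    rw [this]; exact MeasurableSet.empty
  · have : rhoH n C H ⁻¹' Iic c = (interior C)ᶜ ∪
        (interior C ∩ ⋂ u ∈ Uset n C, {x | H u ≤ c * (-⟪x, u⟫)}) := by
      ext x
      simp only [mem_preimage, mem_Iic, mem_union, mem_compl_iff, mem_inter_iff, mem_iInter]
      by_cases hx : x ∈ interior C
      · simp only [hx, not_true_eq_false, true_and, false_or]
        constructor
        · intro h u hu
          refine (le_rho hH hx hu).trans ?_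
          have := negInner_pos hx hu
          gcongr
        · exact fun h => rho_le hH hx h
      · simp [hx, rho_of_notMem hx, hc]
    rw [this]
    refine isOpen_interior.measurableSet.compl.union (isOpen_interior.measurableSet.inter ?_)
    refine IsClosed.measurableSet (isClosed_biInter fun u _ => ?_)
    exact isClosed_le (by fun_prop) (by fun_prop)

/-- The measure on which everything is integrated. -/
def muB (n : ℕ) (C : Set (En n)) (Θ : En n → ℝ) : Measure (En n) :=
  (muT n C Θ).restrict (Metric.ball 0 1)

lemma ae_muT_interior : ∀ᵐ x ∂(muT n C Θ), x ∈ interior C :=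
  ae_restrict_mem isOpen_interior.measurableSet

lemma ae_muB_interior : ∀ᵐ x ∂(muB n C Θ), x ∈ interior C :=
  ae_restrict_of_ae ae_muT_interior

lemma muT_ac : muT n C Θ ≪ volume := by
  rw [muT_eq]; exact withDensity_absolutelyContinuous _ _

lemma muT_rho (hn : 2 ≤ n) (hC : IsGoodCone n C) (hΘ : IsThetaWeight n C q Θ)
    (hq : q < n) (hH : GoodH n C H) {A : Set (En n)} (hA : MeasurableSet A)
    (hcon : ∀ r : ℝ, 0 < r → ∀ x ∈ A, r • x ∈ A) :
    muT n C Θ {x | x ∈ A ∧ 1 < rhoH n C H x} =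
      ∫⁻ x in A, ENNReal.ofReal ((‖x‖ * rhoH n C H x) ^ ((n : ℝ) - q)) ∂(muB n C Θ) := by
  have h1 := cone_formula hn hC hΘ hq (A := A ∩ interior C)
    (hA.inter isOpen_interior.measurableSet)
    (fun r hr x hx => ⟨hcon r hr x hx.1, cone_interior_smul hC hr hx.2⟩)
    (τ := fun x => ‖x‖ * rhoH n C H x) (measurable_norm.mul (measurable_rho hH))
    (fun x hx => mul_pos (norm_pos_iff.2 (mem_C0 hn hC hx.2).2) (rho_pos hH hx.2))
    (fun r hr x hx => by
      rw [rho_smul hC hH hr, norm_smul, Real.norm_of_nonneg hr.le]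
      field_simp)
  have e1 : muT n C Θ {x | x ∈ A ∧ 1 < rhoH n C H x} =
      muT n C Θ {x | x ∈ A ∩ interior C ∧ ‖x‖ < ‖x‖ * rhoH n C H x} := by
    congr 1
    ext x
    simp only [mem_ofPred_eq, mem_inter_iff]
    constructor
    · rintro ⟨h1, h2⟩
      have hx : x ∈ interior C := by
        by_contra hx
        rw [rho_of_notMem hx] at h2
        linarith
      have : 0 < ‖x‖ := norm_pos_iff.2 (mem_C0 hn hC hx).2
      exact ⟨⟨h1, hx⟩, by nlinarith⟩
    · rintro ⟨⟨h1, hx⟩, h2⟩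
      have : 0 < ‖x‖ := norm_pos_iff.2 (mem_C0 hn hC hx).2
      refine ⟨h1, ?_⟩
      by_contra h
      nlinarith
  rw [e1, h1, muB, Measure.restrict_restrict hA]
  apply setLIntegral_congr
  have : (A ∩ interior C) ∩ Metric.ball 0 1 = (A ∩ Metric.ball 0 1) ∩ interior C := by
    ext x; simp only [mem_inter_iff]; tauto
  rw [this]
  filter_upwards [ae_muT_interior (n := n) (C := C) (Θ := Θ)] with x hx
  exact propext ⟨fun h => h.1, fun h => ⟨h, hx⟩⟩

lemma muT_WH_compl (hn : 2 ≤ n) (hC : IsGoodCone n C) (hΘ : IsThetaWeight n C q Θ)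
    (hq : q < n) (hH : GoodH n C H) :
    muT n C Θ (WH n C H)ᶜ =
      ∫⁻ x, ENNReal.ofReal ((‖x‖ * rhoH n C H x) ^ ((n : ℝ) - q)) ∂(muB n C Θ) := by
  rw [← Measure.restrict_univ (μ := muB n C Θ),
    ← muT_rho hn hC hΘ hq hH MeasurableSet.univ (fun _ _ _ _ => mem_univ _)]
  apply measure_congr
  filter_upwards [ae_muT_interior (n := n) (C := C) (Θ := Θ)] with x hx
  refine propext ?_
  change (x ∉ WH n C H) ↔ (x ∈ univ ∧ 1 < rhoH n C H x)
  rw [mem_WH_iff hH hx, not_le]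
  simp

end

/-- Reciprocal radial function. -/
def gam (n : ℕ) (C : Set (En n)) (H : En n → ℝ) (x : En n) : ℝ := (rhoH n C H x)⁻¹

/-- The gradient of `gam`. -/
def dgam (n : ℕ) (C : Set (En n)) (H : En n → ℝ) (x : En n) : En n :=
  (InnerProductSpace.toDual ℝ (En n)).symm (fderiv ℝ (gam n C H) x)

/-- The (radial) Gauss map. -/
def alph (n : ℕ) (C : Set (En n)) (H : En n → ℝ) (x : En n) : En n :=
  -(‖dgam n C H x‖⁻¹ • dgam n C H x)

section
variable {n : ℕ} {C : Set (En n)} {q : ℝ} {Θ : En n → ℝ} {H : En n → ℝ}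

lemma rho_lt_of_compact (hH : GoodH n C H) (husc : UpperSemicontinuous H) {x : En n}
    (hx : x ∈ interior C) {S : Set (En n)} (hS : S ⊆ Uset n C) (hSc : IsClosed S)
    (hno : ∀ u ∈ S, H u ≠ rhoH n C H x * (-⟪x, u⟫)) :
    ∃ r, 0 ≤ r ∧ r < rhoH n C H x ∧ ∀ u ∈ S, H u ≤ r * (-⟪x, u⟫) := by
  have hpos := rho_pos hH hx
  rcases S.eq_empty_or_nonempty with rfl | hne
  · exact ⟨0, le_rfl, hpos, by simp⟩
  have hcomp : IsCompact S := (isCompact_Uset C).of_isClosed_subset hSc hS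
  have hF : UpperSemicontinuousOn (fun u => H u + -(rhoH n C H x * (-⟪x, u⟫))) S := by
    refine UpperSemicontinuous.upperSemicontinuousOn (husc.add ?_) S
    exact Continuous.upperSemicontinuous (by fun_prop)
  obtain ⟨u0, hu0, hmax⟩ := hF.exists_isMaxOn hne hcomp
  have hneg : H u0 + -(rhoH n C H x * (-⟪x, u0⟫)) < 0 := by
    have h1 := le_rho hH hx (hS hu0)
    have h2 := hno u0 hu0
    have := lt_of_le_of_ne h1 h2
    linarith
  set η := -(H u0 + -(rhoH n C H x * (-⟪x, u0⟫))) with hη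
  have hηpos : 0 < η := by linarith
  have hn1 : 0 < ‖x‖ + 1 := by positivity
  refine ⟨max 0 (rhoH n C H x - η / (‖x‖ + 1)), le_max_left _ _, max_lt hpos ?_, ?_⟩
  · have : 0 < η / (‖x‖ + 1) := by positivity
    linarith
  · intro u hu
    have h1 : H u + -(rhoH n C H x * (-⟪x, u⟫)) ≤ -η := by
      have := hmax hu
      simp only [mem_ofPred_eq] at this
      linarith
    have h2 : -⟪x, u⟫ ≤ ‖x‖ := by
      have := abs_real_inner_le_norm x u
      rw [norm_of_mem_Uset (hS hu), mul_one] at this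
      linarith [neg_abs_le ⟪x, u⟫]
    have h3 := negInner_pos hx (hS hu)
    have h4 : (rhoH n C H x - η / (‖x‖ + 1)) * (-⟪x, u⟫) ≤
        max 0 (rhoH n C H x - η / (‖x‖ + 1)) * (-⟪x, u⟫) := by
      gcongr; exact le_max_right _ _
    refine le_trans ?_ h4
    have h5 : η / (‖x‖ + 1) * (-⟪x, u⟫) ≤ η := by
      rw [div_mul_eq_mul_div, div_le_iff₀ hn1]
      nlinarith
    nlinarith

lemma exists_maximizer (hH : GoodH n C H) (husc : UpperSemicontinuous H) {x : En n}
    (hx : x ∈ interior C) : ∃ u ∈ Uset n C, H u = rhoH n C H x * (-⟪x, u⟫) := by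
  by_contra! hno
  obtain ⟨r, -, hr, h⟩ := rho_lt_of_compact hH husc hx Subset.rfl (isCompact_Uset C).isClosed hno
  exact absurd (rho_le hH hx h) (not_le.2 hr)

lemma gam_smul (hC : IsGoodCone n C) (hH : GoodH n C H) {r : ℝ} (hr : 0 < r) (x : En n) :
    gam n C H (r • x) = r * gam n C H x := by
  rw [gam, gam, rho_smul hC hH hr, mul_inv, inv_inv]

lemma dgam_smul (hC : IsGoodCone n C) (hH : GoodH n C H) {r : ℝ} (hr : 0 < r) (x : En n) :
    dgam n C H (r • x) = dgam n C H x := by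
  have h1 : fderiv ℝ (fun y => gam n C H (r • y)) x = r • fderiv ℝ (gam n C H) (r • x) :=
    fderiv_comp_smul r
  have h2 : (fun y => gam n C H (r • y)) = r • gam n C H := by
    funext y; rw [gam_smul hC hH hr]; rfl
  rw [h2, fderiv_const_smul_field] at h1
  have h3 := smul_right_injective _ hr.ne' h1
  rw [dgam, dgam, h3]

lemma alph_smul (hC : IsGoodCone n C) (hH : GoodH n C H) {r : ℝ} (hr : 0 < r) (x : En n) :
    alph n C H (r • x) = alph n C H x := by
  rw [alph, alph, dgam_smul hC hH hr]

lemma measurable_alph : Measurable (alph n C H) := by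
  have h : Measurable (dgam n C H) :=
    (InnerProductSpace.toDual ℝ (En n)).symm.continuous.measurable.comp (measurable_fderiv ℝ _)
  unfold alph
  fun_prop

lemma gam_concave (hC : IsGoodCone n C) (hH : GoodH n C H) :
    ConcaveOn ℝ (interior C) (gam n C H) := by
  refine ⟨hC.2.1.interior, ?_⟩
  intro x hx y hy a b ha hb hab
  have hz := hC.2.1.interior hx hy ha hb hab
  have hpx := rho_pos hH hx
  have hpy := rho_pos hH hy
  have hgx : 0 < gam n C H x := inv_pos.2 hpx
  have hgy : 0 < gam n C H y := inv_pos.2 hpy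
  have hs : 0 < a * gam n C H x + b * gam n C H y := by
    rcases ha.eq_or_lt with h | h
    · have : b = 1 := by linarith
      rw [← h, this]; simpa using hgy
    · positivity
  simp only [smul_eq_mul]
  have : rhoH n C H (a • x + b • y) ≤ (a * gam n C H x + b * gam n C H y)⁻¹ := by
    refine rho_le hH hz fun u hu => ?_
    have h1 := le_rho hH hx hu
    have h2 := le_rho hH hy hu
    have h1' : gam n C H x * H u ≤ -⟪x, u⟫ := by
      rw [gam, inv_mul_le_iff₀ hpx]; exact h1
    have h2' : gam n C H y * H u ≤ -⟪y, u⟫ := by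
      rw [gam, inv_mul_le_iff₀ hpy]; exact h2
    rw [le_inv_mul_iff₀ hs, inner_add_left, real_inner_smul_left, real_inner_smul_left]
    have e1 := mul_le_mul_of_nonneg_left h1' ha
    have e2 := mul_le_mul_of_nonneg_left h2' hb
    nlinarith
  rw [gam, gam, gam] at *
  exact (le_inv_comm₀ hs (rho_pos hH hz)).2 this

lemma ae_diff_gam (hC : IsGoodCone n C) (hH : GoodH n C H) :
    ∀ᵐ x : En n, x ∈ interior C → DifferentiableAt ℝ (gam n C H) x := by
  have hlip := (gam_concave hC hH).locallyLipschitzOn isOpen_interior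
  have : volume {x : En n | x ∈ interior C ∧ ¬ DifferentiableAt ℝ (gam n C H) x} = 0 := by
    refine measure_null_of_locally_null _ fun x hx => ?_
    obtain ⟨K, t, ht, hK⟩ := hlip hx.1
    rw [isOpen_interior.nhdsWithin_eq hx.1] at ht
    obtain ⟨o, hot, ho, hxo⟩ := mem_nhds_iff.1 ht
    refine ⟨{x : En n | x ∈ interior C ∧ ¬ DifferentiableAt ℝ (gam n C H) x} ∩ o,
      inter_mem_nhdsWithin _ (ho.mem_nhds hxo), ?_⟩
    have h2 := (hK.mono hot).ae_differentiableWithinAt_of_mem (μ := volume)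
    refine measure_mono_null ?_ h2
    rintro y ⟨⟨hy1, hy2⟩, hy3⟩ hcon
    exact hy2 ((hcon hy3).differentiableAt (ho.mem_nhds hy3))
  refine measure_mono_null ?_ this
  intro x hx
  simp only [mem_compl_iff, mem_ofPred_eq, Classical.not_imp] at hx
  exact hx

lemma alph_eq_of_maximizer (hH : GoodH n C H) {x u : En n}
    (hx : x ∈ interior C) (hd : DifferentiableAt ℝ (gam n C H) x) (hu : u ∈ Uset n C)
    (hmax : H u = rhoH n C H x * (-⟪x, u⟫)) : alph n C H x = u := by
  have hpx := rho_pos hH hx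
  have hix := negInner_pos hx hu
  have hHu : 0 < H u := by rw [hmax]; positivity
  have hmin : IsLocalMin (fun y => (-(H u)⁻¹) * ⟪u, y⟫ - gam n C H y) x := by
    filter_upwards [isOpen_interior.mem_nhds hx] with y hy
    have hpy := rho_pos hH hy
    have e1 : (-(H u)⁻¹) * ⟪u, x⟫ - gam n C H x = 0 := by
      have hne : ⟪x, u⟫ ≠ 0 := by intro h; rw [h] at hix; simp at hix
      rw [gam, real_inner_comm, hmax]
      field_simp
      ring
    have e2 := le_rho hH hy hu
    rw [e1, sub_nonneg, gam, real_inner_comm, neg_mul, ← mul_neg, le_inv_mul_iff₀ hHu,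
      mul_inv_le_iff₀ hpy]
    linarith
  have hder : HasFDerivAt (fun y => (-(H u)⁻¹) * ⟪u, y⟫ - gam n C H y)
      ((-(H u)⁻¹) • (innerSL ℝ u) - fderiv ℝ (gam n C H) x) x := by
    refine HasFDerivAt.sub ?_ hd.hasFDerivAt
    exact ((innerSL ℝ u).hasFDerivAt).const_mul _
  have h0 := hmin.hasFDerivAt_eq_zero hder
  have h1 : fderiv ℝ (gam n C H) x = (-(H u)⁻¹) • (innerSL ℝ u) := (sub_eq_zero.1 h0).symm
  have h2 : dgam n C H x = (-(H u)⁻¹) • u := by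
    rw [dgam, h1, LinearIsometryEquiv.symm_apply_eq]
    ext y
    simp
  have hn1 := norm_of_mem_Uset hu
  rw [alph, h2, norm_smul, hn1, mul_one, norm_neg, norm_inv, Real.norm_of_nonneg hHu.le, inv_inv,
    smul_smul, mul_neg, mul_inv_cancel₀ hHu.ne', neg_smul, one_smul, neg_neg]

/-- Almost everywhere, `alph` is the unique maximizer. -/
lemma ae_alph (hC : IsGoodCone n C) (hH : GoodH n C H) (husc : UpperSemicontinuous H) :
    ∀ᵐ x : En n, x ∈ interior C → alph n C H x ∈ Uset n C ∧
      ∀ u ∈ Uset n C, H u = rhoH n C H x * (-⟪x, u⟫) ↔ u = alph n C H x := by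
  filter_upwards [ae_diff_gam hC hH] with x hx hxi
  obtain ⟨u, hu, hmax⟩ := exists_maximizer hH husc hxi
  have e := alph_eq_of_maximizer hH hxi (hx hxi) hu hmax
  refine ⟨e ▸ hu, fun v hv => ⟨fun h => (alph_eq_of_maximizer hH hxi (hx hxi) hv h).symm, ?_⟩⟩
  rintro rfl
  rw [e]; exact hmax

end

/-- Perturbed support function. -/
def Hpert {n : ℕ} (h g : En n → ℝ) (t : ℝ) (u : En n) : ℝ := h u * Real.exp (t * g u)

/-- The density `(‖x‖ ρ(x))^(n-q)`. -/
def tauA (n : ℕ) (C : Set (En n)) (q : ℝ) (H : En n → ℝ) (x : En n) : ℝ :=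
  (‖x‖ * rhoH n C H x) ^ ((n : ℝ) - q)

section
variable {n : ℕ} {C : Set (En n)} {q : ℝ} {Θ : En n → ℝ} {h g : En n → ℝ} {G : ℝ}

lemma good_Hpert (hH : GoodH n C h) (hg : ∀ u, |g u| ≤ G) (t : ℝ) :
    GoodH n C (Hpert h g t) := by
  obtain ⟨h1, ⟨R, hR⟩, u, hu, hpos⟩ := hH
  refine ⟨fun u hu => mul_nonneg (h1 u hu) (Real.exp_pos _).le,
    ⟨R * Real.exp (|t| * G), fun u hu => ?_⟩, u, hu, mul_pos hpos (Real.exp_pos _)⟩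
  have : t * g u ≤ |t| * G := by
    refine (le_abs_self _).trans ?_
    rw [abs_mul]
    exact mul_le_mul_of_nonneg_left (hg u) (abs_nonneg _)
  have e1 := h1 u hu
  exact mul_le_mul (hR u hu) (Real.exp_le_exp.2 this) (Real.exp_pos _).le (e1.trans (hR u hu))

lemma rho_pert_upper (hH : GoodH n C h) (hg : ∀ u, |g u| ≤ G) {t : ℝ} (ht : 0 ≤ t) (x : En n) :
    rhoH n C (Hpert h g t) x ≤ rhoH n C h x * Real.exp (t * G) := by
  by_cases hx : x ∈ interior C
  · refine rho_le (good_Hpert hH hg t) hx fun u hu => ?_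
    have h1 := le_rho hH hx hu
    have h2 : Real.exp (t * g u) ≤ Real.exp (t * G) :=
      Real.exp_le_exp.2 (mul_le_mul_of_nonneg_left ((le_abs_self _).trans (hg u)) ht)
    calc h u * Real.exp (t * g u) ≤ (rhoH n C h x * (-⟪x, u⟫)) * Real.exp (t * G) :=
          mul_le_mul h1 h2 (Real.exp_pos _).le ((hH.1 u hu).trans h1)
      _ = _ := by ring
  · rw [rho_of_notMem hx, rho_of_notMem hx, zero_mul]

lemma rho_pert_lower (hH : GoodH n C h) (hg : ∀ u, |g u| ≤ G) {t : ℝ} (ht : 0 ≤ t) (x : En n) :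
    rhoH n C h x * Real.exp (-(t * G)) ≤ rhoH n C (Hpert h g t) x := by
  by_cases hx : x ∈ interior C
  · rw [Real.exp_neg, ← div_eq_mul_inv, div_le_iff₀ (Real.exp_pos _)]
    refine rho_le hH hx fun u hu => ?_
    have h1 := le_rho (good_Hpert hH hg t) hx hu
    have h2 : 1 ≤ Real.exp (t * g u) * Real.exp (t * G) := by
      rw [← Real.exp_add]
      apply Real.one_le_exp
      have := neg_le_of_abs_le (hg u)
      nlinarith
    have h3 : h u * Real.exp (t * g u) * Real.exp (t * G) ≤
        rhoH n C (Hpert h g t) x * (-⟪x, u⟫) * Real.exp (t * G) :=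
      mul_le_mul_of_nonneg_right h1 (Real.exp_pos _).le
    have h4 := mul_le_mul_of_nonneg_left h2 (hH.1 u hu)
    nlinarith
  · rw [rho_of_notMem hx, rho_of_notMem hx, zero_mul]

/-- Pointwise asymptotic upper bound. -/
lemma rho_pert_ev (hH : GoodH n C h) (husc : UpperSemicontinuous h) (hgc : Continuous g)
    (hg : ∀ u, |g u| ≤ G) {x : En n} (hx : x ∈ interior C)
    (hM : ∀ u ∈ Uset n C, h u = rhoH n C h x * (-⟪x, u⟫) → u = alph n C h x)
    {ε : ℝ} (hε : 0 < ε) :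
    ∀ᶠ t in 𝓝[>] (0 : ℝ), rhoH n C (Hpert h g t) x ≤
      rhoH n C h x * Real.exp (t * (g (alph n C h x) + ε)) := by
  set β := g (alph n C h x) with hβ
  have hpos := rho_pos hH hx
  obtain ⟨r, hr0, hr, hS⟩ := rho_lt_of_compact hH husc hx (S := Uset n C ∩ {u | β + ε ≤ g u})
    inter_subset_left ((isCompact_Uset C).isClosed.inter (isClosed_le continuous_const hgc))
    (fun u hu he => by
      have := hM u hu.1 he
      have h2 : β + ε ≤ g u := hu.2
      rw [this] at h2
      linarith)
  have hcont : Tendsto (fun t : ℝ => rhoH n C h x * Real.exp (t * (β + ε)) - r * Real.exp (t * G))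
      (𝓝[>] 0) (𝓝 (rhoH n C h x - r)) := by
    have : Continuous fun t : ℝ => rhoH n C h x * Real.exp (t * (β + ε)) - r * Real.exp (t * G) := by
      fun_prop
    have := (this.tendsto 0).mono_left (nhdsWithin_le_nhds (s := Ioi 0))
    simpa using this
  filter_upwards [hcont.eventually (lt_mem_nhds (sub_pos.2 hr)), self_mem_nhdsWithin] with t h1 h2
  have ht : 0 < t := h2
  refine rho_le (good_Hpert hH hg t) hx fun u hu => ?_
  have hi := negInner_pos hx hu
  by_cases hc : β + ε ≤ g u
  · have e1 := hS u ⟨hu, hc⟩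
    have e2 : Real.exp (t * g u) ≤ Real.exp (t * G) :=
      Real.exp_le_exp.2 (mul_le_mul_of_nonneg_left ((le_abs_self _).trans (hg u)) ht.le)
    have e3 : h u * Real.exp (t * g u) ≤ (r * (-⟪x, u⟫)) * Real.exp (t * G) :=
      mul_le_mul e1 e2 (Real.exp_pos _).le ((hH.1 u hu).trans e1)
    refine e3.trans ?_
    nlinarith
  · have e1 := le_rho hH hx hu
    have e2 : Real.exp (t * g u) ≤ Real.exp (t * (β + ε)) :=
      Real.exp_le_exp.2 (mul_le_mul_of_nonneg_left (not_le.1 hc).le ht.le)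
    have e3 : h u * Real.exp (t * g u) ≤ (rhoH n C h x * (-⟪x, u⟫)) * Real.exp (t * (β + ε)) :=
      mul_le_mul e1 e2 (Real.exp_pos _).le ((hH.1 u hu).trans e1)
    refine e3.trans_eq (by ring)

lemma rho_pert_lower_pt (hH : GoodH n C h)
    (hg : ∀ u, |g u| ≤ G) {x : En n} (hx : x ∈ interior C) {v : En n} (hv : v ∈ Uset n C)
    (hM : h v = rhoH n C h x * (-⟪x, v⟫)) (t : ℝ) :
    rhoH n C h x * Real.exp (t * g v) ≤ rhoH n C (Hpert h g t) x := by
  have h1 := le_rho (good_Hpert hH hg t) hx hv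
  have hi := negInner_pos hx hv
  rw [Hpert, hM] at h1
  nlinarith

lemma tau_scale {a c T s : ℝ} (hT : 0 ≤ T) (e : s = T * Real.exp c) :
    s ^ a = T ^ a * Real.exp (a * c) := by
  rw [e, Real.mul_rpow hT (Real.exp_pos _).le, ← Real.exp_mul, mul_comm c a]

lemma exp_quot (c : ℝ) : Tendsto (fun t : ℝ => (Real.exp (t * c) - 1) / t) (𝓝[>] 0) (𝓝 c) := by
  have h1 : HasDerivAt (fun t : ℝ => Real.exp (t * c)) c 0 := by
    have := ((hasDerivAt_id (0 : ℝ)).mul_const c).exp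
    simpa using this
  have h2 := h1.tendsto_slope_zero_right
  refine h2.congr fun t => ?_
  simp [div_eq_inv_mul]

lemma tauA_nonneg (hH : GoodH n C h) (x : En n) : 0 ≤ tauA n C q h x :=
  Real.rpow_nonneg (mul_nonneg (norm_nonneg _) (rho_nonneg hH x)) _

lemma tauA_quot (hn : 2 ≤ n) (hC : IsGoodCone n C) (hq : q < n)
    (hH : GoodH n C h) (husc : UpperSemicontinuous h) (hgc : Continuous g)
    (hg : ∀ u, |g u| ≤ G) {x : En n} (hx : x ∈ interior C) (hv : alph n C h x ∈ Uset n C)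
    (hM : ∀ u ∈ Uset n C, h u = rhoH n C h x * (-⟪x, u⟫) ↔ u = alph n C h x) :
    Tendsto (fun t => (tauA n C q (Hpert h g t) x - tauA n C q h x) / t) (𝓝[>] 0)
      (𝓝 (((n : ℝ) - q) * g (alph n C h x) * tauA n C q h x)) := by
  have ha : 0 < (n : ℝ) - q := by linarith
  set a := (n : ℝ) - q with ha'
  set β := g (alph n C h x) with hβ
  have hxn : 0 < ‖x‖ := norm_pos_iff.2 (mem_C0 hn hC hx).2
  have hρ := rho_pos hH hx
  have hT0 : 0 < ‖x‖ * rhoH n C h x := by positivity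
  have hT : 0 < tauA n C q h x := Real.rpow_pos_of_pos hT0 _
  set T := tauA n C q h x with hTdef
  refine tendsto_order.2 ⟨fun c hc => ?_, fun c hc => ?_⟩
  · have h1 := (exp_quot (a * β)).mul_const T
    filter_upwards [h1.eventually (lt_mem_nhds hc), self_mem_nhdsWithin] with t h2 h3
    have ht : 0 < t := h3
    refine h2.trans_le ?_
    rw [div_mul_eq_mul_div]
    gcongr
    have h4 := rho_pert_lower_pt hH hg hx hv ((hM _ hv).2 rfl) t
    have h5 : T * Real.exp (t * (a * β)) ≤ tauA n C q (Hpert h g t) x := by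
      have e := tau_scale (a := a) (c := t * β) hT0.le rfl
      have : T * Real.exp (t * (a * β)) = (‖x‖ * rhoH n C h x * Real.exp (t * β)) ^ a := by
        rw [e, hTdef, tauA]; congr 2; ring
      rw [this, tauA]
      refine Real.rpow_le_rpow (by positivity) ?_ ha.le
      rw [mul_assoc]
      gcongr
    linarith
  · obtain ⟨ε, hε, hc'⟩ : ∃ ε > 0, a * (β + ε) * T < c := by
      refine ⟨(c - a * β * T) / (2 * (a * T)), div_pos (by linarith) (by positivity), ?_⟩
      have : a * (β + (c - a * β * T) / (2 * (a * T))) * T = (c + a * β * T) / 2 := by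
        field_simp; ring
      rw [this]; linarith
    have h1 := (exp_quot (a * (β + ε))).mul_const T
    filter_upwards [h1.eventually (gt_mem_nhds hc'), self_mem_nhdsWithin,
      rho_pert_ev hH husc hgc hg hx (fun u hu => (hM u hu).1) hε] with t h2 h3 h4
    have ht : 0 < t := h3
    refine lt_of_le_of_lt ?_ h2
    rw [div_mul_eq_mul_div]
    gcongr
    have h5 : tauA n C q (Hpert h g t) x ≤ T * Real.exp (t * (a * (β + ε))) := by
      have e := tau_scale (a := a) (c := t * (β + ε)) hT0.le rfl
      have : T * Real.exp (t * (a * (β + ε))) =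
          (‖x‖ * rhoH n C h x * Real.exp (t * (β + ε))) ^ a := by
        rw [e, hTdef, tauA]; congr 2; ring
      rw [this, tauA]
      refine Real.rpow_le_rpow (mul_nonneg hxn.le (rho_nonneg (good_Hpert hH hg t) x)) ?_ ha.le
      rw [mul_assoc]
      gcongr
    linarith

lemma tauA_bound (hq : q < n)
    (hH : GoodH n C h) (hg : ∀ u, |g u| ≤ G) {t : ℝ} (ht : 0 < t) (ht1 : t ≤ 1) (x : En n) :
    |(tauA n C q (Hpert h g t) x - tauA n C q h x) / t| ≤
      tauA n C q h x * (((n : ℝ) - q) * G * Real.exp (((n : ℝ) - q) * G)) := by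
  have ha : 0 < (n : ℝ) - q := by linarith
  set a := (n : ℝ) - q with ha'
  have hG : 0 ≤ G := (abs_nonneg _).trans (hg 0)
  have hT0 : 0 ≤ ‖x‖ * rhoH n C h x := mul_nonneg (norm_nonneg _) (rho_nonneg hH x)
  have hT : 0 ≤ tauA n C q h x := tauA_nonneg hH x
  have hup : tauA n C q (Hpert h g t) x ≤ tauA n C q h x * Real.exp (a * (t * G)) := by
    have e := tau_scale (a := a) (c := t * G) hT0 rfl
    rw [tauA, tauA, ← ha', ← e]
    refine Real.rpow_le_rpow (mul_nonneg (norm_nonneg _) (rho_nonneg (good_Hpert hH hg t) x)) ?_ ha.le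
    rw [mul_assoc]
    have := rho_pert_upper hH hg ht.le x
    gcongr
  have hlo : tauA n C q h x * Real.exp (a * -(t * G)) ≤ tauA n C q (Hpert h g t) x := by
    have e := tau_scale (a := a) (c := -(t * G)) hT0 rfl
    rw [tauA, tauA, ← ha', ← e]
    refine Real.rpow_le_rpow (by positivity) ?_ ha.le
    rw [mul_assoc]
    have := rho_pert_lower hH hg ht.le x
    gcongr
  set T := tauA n C q h x
  set y := a * (t * G) with hy
  have hy0 : 0 ≤ y := by positivity
  have hyle : y ≤ a * G := by
    rw [hy]; gcongr; nlinarith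
  have hexp : Real.exp y ≤ Real.exp (a * G) := Real.exp_le_exp.2 hyle
  have b1 : 1 - y ≤ Real.exp (-y) := by
    have := Real.add_one_le_exp (-y); linarith
  have b2 : Real.exp y - 1 ≤ y * Real.exp y := by
    have h3 : Real.exp (-y) * Real.exp y = 1 := by rw [← Real.exp_add]; simp
    have := mul_le_mul_of_nonneg_right b1 (Real.exp_pos y).le
    nlinarith
  have b3 : 1 ≤ Real.exp (a * G) := Real.one_le_exp (by positivity)
  have b4 : y * Real.exp y ≤ y * Real.exp (a * G) := by gcongr
  have b5 : y ≤ y * Real.exp (a * G) := le_mul_of_one_le_right hy0 b3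
  rw [abs_div, abs_of_pos ht, div_le_iff₀ ht]
  have e1 : T * (a * G * Real.exp (a * G)) * t = T * (y * Real.exp (a * G)) := by
    rw [hy]; ring
  rw [e1, abs_le]
  rw [mul_neg, ← hy] at hlo
  constructor
  · have := mul_le_mul_of_nonneg_left (b1) hT
    have := mul_le_mul_of_nonneg_left (b5) hT
    nlinarith
  · have := mul_le_mul_of_nonneg_left (b2.trans b4) hT
    nlinarith

lemma measurable_tauA (hH : GoodH n C h) : Measurable (tauA n C q h) :=
  (measurable_norm.mul (measurable_rho hH)).pow_const _

lemma muT_WH_compl' (hn : 2 ≤ n) (hC : IsGoodCone n C) (hΘ : IsThetaWeight n C q Θ)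
    (hq : q < n) (hH : GoodH n C h) :
    (muT n C Θ (WH n C h)ᶜ).toReal = ∫ x, tauA n C q h x ∂(muB n C Θ) := by
  rw [muT_WH_compl hn hC hΘ hq hH, integral_eq_lintegral_of_nonneg_ae
    (Eventually.of_forall (tauA_nonneg hH)) (measurable_tauA hH).aestronglyMeasurable]
  rfl

lemma integrable_tauA (hn : 2 ≤ n) (hC : IsGoodCone n C) (hΘ : IsThetaWeight n C q Θ)
    (hq : q < n) (hH : GoodH n C h) (hfin : muT n C Θ (WH n C h)ᶜ ≠ ∞) :
    Integrable (tauA n C q h) (muB n C Θ) := by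
  refine ⟨(measurable_tauA hH).aestronglyMeasurable, ?_⟩
  rw [hasFiniteIntegral_iff_ofReal (Eventually.of_forall (tauA_nonneg hH))]
  rw [muT_WH_compl hn hC hΘ hq hH] at hfin
  exact lt_top_iff_ne_top.2 hfin

lemma tauA_pert_upper (hq : q < n) (hH : GoodH n C h) (hg : ∀ u, |g u| ≤ G) {t : ℝ}
    (ht : 0 ≤ t) (x : En n) :
    tauA n C q (Hpert h g t) x ≤ tauA n C q h x * Real.exp (((n : ℝ) - q) * (t * G)) := by
  have ha : 0 < (n : ℝ) - q := by linarith
  have hT0 : 0 ≤ ‖x‖ * rhoH n C h x := mul_nonneg (norm_nonneg _) (rho_nonneg hH x)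
  have e := tau_scale (a := (n : ℝ) - q) (c := t * G) hT0 rfl
  rw [tauA, tauA, ← e]
  refine Real.rpow_le_rpow (mul_nonneg (norm_nonneg _) (rho_nonneg (good_Hpert hH hg t) x)) ?_ ha.le
  rw [mul_assoc]
  have := rho_pert_upper hH hg ht x
  gcongr

lemma integrable_tauA_pert (hn : 2 ≤ n) (hC : IsGoodCone n C) (hΘ : IsThetaWeight n C q Θ)
    (hq : q < n) (hH : GoodH n C h) (hfin : muT n C Θ (WH n C h)ᶜ ≠ ∞)
    (hg : ∀ u, |g u| ≤ G) {t : ℝ} (ht : 0 ≤ t) :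
    Integrable (tauA n C q (Hpert h g t)) (muB n C Θ) := by
  refine ((integrable_tauA hn hC hΘ hq hH hfin).mul_const
    (Real.exp (((n : ℝ) - q) * (t * G)))).mono'
    (measurable_tauA (good_Hpert hH hg t)).aestronglyMeasurable (Eventually.of_forall fun x => ?_)
  rw [Real.norm_of_nonneg (tauA_nonneg (good_Hpert hH hg t) x)]
  exact tauA_pert_upper hq hH hg ht x

lemma muT_pert_finite (hn : 2 ≤ n) (hC : IsGoodCone n C) (hΘ : IsThetaWeight n C q Θ)
    (hq : q < n) (hH : GoodH n C h) (hfin : muT n C Θ (WH n C h)ᶜ ≠ ∞)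
    (hg : ∀ u, |g u| ≤ G) {t : ℝ} (ht : 0 ≤ t) :
    muT n C Θ (WH n C (Hpert h g t))ᶜ ≠ ∞ := by
  have := (integrable_tauA_pert hn hC hΘ hq hH hfin hg ht).2
  rw [hasFiniteIntegral_iff_ofReal (Eventually.of_forall (tauA_nonneg (good_Hpert hH hg t)))] at this
  rw [muT_WH_compl hn hC hΘ hq (good_Hpert hH hg t)]
  exact this.ne

/-- The first variation of the weighted co-volume. -/
lemma variation (hn : 2 ≤ n) (hC : IsGoodCone n C) (hΘ : IsThetaWeight n C q Θ)
    (hq : q < n) (hH : GoodH n C h) (husc : UpperSemicontinuous h)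
    (hfin : muT n C Θ (WH n C h)ᶜ ≠ ∞) (hgc : Continuous g) (hg : ∀ u, |g u| ≤ G) :
    Tendsto (fun t => ((muT n C Θ (WH n C (Hpert h g t))ᶜ).toReal -
      (muT n C Θ (WH n C h)ᶜ).toReal) / t) (𝓝[>] 0)
      (𝓝 (∫ x, ((n : ℝ) - q) * g (alph n C h x) * tauA n C q h x ∂(muB n C Θ))) := by
  have h_int := integrable_tauA hn hC hΘ hq hH hfin
  have h1 : Tendsto (fun t => ∫ x, (tauA n C q (Hpert h g t) x - tauA n C q h x) / t ∂(muB n C Θ))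
      (𝓝[>] 0) (𝓝 (∫ x, ((n : ℝ) - q) * g (alph n C h x) * tauA n C q h x ∂(muB n C Θ))) := by
    refine tendsto_integral_filter_of_dominated_convergence
      (fun x => tauA n C q h x * (((n : ℝ) - q) * G * Real.exp (((n : ℝ) - q) * G))) ?_ ?_ ?_ ?_
    · refine Eventually.of_forall fun t => Measurable.aestronglyMeasurable ?_
      exact ((measurable_tauA (good_Hpert hH hg t)).sub (measurable_tauA hH)).div_const t
    · have : Ioc (0 : ℝ) 1 ∈ 𝓝[>] (0 : ℝ) := Ioc_mem_nhdsGT one_pos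
      filter_upwards [this] with t ht
      exact Eventually.of_forall fun x => tauA_bound hq hH hg ht.1 ht.2 x
    · exact h_int.mul_const _
    · have h2 : ∀ᵐ x ∂(muB n C Θ), x ∈ interior C → alph n C h x ∈ Uset n C ∧
          ∀ u ∈ Uset n C, h u = rhoH n C h x * (-⟪x, u⟫) ↔ u = alph n C h x :=
        ae_restrict_of_ae (muT_ac.ae_le (ae_alph hC hH husc))
      filter_upwards [h2, ae_muB_interior] with x hx hxi
      exact tauA_quot hn hC hq hH husc hgc hg hxi (hx hxi).1 (hx hxi).2
  refine h1.congr' ?_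
  filter_upwards [self_mem_nhdsWithin] with t ht
  rw [muT_WH_compl' hn hC hΘ hq hH, muT_WH_compl' hn hC hΘ hq (good_Hpert hH hg t),
    integral_div, integral_sub (integrable_tauA_pert hn hC hΘ hq hH hfin hg (le_of_lt ht)) h_int]

end

lemma kuratowski {n : ℕ} (K : ℕ → Set (En n)) (R : ℝ)
    (hne : ∀ j, (K j ∩ Metric.ball 0 R).Nonempty) :
    ∃ σ : ℕ → ℕ, StrictMono σ ∧ ∃ L : Set (En n), L.Nonempty ∧
      (∀ x ∉ L, ∀ᶠ j in atTop, x ∉ K (σ j)) ∧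
      ∀ x ∈ L, Tendsto (fun j => Metric.infDist x (K (σ j))) atTop (𝓝 0) := by
  choose y hy using hne
  have hKne : ∀ j, (K j).Nonempty := fun j => ⟨y j, (hy j).1⟩
  have hyR : ∀ j, ‖y j‖ < R := fun j => by simpa using (hy j).2
  have hbd : ∀ j x, Metric.infDist x (K j) ≤ ‖x‖ + R := by
    intro j x
    refine (Metric.infDist_le_dist_of_mem (hy j).1).trans ?_
    rw [dist_eq_norm]
    exact (norm_sub_le _ _).trans (by linarith [hyR j])
  let p : ℕ → En n := TopologicalSpace.denseSeq (En n)
  have hcomp : IsCompact (Set.pi univ fun i : ℕ => Icc (0 : ℝ) (‖p i‖ + R)) :=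
    isCompact_univ_pi fun i => isCompact_Icc
  obtain ⟨f, -, σ, hσ, hf⟩ := hcomp.isSeqCompact
    (x := fun j i => Metric.infDist (p i) (K j))
    (fun j i _ => ⟨Metric.infDist_nonneg, hbd j (p i)⟩)
  have hf' : ∀ i, Tendsto (fun j => Metric.infDist (p i) (K (σ j))) atTop (𝓝 (f i)) :=
    fun i => (tendsto_pi_nhds.1 hf) i
  have hlim : ∀ x, ∃ l, Tendsto (fun j => Metric.infDist x (K (σ j))) atTop (𝓝 l) := by
    intro x
    refine cauchySeq_tendsto_of_complete ?_
    rw [Metric.cauchySeq_iff']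
    intro ε hε
    obtain ⟨i, hi⟩ := (TopologicalSpace.denseRange_denseSeq (En n)).exists_dist_lt x
      (show 0 < ε / 4 by linarith)
    obtain ⟨N, hN⟩ := Metric.cauchySeq_iff'.1 (hf' i).cauchySeq (ε / 4) (by linarith)
    refine ⟨N, fun j hj => ?_⟩
    have h1 := hN j hj
    have e : ∀ k, |Metric.infDist x (K k) - Metric.infDist (p i) (K k)| ≤ ε / 4 := by
      intro k
      have := (Metric.lipschitz_infDist_pt (K k)).dist_le_mul x (p i)
      rw [Real.dist_eq, NNReal.coe_one, one_mul] at this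
      exact this.trans hi.le
    have e1 := abs_le.1 (e (σ j))
    have e2 := abs_le.1 (e (σ N))
    rw [Real.dist_eq, abs_lt] at h1 ⊢
    constructor <;> linarith [h1.1, h1.2, e1.1, e1.2, e2.1, e2.2]
  refine ⟨σ, hσ, {x | Tendsto (fun j => Metric.infDist x (K (σ j))) atTop (𝓝 0)}, ?_, ?_, ?_⟩
  · obtain ⟨x, -, τ, hτ, hx⟩ := tendsto_subseq_of_bounded (Metric.isBounded_ball (x := (0 : En n)) (r := R))
      (x := fun j => y (σ j)) (fun j => (hy (σ j)).2)
    obtain ⟨l, hl⟩ := hlim x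
    refine ⟨x, ?_⟩
    have h1 : Tendsto (fun j => Metric.infDist x (K (σ (τ j)))) atTop (𝓝 0) := by
      have h2 : Tendsto (fun j => dist x (y (σ (τ j)))) atTop (𝓝 0) := by
        have := (tendsto_const_nhds (x := x)).dist hx
        simpa using this
      exact squeeze_zero (fun _ => Metric.infDist_nonneg)
        (fun j => Metric.infDist_le_dist_of_mem (hy (σ (τ j))).1) h2
    have h3 := tendsto_nhds_unique (hl.comp hτ.tendsto_atTop) h1
    rw [h3] at hl
    exact hl
  · intro x hx
    obtain ⟨l, hl⟩ := hlim x
    have hl0 : 0 ≤ l := ge_of_tendsto' hl fun _ => Metric.infDist_nonneg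
    have hl1 : l ≠ 0 := by
      rintro rfl
      exact hx hl
    filter_upwards [hl.eventually (lt_mem_nhds (lt_of_le_of_ne hl0 hl1.symm))] with j hj hm
    rw [Metric.infDist_zero_of_mem hm] at hj
    exact lt_irrefl _ hj
  · exact fun x hx => hx

open Classical in
/-- Cost function `log R - log t`, infinite for `t ≤ 0`. -/
def psi (R t : ℝ) : ℝ≥0∞ := if t ≤ 0 then ∞ else ENNReal.ofReal (Real.log R - Real.log t)

lemma lt_psi_iff {R : ℝ} (hR : 0 < R) {c : ℝ≥0∞} (hc : c ≠ ∞) (t : ℝ) :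
    c < psi R t ↔ t < R * Real.exp (-c.toReal) := by
  rw [psi]
  split_ifs with h
  · simp only [lt_top_iff_ne_top, ne_eq, hc, not_false_eq_true, true_iff]
    exact h.trans_lt (by positivity)
  · push Not at h
    rw [ENNReal.lt_ofReal_iff_toReal_lt hc, lt_sub_comm, Real.log_lt_iff_lt_exp h,
      sub_eq_add_neg, Real.exp_add, Real.exp_log hR]

lemma psi_antitone {R : ℝ} (hR : 0 < R) : Antitone (psi R) := by
  intro s t hst
  refine le_of_forall_lt fun c hc => ?_
  have hc' : c ≠ ∞ := (hc.trans_le le_top).ne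
  rw [lt_psi_iff hR hc'] at hc ⊢
  exact hst.trans_lt hc

lemma psi_of_pos {R t : ℝ} (ht : 0 < t) :
    psi R t = ENNReal.ofReal (Real.log R - Real.log t) := by
  rw [psi, if_neg (not_le.2 ht)]

/-- The class of competitors. -/
def Cls (n : ℕ) (C : Set (En n)) (Θ : En n → ℝ) (m : ℝ≥0∞) : Set (Set (En n)) :=
  {K | K.Nonempty ∧ K ⊆ C ∧ muT n C Θ Kᶜ ≤ m}

/-- The functional. -/
def Ifun {n : ℕ} (φ : Measure (En n)) (R : ℝ) (K : Set (En n)) : ℝ≥0∞ :=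
  ∫⁻ u, psi R (hK K u) ∂φ

section
variable {n : ℕ} {C : Set (En n)} {q : ℝ} {Θ : En n → ℝ} {φ : Measure (En n)} {R : ℝ} {m : ℝ≥0∞}

lemma measurable_hK (K : Set (En n)) : Measurable (hK K) := (hK_usc K).measurable

lemma measurable_psi_hK (hR : 0 < R) (K : Set (En n)) : Measurable fun u => psi R (hK K u) :=
  (psi_antitone hR).measurable.comp (measurable_hK K)

lemma cls_meets (hR : m < muT n C Θ (Metric.ball 0 R)) {K : Set (En n)} (hK' : K ∈ Cls n C Θ m) :
    (K ∩ Metric.ball 0 R).Nonempty := by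
  by_contra hcon
  have : Metric.ball 0 R ⊆ Kᶜ := by
    intro x hx hxK
    exact hcon ⟨x, hxK, hx⟩
  exact absurd ((measure_mono this).trans hK'.2.2) (not_le.2 hR)

lemma cls_hK_le (hR : m < muT n C Θ (Metric.ball 0 R)) {K : Set (En n)} (hK' : K ∈ Cls n C Θ m)
    {u : En n} (hu : u ∈ Uset n C) : hK K u ≤ R := by
  obtain ⟨y, hy, hyR⟩ := cls_meets hR hK'
  refine (hK_le_of_mem hK'.2.1 hy hu).trans ?_
  have := abs_real_inner_le_norm y u
  rw [norm_of_mem_Uset hu, mul_one] at this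
  have h2 : ‖y‖ < R := by simpa using hyR
  linarith [neg_abs_le ⟪y, u⟫]

lemma hK_le_infDist {K : Set (En n)} (hne : K.Nonempty) (hKC : K ⊆ C) {y u : En n}
    (hu : u ∈ Uset n C) : hK K u ≤ -⟪y, u⟫ + Metric.infDist y K := by
  have : hK K u + ⟪y, u⟫ ≤ Metric.infDist y K := by
    rw [Metric.le_infDist hne]
    intro z hz
    have h1 := hK_le_of_mem hKC hz hu
    have h2 := abs_real_inner_le_norm (y - z) u
    rw [norm_of_mem_Uset hu, mul_one, inner_sub_left, ← dist_eq_norm] at h2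
    linarith [le_abs_self (⟪y, u⟫ - ⟪z, u⟫)]
  linarith

lemma exists_minimizer (hC : IsGoodCone n C) (hR0 : 0 < R)
    (hR : m < muT n C Θ (Metric.ball 0 R)) (hφ : ∀ᵐ u ∂φ, u ∈ Uset n C)
    {K0 : Set (En n)} (hK0 : K0 ∈ Cls n C Θ m) :
    ∃ K ∈ Cls n C Θ m, ∀ K' ∈ Cls n C Θ m, Ifun φ R K ≤ Ifun φ R K' := by
  obtain ⟨v, -, hv, hvm⟩ := exists_seq_tendsto_sInf (S := Ifun φ R '' Cls n C Θ m)
    ⟨_, K0, hK0, rfl⟩ (OrderBot.bddBelow _)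
  choose K hKc hKv using hvm
  obtain ⟨σ, hσ, L, hLne, hL1, hL2⟩ := kuratowski K R fun j => cls_meets hR (hKc j)
  have hLC : L ⊆ C := by
    intro x hx
    have hCne : C.Nonempty := ⟨_, (hKc 0).2.1 (hKc 0).1.some_mem⟩
    rw [hC.1.mem_iff_infDist_zero hCne]
    refine le_antisymm ?_ Metric.infDist_nonneg
    refine ge_of_tendsto' (hL2 x hx) fun j => ?_
    exact Metric.infDist_le_infDist_of_subset (hKc _).2.1 (hKc _).1
  have hLm : muT n C Θ Lᶜ ≤ m := by
    have hsub : Lᶜ ⊆ ⋃ N : ℕ, ⋂ j ≥ N, (K (σ j))ᶜ := by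
      intro x hx
      obtain ⟨N, hN⟩ := eventually_atTop.1 (hL1 x hx)
      exact mem_iUnion.2 ⟨N, mem_iInter₂.2 hN⟩
    refine (measure_mono hsub).trans ?_
    have hmono : Monotone fun N : ℕ => ⋂ j ≥ N, (K (σ j))ᶜ := by
      intro a b hab x hx
      exact mem_iInter₂.2 fun j hj => mem_iInter₂.1 hx j (le_trans hab hj)
    rw [hmono.measure_iUnion]
    refine iSup_le fun N => ?_
    exact (measure_mono (iInter₂_subset N le_rfl)).trans (hKc (σ N)).2.2
  refine ⟨L, ⟨hLne, hLC, hLm⟩, fun K' hK' => ?_⟩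
  have h1 : Ifun φ R L ≤ sInf (Ifun φ R '' Cls n C Θ m) := by
    have hv' : Tendsto (fun j => Ifun φ R (K (σ j))) atTop (𝓝 (sInf (Ifun φ R '' Cls n C Θ m))) := by
      refine (hv.comp hσ.tendsto_atTop).congr fun j => (hKv (σ j)).symm
    rw [← hv'.liminf_eq]
    refine le_trans ?_ (lintegral_liminf_le fun j => measurable_psi_hK hR0 (K (σ j)))
    refine lintegral_mono_ae ?_
    filter_upwards [hφ] with u hu
    refine le_of_forall_lt fun c hc => ?_
    obtain ⟨c', hcc', hc'⟩ := exists_between hc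
    refine hcc'.trans_le ?_
    have hct : c' ≠ ∞ := (hc'.trans_le le_top).ne
    refine le_liminf_of_le (by isBoundedDefault) ?_
    rw [lt_psi_iff hR0 hct] at hc'
    haveI : Nonempty L := hLne.to_subtype
    obtain ⟨⟨y, hy⟩, hyu⟩ := exists_lt_of_ciInf_lt hc'
    rw [max_eq_right (negInner_nonneg (hLC hy) hu)] at hyu
    have hlim : Tendsto (fun j => -⟪y, u⟫ + Metric.infDist y (K (σ j))) atTop (𝓝 (-⟪y, u⟫ + 0)) :=
      (hL2 y hy).const_add _
    rw [add_zero] at hlim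
    filter_upwards [hlim.eventually (gt_mem_nhds hyu)] with j hj
    refine le_of_lt ?_
    rw [lt_psi_iff hR0 hct]
    exact (hK_le_infDist (hKc _).1 (hKc _).2.1 hu).trans_lt hj
  exact h1.trans (sInf_le ⟨K', hK', rfl⟩)

end

section
variable {n : ℕ} {C : Set (En n)} {q : ℝ} {Θ : En n → ℝ} {φ : Measure (En n)} {R : ℝ} {m : ℝ≥0∞}
  {g : En n → ℝ} {G : ℝ}

lemma smul_compl' {s : ℝ} (hs : 0 < s) (K : Set (En n)) : (s • K)ᶜ = s • Kᶜ := by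
  ext x
  simp [mem_smul_set_iff_inv_smul_mem₀ hs.ne']

lemma muT_scale (hn : 2 ≤ n) (hC : IsGoodCone n C) (hΘ : IsThetaWeight n C q Θ) (hq : q < n)
    {A : Set (En n)} (hA : MeasurableSet A) (h0 : 0 < muT n C Θ A) (hfin : muT n C Θ A ≠ ∞)
    {M : ℝ} (hM : 0 < M) :
    muT n C Θ (((M / (muT n C Θ A).toReal) ^ (((n : ℝ) - q)⁻¹)) • A) = ENNReal.ofReal M := by
  have ha : 0 < (n : ℝ) - q := by linarith
  have hv : 0 < (muT n C Θ A).toReal := ENNReal.toReal_pos h0.ne' hfin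
  rw [muT_smul hn hC hΘ (Real.rpow_pos_of_pos (div_pos hM hv) _) hA,
    ← Real.rpow_mul (div_pos hM hv).le, inv_mul_cancel₀ ha.ne', Real.rpow_one]
  nth_rewrite 2 [← ENNReal.ofReal_toReal hfin]
  rw [← ENNReal.ofReal_mul (div_pos hM hv).le, div_mul_cancel₀ _ hv.ne']

lemma exists_R (hn : 2 ≤ n) (hC : IsGoodCone n C) (hΘ : IsThetaWeight n C q Θ) (hq : q < n)
    (hq0 : 0 < q) (hm : m ≠ ∞) : ∃ R, 0 < R ∧ m < muT n C Θ (Metric.ball 0 R) := by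
  have h1 := muT_ball_lt_top hn hC hΘ hq hq0
  have h2 := muT_ball_pos hn hC hΘ (one_pos)
  have hv := ENNReal.toReal_pos h2.ne' h1.ne
  have hM : 0 < m.toReal + 1 := by positivity
  have h3 := muT_scale hn hC hΘ hq Metric.isOpen_ball.measurableSet h2 h1.ne hM
  have hpos := Real.rpow_pos_of_pos (div_pos hM hv) (((n : ℝ) - q)⁻¹)
  refine ⟨_, hpos, ?_⟩
  rw [smul_unitBall_of_pos hpos] at h3
  rw [h3, ENNReal.lt_ofReal_iff_toReal_lt hm]
  linarith

lemma exists_competitor (hn : 2 ≤ n) (hC : IsGoodCone n C) (hΘ : IsThetaWeight n C q Θ)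
    (hq1 : (n : ℝ) - 1 < q) (hq : q < n) (hm0 : m ≠ 0) (hm : m ≠ ∞) (hR : 0 < R)
    (hU : (Uset n C).Nonempty) [IsFiniteMeasure φ] (hφ : ∀ᵐ u ∂φ, u ∈ Uset n C) :
    ∃ K ∈ Cls n C Θ m, Ifun φ R K ≠ ∞ := by
  obtain ⟨z, hz⟩ := hC.2.2.2.2
  obtain ⟨δ, hδ, hlow⟩ := negInner_lower hz
  obtain ⟨u0, hu0⟩ := hU
  set A : Set (En n) := {x | x - z ∉ C} with hA
  have hAo : IsOpen A := by
    have : IsClosed {x : En n | x - z ∈ C} := hC.1.preimage (by fun_prop : Continuous fun x : En n => x - z)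
    exact this.isOpen_compl
  have hfin := (muT_translate_lt_top hn hC hΘ hq1 hq hz).ne
  have hpos : 0 < muT n C Θ A := by
    refine (muT_ball_pos hn hC hΘ hδ).trans_le (measure_mono fun x hx hxz => ?_)
    have h1 := negInner_nonneg hxz hu0
    have h2 := hlow u0 hu0
    have h3 := abs_real_inner_le_norm x u0
    rw [norm_of_mem_Uset hu0, mul_one] at h3
    have h4 : ‖x‖ < δ := by simpa using hx
    rw [inner_sub_left] at h1
    linarith [neg_abs_le ⟪x, u0⟫]
  have hM : 0 < m.toReal := ENNReal.toReal_pos hm0 hm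
  have h3 := muT_scale hn hC hΘ hq hAo.measurableSet hpos hfin hM
  have hs := Real.rpow_pos_of_pos (div_pos hM (ENNReal.toReal_pos hpos.ne' hfin)) (((n : ℝ) - q)⁻¹)
  set s := (m.toReal / (muT n C Θ A).toReal) ^ (((n : ℝ) - q)⁻¹) with hsdef
  have hAc : (s • Aᶜ)ᶜ = s • A := by rw [smul_compl' hs, compl_compl]
  have hAcC : ∀ x ∈ Aᶜ, x - z ∈ C := fun x hx => not_not.1 hx
  have hne : (s • Aᶜ).Nonempty := by
    refine Set.Nonempty.smul_set ⟨z + z, ?_⟩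
    simp only [hA, mem_compl_iff, mem_ofPred_eq, not_not, add_sub_cancel_right]
    exact interior_subset hz
  refine ⟨s • Aᶜ, ⟨hne, ?_, ?_⟩, ?_⟩
  · rintro _ ⟨x, hx, rfl⟩
    have := cone_add hC (hAcC x hx) (interior_subset hz)
    rw [sub_add_cancel] at this
    exact hC.2.2.1 x this s hs.le
  · rw [hAc, h3, ENNReal.ofReal_toReal hm]
  · have hb : ∀ᵐ u ∂φ, psi R (hK (s • Aᶜ) u) ≤ psi R (s * δ) := by
      filter_upwards [hφ] with u hu
      refine psi_antitone hR (le_hK hne ?_)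
      rintro _ ⟨x, hx, rfl⟩
      refine le_max_of_le_right ?_
      change s * δ ≤ -⟪s • x, u⟫
      have h1 := negInner_nonneg (hAcC x hx) hu
      have h2 := hlow u hu
      rw [inner_sub_left] at h1
      rw [real_inner_smul_left, ← mul_neg]
      gcongr
      linarith
    refine ne_of_lt ((lintegral_mono_ae hb).trans_lt ?_)
    rw [lintegral_const, psi_of_pos (by positivity)]
    exact ENNReal.mul_lt_top ENNReal.ofReal_lt_top (measure_lt_top _ _)

lemma hK_pos_ae {K : Set (En n)} (hR0 : 0 < R) (hI : Ifun φ R K ≠ ∞) : ∀ᵐ u ∂φ, 0 < hK K u := by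
  filter_upwards [ae_lt_top (measurable_psi_hK hR0 K) hI] with u hu
  by_contra h
  rw [psi, if_pos (not_lt.1 h)] at hu
  exact lt_irrefl _ hu

lemma good_hK (hφ0 : φ ≠ 0) (hR0 : 0 < R) (hR : m < muT n C Θ (Metric.ball 0 R))
    (hφ : ∀ᵐ u ∂φ, u ∈ Uset n C) {K : Set (En n)} (hKc : K ∈ Cls n C Θ m)
    (hI : Ifun φ R K ≠ ∞) : GoodH n C (hK K) := by
  refine ⟨fun u _ => hK_nonneg K u, ⟨R, fun u hu => cls_hK_le hR hKc hu⟩, ?_⟩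
  haveI : (ae φ).NeBot := ae_neBot.2 hφ0
  obtain ⟨u, h1, h2⟩ := ((hK_pos_ae hR0 hI).and hφ).exists
  exact ⟨u, h2, h1⟩

lemma EL_step (hn : 2 ≤ n) (hC : IsGoodCone n C) (hΘ : IsThetaWeight n C q Θ)
    (hq : q < n) [IsFiniteMeasure φ] (hφ0 : φ ≠ 0) (hφ : ∀ᵐ u ∂φ, u ∈ Uset n C)
    (hR0 : 0 < R) (hR : φ univ < muT n C Θ (Metric.ball 0 R)) {K : Set (En n)}
    (hKc : K ∈ Cls n C Θ (φ univ)) (hI : Ifun φ R K ≠ ∞)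
    (hmin : ∀ K' ∈ Cls n C Θ (φ univ), Ifun φ R K ≤ Ifun φ R K')
    (hgc : Continuous g) (hg : ∀ u, |g u| ≤ G) {t : ℝ} (ht : 0 < t) :
    ∫ u, g u ∂φ ≤ ((n : ℝ) - q)⁻¹ * (((muT n C Θ (WH n C (Hpert (hK K) g t))ᶜ).toReal -
      (muT n C Θ (WH n C (hK K))ᶜ).toReal) / t) := by
  have ha : 0 < (n : ℝ) - q := by linarith
  set a := (n : ℝ) - q with hadef
  have hgood := good_hK hφ0 hR0 hR hφ hKc hI
  have hmt : φ univ ≠ ∞ := measure_ne_top _ _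
  have hm0 : φ univ ≠ 0 := by simpa using hφ0
  have hM : 0 < (φ univ).toReal := ENNReal.toReal_pos hm0 hmt
  have hV0le : muT n C Θ (WH n C (hK K))ᶜ ≤ φ univ :=
    (measure_mono (compl_subset_compl.2 (subset_WH hKc.2.1))).trans hKc.2.2
  have hfin0 : muT n C Θ (WH n C (hK K))ᶜ ≠ ∞ := ne_top_of_le_ne_top hmt hV0le
  have hfin := muT_pert_finite hn hC hΘ hq hgood hfin0 hg ht.le
  set H := Hpert (hK K) g t with hHdef
  have hgH : GoodH n C H := good_Hpert hgood hg t
  have hpos : 0 < muT n C Θ (WH n C H)ᶜ := by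
    obtain ⟨u0, hu0, hp⟩ := hgH.2.2
    refine (muT_ball_pos hn hC hΘ hp).trans_le (measure_mono fun x hx hxW => ?_)
    have h1 := hxW.2 u0 hu0
    have h3 := abs_real_inner_le_norm x u0
    rw [norm_of_mem_Uset hu0, mul_one] at h3
    have h4 : ‖x‖ < H u0 := by simpa using hx
    linarith [neg_abs_le ⟪x, u0⟫]
  have hV : 0 < (muT n C Θ (WH n C H)ᶜ).toReal := ENNReal.toReal_pos hpos.ne' hfin
  have hscale := muT_scale hn hC hΘ hq (isClosed_WH hC (H := H)).isOpen_compl.measurableSet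
    hpos hfin hM
  have hs := Real.rpow_pos_of_pos (div_pos hM hV) (((n : ℝ) - q)⁻¹)
  have hlogs : Real.log (((φ univ).toReal / (muT n C Θ (WH n C H)ᶜ).toReal) ^ (((n : ℝ) - q)⁻¹)) =
      a⁻¹ * (Real.log ((φ univ).toReal / (muT n C Θ (WH n C H)ᶜ).toReal)) :=
    Real.log_rpow (div_pos hM hV) _
  set V := (muT n C Θ (WH n C H)ᶜ).toReal with hVdef
  set M := (φ univ).toReal with hMdef
  set s := (M / V) ^ (((n : ℝ) - q)⁻¹) with hsdef
  rw [ENNReal.ofReal_toReal hmt, ← smul_compl' hs] at hscale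
  have hWne : (WH n C H).Nonempty := by
    obtain ⟨y, hy⟩ := hKc.1
    refine ⟨Real.exp (t * G) • y, hC.2.2.1 y (hKc.2.1 hy) _ (Real.exp_pos _).le, fun u hu => ?_⟩
    have h1 := hK_le_of_mem hKc.2.1 hy hu
    have h2 : Real.exp (t * g u) ≤ Real.exp (t * G) :=
      Real.exp_le_exp.2 (mul_le_mul_of_nonneg_left ((le_abs_self _).trans (hg u)) ht.le)
    rw [real_inner_smul_left, ← mul_neg, mul_comm]
    exact mul_le_mul h1 h2 (Real.exp_pos _).le ((hK_nonneg K u).trans h1)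
  have hcls : s • WH n C H ∈ Cls n C Θ (φ univ) := by
    refine ⟨hWne.smul_set, ?_, hscale.le⟩
    rintro _ ⟨x, hx, rfl⟩
    exact hC.2.2.1 x hx.1 s hs.le
  have hlow : ∀ u ∈ Uset n C, s * H u ≤ hK (s • WH n C H) u := by
    intro u hu
    refine le_hK hWne.smul_set ?_
    rintro _ ⟨x, hx, rfl⟩
    refine le_max_of_le_right ?_
    change s * H u ≤ -⟪s • x, u⟫
    rw [real_inner_smul_left, ← mul_neg]
    exact mul_le_mul_of_nonneg_left (hx.2 u hu) hs.le
  have hle := hmin _ hcls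
  -- real-valued comparison
  set f : En n → ℝ := fun u => Real.log R - Real.log (hK K u) with hf
  have hfm : Measurable f := measurable_const.sub (Real.measurable_log.comp (measurable_hK K))
  have hpos_ae := hK_pos_ae hR0 hI
  have hf0 : 0 ≤ᵐ[φ] f := by
    filter_upwards [hpos_ae, hφ] with u h1 hu
    exact sub_nonneg.2 (Real.log_le_log h1 (cls_hK_le hR hKc hu))
  have e1 : Ifun φ R K = ∫⁻ u, ENNReal.ofReal (f u) ∂φ := by
    refine lintegral_congr_ae ?_
    filter_upwards [hpos_ae] with u h1
    exact psi_of_pos h1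
  have hfint : Integrable f φ := by
    refine ⟨hfm.aestronglyMeasurable, ?_⟩
    rw [hasFiniteIntegral_iff_ofReal hf0, ← e1]
    exact lt_top_iff_ne_top.2 hI
  have hgint : Integrable g φ :=
    (integrable_const G).mono' hgc.aestronglyMeasurable (Eventually.of_forall fun u => hg u)
  have hf2int : Integrable (fun u => f u - Real.log s - t * g u) φ :=
    (hfint.sub (integrable_const _)).sub (hgint.const_mul t)
  have hkey : ∀ᵐ u ∂φ, psi R (hK (s • WH n C H) u) ≤ ENNReal.ofReal (f u - Real.log s - t * g u) ∧
      0 ≤ f u - Real.log s - t * g u := by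
    filter_upwards [hpos_ae, hφ] with u h1 hu
    have h2 := hlow u hu
    have h3 : 0 < s * H u := mul_pos hs (mul_pos h1 (Real.exp_pos _))
    have e : Real.log R - Real.log (s * H u) = f u - Real.log s - t * g u := by
      have hHu : H u = hK K u * Real.exp (t * g u) := rfl
      rw [hHu, Real.log_mul hs.ne' (mul_pos h1 (Real.exp_pos _)).ne',
        Real.log_mul h1.ne' (Real.exp_pos _).ne', Real.log_exp]
      simp only [hf]; ring
    constructor
    · rw [← e, ← psi_of_pos h3]
      exact psi_antitone hR0 h2
    · rw [← e, sub_nonneg]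
      exact Real.log_le_log h3 (h2.trans (cls_hK_le hR hcls hu))
  have hcmp : ∫ u, f u ∂φ ≤ ∫ u, (f u - Real.log s - t * g u) ∂φ := by
    have h1 : ENNReal.ofReal (∫ u, f u ∂φ) ≤ ENNReal.ofReal (∫ u, (f u - Real.log s - t * g u) ∂φ) := by
      rw [ofReal_integral_eq_lintegral_ofReal hfint hf0,
        ofReal_integral_eq_lintegral_ofReal hf2int (hkey.mono fun u hu => hu.2), ← e1]
      exact hle.trans (lintegral_mono_ae (hkey.mono fun u hu => hu.1))
    exact (ENNReal.ofReal_le_ofReal_iff (integral_nonneg_of_ae (hkey.mono fun u hu => hu.2))).1 h1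
  have hsub : Integrable (fun u => f u - Real.log s) φ := hfint.sub (integrable_const _)
  rw [integral_sub hsub (hgint.const_mul t),
    integral_sub hfint (integrable_const _), integral_const, integral_const_mul] at hcmp
  have hMr : φ.real univ = M := rfl
  rw [hMr, smul_eq_mul, hlogs] at hcmp
  have hlog2 : Real.log (M / V) = - Real.log (V / M) := by
    rw [← Real.log_inv, inv_div]
  have hlog3 : Real.log (V / M) ≤ V / M - 1 := Real.log_le_sub_one_of_pos (div_pos hV hM)
  have hV0 : (muT n C Θ (WH n C (hK K))ᶜ).toReal ≤ M := ENNReal.toReal_mono hmt hV0le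
  have h5 : M * Real.log (V / M) ≤ V - M := by
    have := mul_le_mul_of_nonneg_left hlog3 hM.le
    rwa [mul_sub, mul_div_cancel₀ _ hM.ne', mul_one] at this
  have h6 : t * ∫ u, g u ∂φ ≤ a⁻¹ * (M * Real.log (V / M)) := by
    rw [hlog2] at hcmp
    linarith
  have h7 : a⁻¹ * (M * Real.log (V / M)) ≤ a⁻¹ * (V - (muT n C Θ (WH n C (hK K))ᶜ).toReal) :=
    mul_le_mul_of_nonneg_left (by linarith) (inv_pos.2 ha).le
  rw [← mul_div_assoc, le_div_iff₀ ht, mul_comm]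
  exact h6.trans h7

lemma EL_ineq (hn : 2 ≤ n) (hC : IsGoodCone n C) (hΘ : IsThetaWeight n C q Θ)
    (hq : q < n) [IsFiniteMeasure φ] (hφ0 : φ ≠ 0) (hφ : ∀ᵐ u ∂φ, u ∈ Uset n C)
    (hR0 : 0 < R) (hR : φ univ < muT n C Θ (Metric.ball 0 R)) {K : Set (En n)}
    (hKc : K ∈ Cls n C Θ (φ univ)) (hI : Ifun φ R K ≠ ∞)
    (hmin : ∀ K' ∈ Cls n C Θ (φ univ), Ifun φ R K ≤ Ifun φ R K')
    (hgc : Continuous g) (hg : ∀ u, |g u| ≤ G) :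
    ∫ u, g u ∂φ ≤ ∫ x, g (alph n C (hK K) x) * tauA n C q (hK K) x ∂(muB n C Θ) := by
  have ha : 0 < (n : ℝ) - q := by linarith
  have hgood := good_hK hφ0 hR0 hR hφ hKc hI
  have hmt : φ univ ≠ ∞ := measure_ne_top _ _
  have hV0le : muT n C Θ (WH n C (hK K))ᶜ ≤ φ univ :=
    (measure_mono (compl_subset_compl.2 (subset_WH hKc.2.1))).trans hKc.2.2
  have hfin0 : muT n C Θ (WH n C (hK K))ᶜ ≠ ∞ := ne_top_of_le_ne_top hmt hV0le
  have h1 := (variation hn hC hΘ hq hgood (hK_usc K) hfin0 hgc hg).const_mul ((n : ℝ) - q)⁻¹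
  have h2 := ge_of_tendsto h1 (b := ∫ u, g u ∂φ) (by
    filter_upwards [self_mem_nhdsWithin] with t ht
    exact EL_step hn hC hΘ hq hφ0 hφ hR0 hR hKc hI hmin hgc hg ht)
  refine h2.trans_eq ?_
  rw [← integral_const_mul]
  congr 1
  funext x
  field_simp

/-- The measure equation solved by the minimizer. -/
lemma EL_measure (hn : 2 ≤ n) (hC : IsGoodCone n C) (hΘ : IsThetaWeight n C q Θ)
    (hq : q < n) [IsFiniteMeasure φ] (hφ0 : φ ≠ 0) (hφ : ∀ᵐ u ∂φ, u ∈ Uset n C)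
    (hR0 : 0 < R) (hR : φ univ < muT n C Θ (Metric.ball 0 R)) {K : Set (En n)}
    (hKc : K ∈ Cls n C Θ (φ univ)) (hI : Ifun φ R K ≠ ∞)
    (hmin : ∀ K' ∈ Cls n C Θ (φ univ), Ifun φ R K ≤ Ifun φ R K') :
    φ = ((muB n C Θ).withDensity fun x => ENNReal.ofReal (tauA n C q (hK K) x)).map
      (alph n C (hK K)) := by
  have hgood := good_hK hφ0 hR0 hR hφ hKc hI
  have hmt : φ univ ≠ ∞ := measure_ne_top _ _
  have hV0le : muT n C Θ (WH n C (hK K))ᶜ ≤ φ univ :=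
    (measure_mono (compl_subset_compl.2 (subset_WH hKc.2.1))).trans hKc.2.2
  have hfin0 : muT n C Θ (WH n C (hK K))ᶜ ≠ ∞ := ne_top_of_le_ne_top hmt hV0le
  have h_int := integrable_tauA hn hC hΘ hq hgood hfin0
  haveI : IsFiniteMeasure ((muB n C Θ).withDensity fun x => ENNReal.ofReal (tauA n C q (hK K) x)) := by
    refine isFiniteMeasure_withDensity ?_
    rw [muT_WH_compl hn hC hΘ hq hgood] at hfin0
    exact hfin0
  refine ext_of_forall_integral_eq_of_IsFiniteMeasure fun g => ?_
  rw [integral_map measurable_alph.aemeasurable g.continuous.aestronglyMeasurable,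
    integral_withDensity_eq_integral_toReal_smul (measurable_tauA hgood).ennreal_ofReal
      (Eventually.of_forall fun _ => ENNReal.ofReal_lt_top)]
  have e : ∀ x, (ENNReal.ofReal (tauA n C q (hK K) x)).toReal • g (alph n C (hK K) x) =
      g (alph n C (hK K) x) * tauA n C q (hK K) x := fun x => by
    rw [ENNReal.toReal_ofReal (tauA_nonneg hgood x), smul_eq_mul, mul_comm]
  simp only [e]
  have hb : ∀ u, |g u| ≤ ‖g‖ := fun u => g.norm_coe_le_norm u
  refine le_antisymm (EL_ineq hn hC hΘ hq hφ0 hφ hR0 hR hKc hI hmin g.continuous hb) ?_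
  have h2 := EL_ineq hn hC hΘ hq hφ0 hφ hR0 hR hKc hI hmin (g := fun u => - g u) (G := ‖g‖)
    g.continuous.neg (fun u => by rw [abs_neg]; exact hb u)
  simp only [neg_mul, integral_neg] at h2
  linarith

end

section
variable {n : ℕ} {C : Set (En n)} {q : ℝ} {Θ : En n → ℝ} {φ : Measure (En n)} {H : En n → ℝ}

lemma recCone_subset (hC : IsGoodCone n C) {K : Set (En n)} (hne : K.Nonempty) (hKC : K ⊆ C) :
    recCone n K ⊆ C := by
  intro z hz
  obtain ⟨x, hx⟩ := hne
  have h1 : ∀ k : ℕ, (1 / ((k : ℝ) + 1)) • x + z ∈ C := by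
    intro k
    have hk : (0 : ℝ) < (k : ℝ) + 1 := by positivity
    have h2 := hC.2.2.1 _ (hKC (hz x hx ((k : ℝ) + 1) hk.le)) (1 / ((k : ℝ) + 1)) (by positivity)
    rwa [smul_add, smul_smul, one_div_mul_cancel hk.ne', one_smul] at h2
  have h3 : Tendsto (fun k : ℕ => (1 / ((k : ℝ) + 1)) • x + z) atTop (𝓝 ((0 : ℝ) • x + z)) :=
    (tendsto_one_div_add_atTop_nhds_zero_nat.smul_const x).add_const z
  rw [zero_smul, zero_add] at h3
  exact hC.1.mem_of_tendsto h3 (Eventually.of_forall h1)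

lemma WH_add (hC : IsGoodCone n C) {x c : En n} (hx : x ∈ WH n C H) (hc : c ∈ C) :
    x + c ∈ WH n C H := by
  refine ⟨cone_add hC hx.1 hc, fun u hu => ?_⟩
  have h1 := hx.2 u hu
  have h2 := negInner_nonneg hc hu
  rw [inner_add_left]
  linarith

lemma convex_WH (hC : IsGoodCone n C) : Convex ℝ (WH n C H) := by
  intro x hx y hy a b ha hb hab
  refine ⟨hC.2.1 hx.1 hy.1 ha hb hab, fun u hu => ?_⟩
  have h1 := mul_le_mul_of_nonneg_left (hx.2 u hu) ha
  have h2 := mul_le_mul_of_nonneg_left (hy.2 u hu) hb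
  rw [inner_add_left, real_inner_smul_left, real_inner_smul_left]
  have : H u = a * H u + b * H u := by rw [← add_mul, hab, one_mul]
  linarith

lemma WH_pseudo (hC : IsGoodCone n C) (hH : GoodH n C H) (hne : (WH n C H).Nonempty) :
    IsCPseudoCone n C (WH n C H) := by
  refine ⟨⟨hne, isClosed_WH hC, convex_WH hC, ?_, ?_⟩, ?_⟩
  · intro h0
    obtain ⟨u, hu, hp⟩ := hH.2.2
    have := h0.2 u hu
    rw [inner_zero_left, neg_zero] at this
    linarith
  · rintro l hl _ ⟨y, hy, rfl⟩
    have h1 := WH_add hC hy (hC.2.2.1 y hy.1 (l - 1) (by linarith))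
    have : y + (l - 1) • y = l • y := by rw [sub_smul, one_smul]; abel
    rwa [this] at h1
  · refine Subset.antisymm (recCone_subset hC hne fun x hx => hx.1) ?_
    intro z hz x hx t ht
    exact WH_add hC hx (hC.2.2.1 z hz t ht)

lemma normals_WH (hC : IsGoodCone n C) {K : Set (En n)} (hne : K.Nonempty) (hKC : K ⊆ C)
    {x : En n} (hx : x ∈ WH n C (hK K)) (u : En n) :
    u ∈ normalsAt n (WH n C (hK K)) x ↔ u ∈ Uset n C ∧ hK K u = -⟪x, u⟫ := by
  constructor
  · rintro ⟨hu1, hu2⟩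
    have hu : u ∈ Uset n C := by
      refine ⟨by simpa using hu1, fun c hc => ?_⟩
      have := hu2 _ (WH_add hC hx hc)
      rw [inner_add_left] at this
      rw [real_inner_comm]
      linarith
    refine ⟨hu, le_antisymm (hx.2 u hu) (le_hK hne fun y hy => le_max_of_le_right ?_)⟩
    have := hu2 y (subset_WH hKC hy)
    linarith
  · rintro ⟨hu, he⟩
    refine ⟨norm_of_mem_Uset hu, fun y hy => ?_⟩
    have := hy.2 u hu
    linarith

lemma frontier_of_rho_one (hC : IsGoodCone n C) (hH : GoodH n C H) {x : En n}
    (hx : x ∈ interior C) (h1 : rhoH n C H x = 1) : x ∈ frontier (WH n C H) := by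
  rw [(isClosed_WH hC).frontier_eq]
  refine ⟨(mem_WH_iff hH hx).2 h1.le, fun h_int => ?_⟩
  have hc : Tendsto (fun r : ℝ => r • x) (𝓝[<] 1) (𝓝 x) := by
    have : Continuous fun r : ℝ => r • x := by fun_prop
    have := this.tendsto 1
    rw [one_smul] at this
    exact this.mono_left nhdsWithin_le_nhds
  have e1 := hc.eventually (mem_interior_iff_mem_nhds.1 h_int)
  have e2 : Ioo (0 : ℝ) 1 ∈ 𝓝[<] (1 : ℝ) := Ioo_mem_nhdsLT one_pos
  obtain ⟨r, hr1, hr2⟩ := (e1.and e2).exists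
  have h3 := (mem_WH_iff hH (cone_interior_smul hC hr2.1 hx)).1 hr1
  rw [rho_smul hC hH hr2.1, h1, mul_one] at h3
  have := (inv_le_one₀ hr2.1).1 h3
  linarith [hr2.2]

lemma WH_reps (hn : 2 ≤ n) (hC : IsGoodCone n C) (hΘ : IsThetaWeight n C q Θ)
    (hq : q < n) {K : Set (En n)} (hne : K.Nonempty) (hKC : K ⊆ C) (hH : GoodH n C (hK K))
    {ω : Set (En n)} (hω : MeasurableSet ω) :
    coneVol n Θ (WH n C (hK K)) ω =
      ((muB n C Θ).withDensity fun x => ENNReal.ofReal (tauA n C q (hK K) x)).map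
      (alph n C (hK K)) ω := by
  have hA : MeasurableSet (alph n C (hK K) ⁻¹' ω) := measurable_alph hω
  rw [Measure.map_apply measurable_alph hω, withDensity_apply _ hA]
  have h1 := muT_rho hn hC hΘ hq hH hA (fun r hr x hx => by
    rw [mem_preimage, alph_smul hC hH hr]; exact hx)
  have hWC : ∀ {x}, x ∈ frontier (WH n C (hK K)) → x ∈ WH n C (hK K) :=
    fun hx => (isClosed_WH hC).frontier_subset hx
  rw [coneVol, HTheta_eq_muT hC Θ]
  · refine Eq.trans ?_ h1
    apply measure_congr
    have hnull : ∀ᵐ x ∂(muT n C Θ), x ∉ frontier (WH n C (hK K)) := by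
      refine muT_ac.ae_le (measure_eq_zero_iff_ae_notMem.1 ?_)
      exact (convex_WH hC).addHaar_frontier volume
    filter_upwards [ae_muT_interior, muT_ac.ae_le (ae_alph hC hH (hK_usc K)), hnull] with y hyi hy hyn
    obtain ⟨hyU, hyM⟩ := hy hyi
    have hρ := rho_pos hH hyi
    refine propext ?_
    change (y ∈ ⋃ x ∈ nuInv n (WH n C (hK K)) ω, segment ℝ 0 x) ↔
      (y ∈ alph n C (hK K) ⁻¹' ω ∧ 1 < rhoH n C (hK K) y)
    constructor
    · intro hmem
      obtain ⟨x, ⟨hxf, u, huω, hxu⟩, hseg⟩ := mem_iUnion₂.1 hmem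
      rw [segment_eq_image] at hseg
      obtain ⟨s, ⟨hs0, hs1⟩, hsx⟩ := hseg
      simp only [smul_zero, zero_add] at hsx
      have hspos : 0 < s := by
        refine lt_of_le_of_ne hs0 ?_
        rintro rfl
        rw [zero_smul] at hsx
        exact (mem_C0 hn hC hyi).2 hsx.symm
      have hxi : x ∈ interior C := by
        rw [← cone_interior_smul_iff hC hspos, hsx]; exact hyi
      have hxW := hWC hxf
      obtain ⟨huU, hue⟩ := (normals_WH hC hne hKC hxW u).1 (hxu ▸ mem_singleton u)
      have e1 := (mem_WH_iff hH hxi).1 hxW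
      have e2 := le_rho hH hxi huU
      have e3 := negInner_pos hxi huU
      have e4 : rhoH n C (hK K) x = 1 := by
        refine le_antisymm e1 ?_
        rw [hue] at e2
        by_contra hlt
        push Not at hlt
        nlinarith
      have e5 : rhoH n C (hK K) y = s⁻¹ := by
        rw [← hsx, rho_smul hC hH hspos, e4, mul_one]
      have e6 : u = alph n C (hK K) y := by
        rw [← hyM u huU, e5, hue, ← hsx, real_inner_smul_left]
        field_simp
      refine ⟨by rw [mem_preimage, ← e6]; exact huω, ?_⟩
      have e7 : 1 ≤ rhoH n C (hK K) y := by rw [e5]; exact (one_le_inv₀ hspos).2 hs1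
      refine lt_of_le_of_ne e7 fun e8 => hyn (frontier_of_rho_one hC hH hyi e8.symm)
    · rintro ⟨hyω, hy1⟩
      set r := rhoH n C (hK K) y with hr
      have hxi := cone_interior_smul hC hρ hyi
      have e1 : rhoH n C (hK K) (r • y) = 1 := by
        rw [rho_smul hC hH hρ, ← hr, inv_mul_cancel₀ hρ.ne']
      have hxf := frontier_of_rho_one hC hH hxi e1
      refine mem_iUnion₂.2 ⟨r • y, ⟨hxf, alph n C (hK K) y, hyω, ?_⟩, ?_⟩
      · ext u
        rw [normals_WH hC hne hKC (hWC hxf), mem_singleton_iff, real_inner_smul_left, ← mul_neg]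
        constructor
        · rintro ⟨h2, h3⟩
          exact (hyM u h2).1 h3
        · rintro rfl
          exact ⟨hyU, (hyM _ hyU).2 rfl⟩
      · rw [segment_eq_image]
        refine ⟨r⁻¹, ⟨(inv_pos.2 hρ).le, inv_le_one_of_one_le₀ hy1.le⟩, ?_⟩
        simp only [smul_zero, zero_add]
        rw [smul_smul, inv_mul_cancel₀ hρ.ne', one_smul]
  · intro y hy
    obtain ⟨x, ⟨hxf, -⟩, hseg⟩ := mem_iUnion₂.1 hy
    rw [segment_eq_image] at hseg
    obtain ⟨s, ⟨hs0, hs1⟩, rfl⟩ := hseg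
    simp only [smul_zero, zero_add]
    exact hC.2.2.1 x (hWC hxf).1 s hs0

/-- Existence for nonzero measures. -/
lemma exists_nonzero (hn : 2 ≤ n) (hC : IsGoodCone n C) (hΘ : IsThetaWeight n C q Θ)
    (hq1 : (n : ℝ) - 1 < q) (hq : q < n) [IsFiniteMeasure φ] (hφ : φ (omegaDual n C)ᶜ = 0)
    (hφ0 : φ ≠ 0) : ∃ K, IsCPseudoCone n C K ∧ RepsConeVol n C Θ K φ := by
  have hq0 : 0 < q := by
    have : (2 : ℝ) ≤ n := by exact_mod_cast hn
    linarith
  have hφU : ∀ᵐ u ∂φ, u ∈ Uset n C := by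
    refine measure_mono_null ?_ hφ
    intro u hu hu2
    exact hu (omegaDual_subset_Uset C hu2)
  have hmt : φ univ ≠ ∞ := measure_ne_top _ _
  have hm0 : φ univ ≠ 0 := by simpa using hφ0
  haveI : (ae φ).NeBot := ae_neBot.2 hφ0
  have hU : (Uset n C).Nonempty := hφU.exists
  obtain ⟨R, hR0, hR⟩ := exists_R hn hC hΘ hq hq0 hmt
  obtain ⟨K0, hK0, hI0⟩ := exists_competitor (R := R) hn hC hΘ hq1 hq hm0 hmt hR0 hU hφU
  obtain ⟨K, hKc, hmin⟩ := exists_minimizer hC hR0 hR hφU hK0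
  have hI : Ifun φ R K ≠ ∞ := ne_top_of_le_ne_top hI0 (hmin K0 hK0)
  have hgood := good_hK hφ0 hR0 hR hφU hKc hI
  have hEL := EL_measure hn hC hΘ hq hφ0 hφU hR0 hR hKc hI hmin
  refine ⟨WH n C (hK K), WH_pseudo hC hgood (hKc.1.mono (subset_WH hKc.2.1)), hφ, ?_⟩
  intro ω hω _
  rw [WH_reps hn hC hΘ hq hKc.1 hKc.2.1 hgood hω, ← hEL]

lemma exists_zero (hn : 2 ≤ n) (hC : IsGoodCone n C) :
    ∃ K, IsCPseudoCone n C K ∧ RepsConeVol n C Θ K (0 : Measure (En n)) := by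
  obtain ⟨z, hz⟩ := hC.2.2.2.2
  have hzC := interior_subset hz
  set K : Set (En n) := {x | x - z ∈ C} with hKdef
  have hKcl : IsClosed K := hC.1.preimage (by fun_prop : Continuous fun x : En n => x - z)
  have hadd : ∀ x ∈ K, ∀ c ∈ C, x + c ∈ K := by
    intro x hx c hc
    have := cone_add hC (show x - z ∈ C from hx) hc
    change x + c - z ∈ C
    rwa [add_sub_right_comm]
  have hKC : K ⊆ C := by
    intro x hx
    have := cone_add hC (show x - z ∈ C from hx) hzC
    rwa [sub_add_cancel] at this
  have h0C : (0 : En n) ∈ C := by simpa using hC.2.2.1 z hzC 0 le_rfl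
  have hzK : z ∈ K := by change z - z ∈ C; rw [sub_self]; exact h0C
  refine ⟨K, ⟨⟨⟨z, hzK⟩, hKcl, ?_, ?_, ?_⟩, ?_⟩, by simp, ?_⟩
  · intro x hx y hy a b ha hb hab
    have h1 := hC.2.1 (show x - z ∈ C from hx) (show y - z ∈ C from hy) ha hb hab
    change a • x + b • y - z ∈ C
    have : a • x + b • y - z = a • (x - z) + b • (y - z) := by
      rw [smul_sub, smul_sub]
      have : z = a • z + b • z := by rw [← add_smul, hab, one_smul]
      nth_rewrite 1 [this]
      abel
    rwa [this]
  · intro h0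
    have h1 : -z ∈ C := by simpa [hKdef] using h0
    have h2 : z ∈ C ∩ (-C) := ⟨hzC, by simpa using h1⟩
    rw [hC.2.2.2.1] at h2
    exact (mem_C0 hn hC hz).2 h2
  · rintro l hl _ ⟨y, hy, rfl⟩
    have h1 := hadd y hy _ (hC.2.2.1 y (hKC hy) (l - 1) (by linarith))
    have : y + (l - 1) • y = l • y := by rw [sub_smul, one_smul]; abel
    rwa [this] at h1
  · refine Subset.antisymm (recCone_subset hC ⟨z, hzK⟩ hKC) ?_
    intro c hc x hx t ht
    exact hadd x hx _ (hC.2.2.1 c hc t ht)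
  · intro ω _ hωs
    symm
    rw [Measure.coe_zero, Pi.zero_apply, coneVol]
    have hsub : (⋃ x ∈ nuInv n K ω, segment ℝ 0 x) ⊆ ((Submodule.span ℝ {z} : Submodule ℝ (En n)) : Set (En n)) := by
      intro y hy
      obtain ⟨x, ⟨hxf, u, huω, hxu⟩, hseg⟩ := mem_iUnion₂.1 hy
      have hxK := hKcl.frontier_subset hxf
      have hu := hωs huω
      have hxz : x = z := by
        by_contra hne
        have h1 : x - z ≠ 0 := sub_ne_zero.2 hne
        have h2 := inner_neg_of_interior hu.2 h1 (fun y hy => hy _ (show x - z ∈ C from hxK))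
        have h3 : u ∈ normalsAt n K x := hxu ▸ mem_singleton u
        have h4 := h3.2 z hzK
        rw [real_inner_comm, inner_sub_left] at h2
        linarith
      rw [segment_eq_image] at hseg
      obtain ⟨s, -, rfl⟩ := hseg
      simp only [smul_zero, zero_add, hxz]
      exact Submodule.smul_mem _ _ (Submodule.mem_span_singleton_self z)
    refine measure_mono_null hsub ?_
    refine withDensity_absolutelyContinuous _ _ ?_
    refine Measure.addHaar_submodule _ _ ?_
    intro htop
    have h1 := finrank_span_le_card (R := ℝ) ({z} : Set (En n))
    rw [htop, finrank_top, finrank_euclideanSpace_fin] at h1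
    simp at h1
    omega

lemma finite_of_reps (hn : 2 ≤ n) (hC : IsGoodCone n C) (hΘ : IsThetaWeight n C q Θ)
    (hq1 : (n : ℝ) - 1 < q) (hq : q < n) (hφ : φ (omegaDual n C)ᶜ = 0)
    {K : Set (En n)} (hK' : IsCPseudoCone n C K) (hr : RepsConeVol n C Θ K φ) :
    IsFiniteMeasure φ := by
  obtain ⟨⟨hne, hcl, hconv, h0, hl⟩, hrec⟩ := hK'
  have hadd : ∀ x ∈ K, ∀ c ∈ C, x + c ∈ K := by
    intro x hx c hc
    rw [← hrec] at hc
    simpa using hc x hx 1 zero_le_one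
  have hKC : K ⊆ C := by
    intro x hx
    rw [← hrec]
    intro y hy t ht
    have ht1 : 0 < 1 + t := by linarith
    have h1 : (1 / (1 + t)) • y + (t / (1 + t)) • x ∈ K :=
      hconv hy hx (by positivity) (by positivity) (by field_simp)
    have h2 := hl (1 + t) (by linarith) (smul_mem_smul_set h1)
    rw [smul_add, smul_smul, smul_smul, mul_one_div_cancel ht1.ne', one_smul,
      mul_div_cancel₀ _ ht1.ne'] at h2
    exact h2
  obtain ⟨z0, hz0⟩ := hne
  obtain ⟨c0, hc0⟩ := hC.2.2.2.2
  have hzK : z0 + c0 ∈ K := hadd _ hz0 _ (interior_subset hc0)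
  have hzi : z0 + c0 ∈ interior C := cone_interior_add hC (hKC hz0) hc0
  have hsub : (⋃ x ∈ nuInv n K (omegaDual n C), segment ℝ 0 x) ⊆
      {x | x - (z0 + c0) ∉ C} ∪ frontier K := by
    intro y hy
    obtain ⟨x, ⟨hxf, u, hu, hxu⟩, hseg⟩ := mem_iUnion₂.1 hy
    rw [segment_eq_image] at hseg
    obtain ⟨s, ⟨hs0, hs1⟩, rfl⟩ := hseg
    simp only [smul_zero, zero_add]
    rcases hs1.eq_or_lt with rfl | hs1
    · right; rwa [one_smul]
    · left
      intro hmem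
      have hyK : s • x ∈ K := by
        have := hadd _ hzK _ hmem
        rwa [add_sub_cancel] at this
      have hxK := hcl.frontier_subset hxf
      have hx0 : x ≠ 0 := by rintro rfl; exact h0 hxK
      have h2 := inner_neg_of_interior hu.2 hx0 (fun y hy => hy _ (hKC hxK))
      have h3 : u ∈ normalsAt n K x := hxu ▸ mem_singleton u
      have h4 := h3.2 _ hyK
      rw [real_inner_smul_left] at h4
      rw [real_inner_comm] at h2
      nlinarith
  have hsubC : (⋃ x ∈ nuInv n K (omegaDual n C), segment ℝ 0 x) ⊆ C := by
    intro y hy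
    obtain ⟨x, ⟨hxf, -⟩, hseg⟩ := mem_iUnion₂.1 hy
    rw [segment_eq_image] at hseg
    obtain ⟨s, ⟨hs0, hs1⟩, rfl⟩ := hseg
    simp only [smul_zero, zero_add]
    exact hC.2.2.1 x (hKC (hcl.frontier_subset hxf)) s hs0
  have hΩm : MeasurableSet (omegaDual n C) :=
    Metric.isClosed_sphere.measurableSet.inter isOpen_interior.measurableSet
  have hfr : muT n C Θ (frontier K) = 0 := muT_ac (hconv.addHaar_frontier volume)
  have hΩ : φ (omegaDual n C) < ∞ := by
    rw [hr.2 _ hΩm Subset.rfl, coneVol, HTheta_eq_muT hC Θ hsubC]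
    refine (measure_mono hsub).trans_lt ((measure_union_le _ _).trans_lt ?_)
    rw [hfr, add_zero]
    exact muT_translate_lt_top hn hC hΘ hq1 hq hzi
  refine ⟨?_⟩
  rw [← measure_add_measure_compl hΩm, hφ, add_zero]
  exact hΩ

end

/-- A Borel measure on `Ω_{C°}` is the `Θ`-weighted cone-volume measure
of some `C`-pseudo-cone if and only if it is finite. -/
theorem statement1 (n : ℕ) (hn : 2 ≤ n) (C : Set (En n)) (hC : IsGoodCone n C)
    (q : ℝ) (hq1 : (n : ℝ) - 1 < q) (hq2 : q < n)
    (Θ : En n → ℝ) (hΘ : IsThetaWeight n C q Θ)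
    (φ : Measure (En n)) (hφ : φ (omegaDual n C)ᶜ = 0) :
    (∃ K : Set (En n), IsCPseudoCone n C K ∧ RepsConeVol n C Θ K φ) ↔ IsFiniteMeasure φ := by
  constructor
  · rintro ⟨K, hK1, hK2⟩
    exact finite_of_reps hn hC hΘ hq1 hq2 hφ hK1 hK2
  · intro hfin
    by_cases hφ0 : φ = 0
    · subst hφ0
      exact exists_zero hn hC
    · exact exists_nonzero hn hC hΘ hq1 hq2 hφ hφ0
end
end

section
/- For every C-pseudo-cone K, the Θ-weighted cone-volume measure V_K^Θ is a finite measure on Ω_{C°}. -/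
open MeasureTheory Set Filter
open scoped RealInnerProductSpace ENNReal Topology Pointwise NNReal

noncomputable section

section Helpers

variable {n : ℕ}

lemma aux_measure_cone_ball (C : Set (En n))
    (hcone : ∀ x ∈ C, ∀ r : ℝ, 0 ≤ r → r • x ∈ C) (hn : 0 < n) (r : ℝ) (hr : 0 ≤ r) :
    volume (C ∩ Metric.closedBall (0 : En n) r) =
      ENNReal.ofReal (r ^ n) * volume (C ∩ Metric.closedBall (0 : En n) 1) := by
  haveI : Nonempty (Fin n) := ⟨⟨0, hn⟩⟩
  rcases hr.eq_or_lt with h0 | hpos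
  · subst h0
    have : volume (C ∩ Metric.closedBall (0 : En n) 0) = 0 := by
      refine measure_mono_null inter_subset_right ?_
      simp
    rw [this]
    simp [hn.ne']
  · have hset : C ∩ Metric.closedBall (0 : En n) r = r • (C ∩ Metric.closedBall (0 : En n) 1) := by
      ext y
      rw [Set.mem_smul_set_iff_inv_smul_mem₀ hpos.ne']
      simp only [mem_inter_iff, mem_closedBall_zero_iff, norm_smul, norm_inv, Real.norm_eq_abs,
        abs_of_pos hpos]
      constructor
      · rintro ⟨h1, h2⟩
        refine ⟨hcone y h1 _ (by positivity), ?_⟩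
        rw [inv_mul_le_iff₀ hpos]; simpa using h2
      · rintro ⟨h1, h2⟩
        rw [inv_mul_le_iff₀ hpos] at h2
        refine ⟨?_, by simpa using h2⟩
        have := hcone _ h1 r hpos.le
        rwa [smul_inv_smul₀ hpos.ne'] at this
    rw [hset, Measure.addHaar_smul]
    simp [abs_of_pos hpos]

/-- Volume of `(C \ (x₀ + C)) ∩ B_r` grows at most like `r ^ (n-1)`. -/
lemma aux_measure_diff (C : Set (En n)) (hcl : IsClosed C) 
    (hcone : ∀ x ∈ C, ∀ r : ℝ, 0 ≤ r → r • x ∈ C) (hn : 0 < n)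
    (x₀ : En n) (hx : ∀ y ∈ C, x₀ + y ∈ C) (r : ℝ) (hr : 0 < r) :
    volume ((C \ ((fun y => x₀ + y) '' C)) ∩ Metric.closedBall (0 : En n) r) ≤
      ENNReal.ofReal (n * ‖x₀‖ * r ^ (n - 1)) * volume (C ∩ Metric.closedBall (0 : En n) 1) := by
  have hrn : r ^ n = r * r ^ (n - 1) := by
    rw [← pow_succ', Nat.sub_add_cancel hn]
  have hn1 : (1 : ℝ) ≤ n := by exact_mod_cast hn
  have hfin : volume (C ∩ Metric.closedBall (0 : En n) 1) ≠ ⊤ :=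
    ((measure_mono inter_subset_right).trans_lt measure_closedBall_lt_top).ne
  rcases le_or_gt r ‖x₀‖ with h | h
  · calc _ ≤ volume (C ∩ Metric.closedBall (0 : En n) r) :=
          measure_mono (inter_subset_inter_left _ diff_subset)
      _ = _ := aux_measure_cone_ball C hcone hn r hr.le
      _ ≤ _ := by
          gcongr
          rw [hrn]
          gcongr
          nlinarith [norm_nonneg x₀]
  · set S := (fun y => x₀ + y) '' (C ∩ Metric.closedBall (0 : En n) (r - ‖x₀‖)) with hS
    have hsub : (C \ ((fun y => x₀ + y) '' C)) ∩ Metric.closedBall (0 : En n) r ⊆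
        (C ∩ Metric.closedBall (0 : En n) r) \ S := by
      rintro y ⟨⟨h1, h2⟩, h3⟩
      exact ⟨⟨h1, h3⟩, fun h4 => h2 (image_mono inter_subset_left h4)⟩
    have hSsub : S ⊆ C ∩ Metric.closedBall (0 : En n) r := by
      rintro _ ⟨y, ⟨h1, h2⟩, rfl⟩
      refine ⟨hx y h1, ?_⟩
      rw [mem_closedBall_zero_iff] at h2 ⊢
      have := norm_add_le x₀ y
      simp only
      linarith
    have hSm : volume S = ENNReal.ofReal ((r - ‖x₀‖) ^ n) *
        volume (C ∩ Metric.closedBall (0 : En n) 1) := by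
      rw [hS, ← aux_measure_cone_ball C hcone hn _ (by linarith)]
      simp only [image_add_left, measure_preimage_add]
    have hSmeas : MeasurableSet S := by
      rw [hS, image_add_left]
      exact ((hcl.inter Metric.isClosed_closedBall).preimage (by fun_prop)).measurableSet
    have hSfin : volume S ≠ ⊤ := by
      rw [hSm]; exact ENNReal.mul_ne_top ENNReal.ofReal_ne_top hfin
    refine (measure_mono hsub).trans ?_
    rw [measure_diff hSsub hSmeas.nullMeasurableSet hSfin, hSm,
      aux_measure_cone_ball C hcone hn r hr.le, ← ENNReal.sub_mul (fun _ _ => hfin),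
      ← ENNReal.ofReal_sub _ (pow_nonneg (by linarith) _)]
    gcongr
    have hb := one_add_mul_le_pow (a := -(‖x₀‖ / r)) (by
      have : ‖x₀‖ / r ≤ 1 := by rw [div_le_one hr]; exact h.le
      linarith) n
    have he : (r - ‖x₀‖) ^ n = r ^ n * (1 + -(‖x₀‖ / r)) ^ n := by
      rw [← mul_pow]; congr 1; field_simp; ring
    have h2 : r ^ n * (1 + n * -(‖x₀‖ / r)) = r ^ n - n * ‖x₀‖ * r ^ (n - 1) := by
      rw [hrn]; field_simp; ring
    have h3 := mul_le_mul_of_nonneg_left hb (pow_nonneg hr.le n)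
    rw [h2, ← he] at h3
    linarith

lemma aux_lintegral_fin (E : Set (En n)) (q : ℝ) (hn : 2 ≤ n)
    (hq1 : (n : ℝ) - 1 < q) (hq2 : q < n) (a b : ℝ≥0∞) (ha : a ≠ ⊤) (hb : b ≠ ⊤)
    (h1 : ∀ r : ℝ, 0 < r → volume (E ∩ Metric.closedBall (0 : En n) r) ≤
      ENNReal.ofReal (r ^ n) * a)
    (h2 : ∀ r : ℝ, 0 < r → volume (E ∩ Metric.closedBall (0 : En n) r) ≤
      ENNReal.ofReal (r ^ (n - 1)) * b) :
    ∫⁻ y in E, ENNReal.ofReal (‖y‖ ^ (-q)) < ⊤ := by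
  have hn2 : (2 : ℝ) ≤ n := by exact_mod_cast hn
  have hq : 0 < q := by linarith
  have hmeas : Measurable fun y : En n => ‖y‖ ^ (-q) := by fun_prop
  rw [lintegral_eq_lintegral_meas_le _ (Eventually.of_forall fun y => by positivity)
    hmeas.aemeasurable]
  have key : ∀ t : ℝ, 0 < t → volume.restrict E {y : En n | t ≤ ‖y‖ ^ (-q)} ≤
      volume (E ∩ Metric.closedBall (0 : En n) (t ^ (-q⁻¹))) := by
    intro t ht
    rw [Measure.restrict_apply (measurableSet_le measurable_const hmeas)]
    apply measure_mono
    rintro y ⟨hy, hyE⟩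
    refine ⟨hyE, ?_⟩
    rw [mem_closedBall_zero_iff]
    simp only [mem_setOf_eq] at hy
    rcases (norm_nonneg y).eq_or_lt with h0 | h0
    · rw [← h0]; positivity
    · have := Real.rpow_le_rpow_of_nonpos ht hy (z := -q⁻¹) (by
        rw [neg_nonpos]; positivity)
      rwa [← Real.rpow_mul h0.le, neg_mul_neg, mul_inv_cancel₀ hq.ne', Real.rpow_one] at this
  rw [← Ioc_union_Ioi_eq_Ioi (zero_le_one (α := ℝ))]
  refine (lintegral_union_le _ _ _).trans_lt (ENNReal.add_lt_top.2 ⟨?_, ?_⟩)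
  · have hint : IntegrableOn (fun t : ℝ => t ^ (-((n - 1 : ℕ) : ℝ) / q)) (Ioc 0 1) := by
      rw [← intervalIntegrable_iff_integrableOn_Ioc_of_le zero_le_one]
      apply intervalIntegral.intervalIntegrable_rpow'
      rw [lt_div_iff₀ hq, Nat.cast_sub (by omega)]
      push_cast; linarith
    calc _ ≤ ∫⁻ t in Ioc (0:ℝ) 1, ENNReal.ofReal (t ^ (-((n - 1 : ℕ) : ℝ) / q)) * b := by
          refine setLIntegral_mono' measurableSet_Ioc fun t ht => ?_
          refine (key t ht.1).trans ((h2 _ (Real.rpow_pos_of_pos ht.1 _)).trans (le_of_eq ?_))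
          rw [← Real.rpow_natCast, ← Real.rpow_mul ht.1.le]
          congr 3
          field_simp
      _ < ⊤ := by
          rw [lintegral_mul_const' _ _ hb]
          refine ENNReal.mul_lt_top ?_ hb.lt_top
          exact hint.lintegral_lt_top
  · have hint : IntegrableOn (fun t : ℝ => t ^ (-(n : ℝ) / q)) (Ioi 1) := by
      apply integrableOn_Ioi_rpow_of_lt _ one_pos
      rw [div_lt_iff₀ hq]
      linarith
    calc _ ≤ ∫⁻ t in Ioi (1:ℝ), ENNReal.ofReal (t ^ (-(n : ℝ) / q)) * a := by
          refine setLIntegral_mono' measurableSet_Ioi fun t ht => ?_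
          have ht0 : (0:ℝ) < t := one_pos.trans ht
          refine (key t ht0).trans ((h1 _ (Real.rpow_pos_of_pos ht0 _)).trans (le_of_eq ?_))
          rw [← Real.rpow_natCast, ← Real.rpow_mul ht0.le]
          congr 3
          field_simp
      _ < ⊤ := by
          rw [lintegral_mul_const' _ _ ha]
          refine ENNReal.mul_lt_top ?_ ha.lt_top
          exact hint.lintegral_lt_top

lemma aux_theta_bound (C : Set (En n)) (hcl : IsClosed C)
    (hcone : ∀ x ∈ C, ∀ r : ℝ, 0 ≤ r → r • x ∈ C) (q : ℝ) (Θ : En n → ℝ)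
    (hΘ : IsThetaWeight n C q Θ) :
    ∃ M : ℝ, ∀ y ∈ C, y ≠ 0 → Θ y ≤ M * ‖y‖ ^ (-q) := by
  obtain ⟨hc, -, hh⟩ := hΘ
  have hcomp : IsCompact (C ∩ Metric.sphere (0 : En n) 1) := (isCompact_sphere _ _).inter_left hcl
  have hsub : C ∩ Metric.sphere (0 : En n) 1 ⊆ C \ {0} := by
    rintro y ⟨h1, h2⟩
    refine ⟨h1, ?_⟩
    rintro rfl
    simp at h2
  obtain ⟨M, hM⟩ := (hcomp.image_of_continuousOn (hc.mono hsub)).bddAbove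
  refine ⟨M, fun y hy h0 => ?_⟩
  have hpos : 0 < ‖y‖ := norm_pos_iff.2 h0
  have hmem : ‖y‖⁻¹ • y ∈ C ∩ Metric.sphere (0 : En n) 1 := by
    refine ⟨hcone y hy _ (by positivity), ?_⟩
    rw [mem_sphere_zero_iff_norm, norm_smul, norm_inv, norm_norm, inv_mul_cancel₀ hpos.ne']
  have h1 := hM (mem_image_of_mem Θ hmem)
  have h2 := hh _ (hsub hmem) ‖y‖ hpos
  rw [smul_inv_smul₀ hpos.ne'] at h2
  rw [h2, mul_comm]
  gcongr

lemma aux_K_subset (C K : Set (En n)) (hK : IsCPseudoCone n C K) : K ⊆ C := by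
  obtain ⟨⟨-, hcl, hconv, -, hl⟩, hrec⟩ := hK
  intro x hx
  rw [← hrec]
  intro y hy t ht
  rcases ht.eq_or_lt with h0 | h0
  · simpa [← h0] using hy
  -- limit of `(1 - 1/m) y + (1/m) (m t x)`
  have hlim : Tendsto (fun s : ℝ => (1 - s⁻¹) • y + t • x) atTop (𝓝 ((1 - 0 : ℝ) • y + t • x)) :=
    ((tendsto_const_nhds.sub tendsto_inv_atTop_zero).smul_const y).add_const _
  rw [sub_zero, one_smul] at hlim
  refine hcl.mem_of_tendsto hlim ?_
  filter_upwards [eventually_ge_atTop (1 : ℝ), eventually_ge_atTop (t⁻¹)] with s hs1 hs2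
  have hs0 : 0 < s := one_pos.trans_le hs1
  have hmem : (s * t) • x ∈ K := by
    refine hl (s * t) ?_ (smul_mem_smul_set hx)
    rwa [inv_le_iff_one_le_mul₀ h0] at hs2
  have := hconv hy hmem (a := 1 - s⁻¹) (b := s⁻¹)
    (sub_nonneg.2 (inv_le_one_of_one_le₀ hs1)) (by positivity) (by ring)
  rwa [smul_smul, inv_mul_cancel_left₀ hs0.ne'] at this

lemma aux_interior_add (C K : Set (En n)) (hK : IsCPseudoCone n C K) (x y : En n)
    (hx : x ∈ interior K) (hy : y ∈ C) : x + y ∈ interior K := by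
  obtain ⟨-, hrec⟩ := hK
  rw [← hrec] at hy
  have hopen : IsOpen ((fun z => z + y) '' interior K) :=
    (Homeomorph.addRight y).isOpenMap _ isOpen_interior
  refine interior_maximal ?_ hopen ⟨x, hx, rfl⟩
  rintro _ ⟨z, hz, rfl⟩
  simpa using hy z (interior_subset hz) 1 zero_le_one

lemma aux_interior_smul (C K : Set (En n)) (hK : IsCPseudoCone n C K) (x : En n)
    (hx : x ∈ interior K) (l : ℝ) (hl : 1 ≤ l) : l • x ∈ interior K := by
  have hopen : IsOpen (l • interior K) := isOpen_interior.smul₀ (by linarith)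
  refine interior_maximal ?_ hopen (smul_mem_smul_set hx)
  exact (smul_set_mono interior_subset).trans (hK.1.2.2.2.2 l hl)

lemma aux_interior_nonempty (C K : Set (En n)) (hC : (interior C).Nonempty)
    (hK : IsCPseudoCone n C K) : (interior K).Nonempty := by
  obtain ⟨⟨⟨x, hx⟩, -⟩, hrec⟩ := hK
  obtain ⟨c, hc⟩ := hC
  have hopen : IsOpen ((fun z => x + z) '' interior C) :=
    (Homeomorph.addLeft x).isOpenMap _ isOpen_interior
  refine ⟨x + c, interior_maximal ?_ hopen ⟨c, hc, rfl⟩⟩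
  rintro _ ⟨z, hz, rfl⟩
  have h := interior_subset hz
  rw [← hrec] at h
  simpa using h x hx 1 zero_le_one

end Helpers

/-- For every `C`-pseudo-cone `K`, the `Θ`-weighted cone-volume measure
`V_K^Θ` is finite. -/
theorem statement4 (n : ℕ) (hn : 2 ≤ n) (C : Set (En n)) (hC : IsGoodCone n C)
    (q : ℝ) (hq1 : (n : ℝ) - 1 < q) (hq2 : q < n)
    (Θ : En n → ℝ) (hΘ : IsThetaWeight n C q Θ)
    (K : Set (En n)) (hK : IsCPseudoCone n C K) :
    coneVol n Θ K (omegaDual n C) < ⊤ := by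
  haveI : Nonempty (Fin n) := ⟨⟨0, by omega⟩⟩
  obtain ⟨hcl, -, hcone, -, hint⟩ := hC
  obtain ⟨x₀, hx₀⟩ := aux_interior_nonempty C K hint hK
  have hKC := aux_K_subset C K hK
  obtain ⟨M, hM⟩ := aux_theta_bound C hcl hcone q Θ hΘ
  have hadd : ∀ y ∈ C, x₀ + y ∈ C := fun y hy =>
    hKC (interior_subset (aux_interior_add C K hK x₀ y hx₀ hy))
  set E : Set (En n) := C \ ((fun y => x₀ + y) '' C) with hE
  have hEm : MeasurableSet E := by
    rw [hE, image_add_left]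
    exact hcl.measurableSet.diff (hcl.preimage (by fun_prop)).measurableSet
  have hsub : (⋃ x ∈ nuInv n K (omegaDual n C), segment ℝ (0 : En n) x) ⊆ E := by
    intro y hy
    simp only [mem_iUnion] at hy
    obtain ⟨x, ⟨hxf, -⟩, hyx⟩ := hy
    have hxK : x ∈ K := hK.1.2.1.frontier_subset hxf
    rw [segment_eq_image] at hyx
    obtain ⟨s, ⟨hs0, hs1⟩, rfl⟩ := hyx
    simp only [smul_zero, zero_add]
    refine ⟨hcone x (hKC hxK) s hs0, ?_⟩
    rintro ⟨c, hc, hcx⟩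
    simp only at hcx
    have h1 := aux_interior_add C K hK x₀ c hx₀ hc
    rw [hcx] at h1
    have hspos : 0 < s := by
      rcases hs0.eq_or_lt with h | h
      · rw [← h, zero_smul] at h1
        exact absurd (interior_subset h1) hK.1.2.2.2.1
      · exact h
    have h2 := aux_interior_smul C K hK _ h1 s⁻¹ ((one_le_inv₀ hspos).2 hs1)
    rw [inv_smul_smul₀ hspos.ne'] at h2
    exact hxf.2 h2
  have hfin : volume (C ∩ Metric.closedBall (0 : En n) 1) ≠ ⊤ :=
    ((measure_mono inter_subset_right).trans_lt measure_closedBall_lt_top).ne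
  have hlt : ∫⁻ y in E, ENNReal.ofReal (‖y‖ ^ (-q)) < ⊤ := by
    refine aux_lintegral_fin E q hn hq1 hq2 (volume (C ∩ Metric.closedBall (0 : En n) 1))
      (ENNReal.ofReal (n * ‖x₀‖) * volume (C ∩ Metric.closedBall (0 : En n) 1)) hfin
      (ENNReal.mul_ne_top ENNReal.ofReal_ne_top hfin) ?_ ?_
    · intro r hr
      rw [← aux_measure_cone_ball C hcone (by omega) r hr.le]
      exact measure_mono (inter_subset_inter_left _ diff_subset)
    · intro r hr
      refine (aux_measure_diff C hcl hcone (by omega) x₀ hadd r hr).trans (le_of_eq ?_)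
      rw [← mul_assoc, ← ENNReal.ofReal_mul (by positivity), mul_comm (r ^ (n - 1))]
  unfold coneVol HTheta
  refine (measure_mono hsub).trans_lt ?_
  rw [withDensity_apply _ hEm]
  calc ∫⁻ y in E, ENNReal.ofReal (Θ y)
      ≤ ∫⁻ y in E, ENNReal.ofReal M * ENNReal.ofReal (‖y‖ ^ (-q)) := by
        refine lintegral_mono_ae ?_
        have h0 : ∀ᵐ y ∂(volume.restrict E), y ≠ (0 : En n) := Measure.ae_ne _ _
        filter_upwards [h0, ae_restrict_mem hEm] with y hy hyE
        rw [← ENNReal.ofReal_mul' (by positivity)]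
        exact ENNReal.ofReal_le_ofReal (hM y hyE.1 hy)
    _ < ⊤ := by
        rw [lintegral_const_mul' _ _ ENNReal.ofReal_ne_top]
        exact ENNReal.mul_lt_top ENNReal.ofReal_lt_top hlt
end
end
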